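/- arXiv:2208.13297 — 3 statements merged into one kernel-verified Lean document; each statement's English description precedes it below -/
import Mathlib

section
/- For every connected finite simple graph G with maximum degree at most 3 that is not isomorphic to the complete bipartite graph K_{3,3}, the semistrong chromatic index of G is at most 8. -/
open SimpleGraph

variable {V : Type*}

/-- The set of endvertices of the edges in `M`. -/
def edgeVerts (M : Set (Sym2 V)) : Set V := {v | ∃ e ∈ M, v ∈ e}

/-- `M` is a matching of the simple graph `G`: a set of edges of `G`
that are pairwise disjoint. -/
def IsMatchingSet (G : SimpleGraph V) (M : Set (Sym2 V)) : Prop :=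
  M ⊆ G.edgeSet ∧ ∀ e ∈ M, ∀ f ∈ M, e ≠ f → ∀ v : V, v ∈ e → v ∉ f

/-- `M` is a semistrong matching of `G`: a matching such that every edge of `M`
has an endvertex of degree one in the subgraph of `G` induced by the
endvertices of the edges of `M`. -/
def IsSemistrongMatching (G : SimpleGraph V) (M : Set (Sym2 V)) : Prop :=
  IsMatchingSet G M ∧
    ∀ e ∈ M, ∃ u v : V, e = s(u, v) ∧ ∀ w ∈ edgeVerts M, G.Adj u w → w = v

/-- `G` has a semistrong edge-coloring with (at most) `k` colors: a proper
edge-coloring in which every color class is a semistrong matching. -/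
def HasSemistrongEdgeColoring (G : SimpleGraph V) (k : ℕ) : Prop :=
  ∃ c : Sym2 V → ℕ, (∀ e ∈ G.edgeSet, c e < k) ∧
    ∀ i : ℕ, IsSemistrongMatching G {e | e ∈ G.edgeSet ∧ c e = i}

/-- The semistrong chromatic index of `G`. -/
noncomputable def ssChromIdx (G : SimpleGraph V) : ℕ :=
  sInf {k | HasSemistrongEdgeColoring G k}

/-!
Choose a small set `U` of vertices and colour the edges that do not lie inside `U` greedily,
vertices far from `U` first. Each edge is charged to its earlier end, which is asked to see the
colour once. Since a vertex outside `U` still has a neighbour to come when its own edges are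
coloured, every edge conflicts with at most seven earlier ones, and eight colours suffice. The few
edges inside `U` are then coloured by arguments of Hall type.

For `U` one takes a vertex of degree at most two, if there is one; otherwise a triangle, `4`-cycle
or `K_{2,3}` together with a neighbour, `K_{3,3}` being the exception, or, when the girth is at
least five, the closed neighbourhood of a vertex of a shortest cycle. In the last case the greedy
colouring has to leave two choices for the colour of one edge near `U`. If this fails for every
vertex of a `5`-cycle, the graph is the Petersen graph, which has a colouring with five colours.
-/

section

open scoped Finset

variable {α : Type*}

/-- The vertex `x` *sees* the colour of the edge `xy` *once*: no other edge meeting the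
neighbourhood of `x` has that colour. As this includes the edges at `y` (for `z = y`) and at `x`
(for `w = x`), it gives both properness at `xy` and the degree-one condition at `x`. -/
def SeesOnce (G : SimpleGraph V) (C : Sym2 V → α) (x y : V) : Prop :=
  ∀ z w, G.Adj x z → G.Adj z w → s(z, w) ≠ s(x, y) → C s(z, w) ≠ C s(x, y)

theorem SeesOnce.isMatchingSet {G : SimpleGraph V} {C : Sym2 V → α}
    (h : ∀ x y, G.Adj x y → SeesOnce G C x y ∨ SeesOnce G C y x) (a : α) :
    IsMatchingSet G {e | e ∈ G.edgeSet ∧ C e = a} := by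
  refine ⟨fun e he => he.1, ?_⟩
  rintro e he f hf hne v ⟨x, rfl⟩ ⟨y, rfl⟩
  have hvx : G.Adj v x := he.1
  have hvy : G.Adj v y := hf.1
  have hcol : C s(v, x) = C s(v, y) := he.2.trans hf.2.symm
  rcases h v x hvx with h | h
  · exact h y v hvy hvy.symm (by rwa [Sym2.eq_swap, ne_comm]) (by rw [Sym2.eq_swap, hcol])
  · exact h v y hvx.symm hvy (by rwa [ne_comm, Sym2.eq_swap]) (by rw [← hcol, Sym2.eq_swap])

theorem hasSemistrongEdgeColoring_of_seesOnce {G : SimpleGraph V} {k : ℕ} (C : Sym2 V → Fin k)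
    (h : ∀ x y, G.Adj x y → SeesOnce G C x y ∨ SeesOnce G C y x) :
    HasSemistrongEdgeColoring G k := by
  have h' : ∀ x y, G.Adj x y →
      SeesOnce G (fun e => (C e : ℕ)) x y ∨ SeesOnce G (fun e => (C e : ℕ)) y x := by
    simpa only [SeesOnce, ne_eq, Fin.val_inj] using h
  refine ⟨fun e => C e, fun e _ => (C e).2, fun i => ⟨SeesOnce.isMatchingSet h' i, ?_⟩⟩
  have eq_of_seesOnce : ∀ x y, C s(x, y) = i → SeesOnce G (fun e => (C e : ℕ)) x y →
      ∀ w ∈ edgeVerts {e | e ∈ G.edgeSet ∧ (C e : ℕ) = i}, G.Adj x w → w = y := by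
    rintro x y hxy hs w ⟨_, ⟨hwb, hcol⟩, b, rfl⟩ hxw
    by_contra hwy
    refine hs w b hxw hwb (fun hwb' => ?_) (hcol.trans hxy.symm)
    rcases Sym2.eq_iff.1 hwb' with ⟨rfl, -⟩ | ⟨rfl, -⟩
    · exact hxw.ne rfl
    · exact hwy rfl
  rintro ⟨x, y⟩ ⟨hxy, hcol⟩
  rcases h' x y hxy with hs | hs
  · exact ⟨x, y, rfl, eq_of_seesOnce x y hcol hs⟩
  · exact ⟨y, x, Sym2.eq_swap, eq_of_seesOnce y x (by rw [Sym2.eq_swap]; exact hcol) hs⟩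

/-- `C` is a partial semistrong edge-colouring, in which exactly the edges inside `U` count as
uncoloured. The relation `A` orients every coloured edge from an end which sees the colour of the
edge once among the coloured edges. -/
structure IsSemistrongOutside (G : SimpleGraph V) (U : Set V) (C : Sym2 V → α)
    (A : V → V → Prop) : Prop where
  adj : ∀ {v x}, A v x → G.Adj v x
  tail_notMem : ∀ {v x}, A v x → v ∉ U
  oriented : ∀ {v x}, v ∉ U → G.Adj v x → A v x ∨ A x v
  ne : ∀ {v x}, A v x → ∀ z w, G.Adj v z → G.Adj z w → z ∉ U ∨ w ∉ U → s(z, w) ≠ s(v, x) →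
    C s(z, w) ≠ C s(v, x)

/-- The edge `zw` inside `U`, oriented from `z`, has no conflict in the colouring `D` of the whole
graph with any other edge nor with the arcs of the orientation `A` outside `U`. -/
def IsCompatibleArc (G : SimpleGraph V) (A : V → V → Prop) (D : Sym2 V → α) (z w : V) : Prop :=
  SeesOnce G D z w ∧ ∀ g x, G.Adj w g → A g x → D s(z, w) ≠ D s(g, x)

namespace IsSemistrongOutside

variable {G : SimpleGraph V} {U : Set V} {C : Sym2 V → α} {A : V → V → Prop}

/-- A conflict of an outer arc `vx` with an inner edge `zw`, where `z` is a neighbour of `v`, is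
excluded from the side of `zw`: if `zw` is oriented from `z`, then `vx` meets the neighbourhood of
`z`; otherwise `v` is adjacent to the head of `zw`. -/
theorem seesOnce_of_arc (h : IsSemistrongOutside G U C A) {D : Sym2 V → α}
    (hD : ∀ x y, x ∉ U → D s(x, y) = C s(x, y))
    (hU : ∀ z w, z ∈ U → w ∈ U → G.Adj z w → IsCompatibleArc G A D z w ∨ IsCompatibleArc G A D w z)
    {v x : V} (hvx : A v x) : SeesOnce G D v x := by
  intro z w hvz hzw hne
  by_cases hout : z ∉ U ∨ w ∉ U
  · have hzwD : D s(z, w) = C s(z, w) := by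
      rcases hout with hz | hw
      · exact hD z w hz
      · rw [Sym2.eq_swap, hD w z hw]
    rw [hzwD, hD v x (h.tail_notMem hvx)]
    exact h.ne hvx z w hvz hzw hout hne
  · push Not at hout
    rcases hU z w hout.1 hout.2 hzw with hc | hc
    · exact (hc.1 v x hvz.symm (h.adj hvx) hne.symm).symm
    · rw [Sym2.eq_swap]
      exact hc.2 v x hvz.symm hvx

theorem extend {k : ℕ} {C : Sym2 V → Fin k} (h : IsSemistrongOutside G U C A) {D : Sym2 V → Fin k}
    (hD : ∀ x y, x ∉ U → D s(x, y) = C s(x, y))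
    (hU : ∀ z w, z ∈ U → w ∈ U → G.Adj z w →
      IsCompatibleArc G A D z w ∨ IsCompatibleArc G A D w z) :
    HasSemistrongEdgeColoring G k := by
  refine hasSemistrongEdgeColoring_of_seesOnce D fun x y hxy => ?_
  have seesOnce_of_notMem : ∀ {x y}, x ∉ U → G.Adj x y → SeesOnce G D x y ∨ SeesOnce G D y x :=
    fun hx hxy => (h.oriented hx hxy).imp (h.seesOnce_of_arc hD hU) (h.seesOnce_of_arc hD hU)
  by_cases hx : x ∈ U
  · by_cases hy : y ∈ U
    · exact (hU x y hx hy hxy).imp And.left And.left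
    · exact (seesOnce_of_notMem hy hxy.symm).symm
  · exact seesOnce_of_notMem hx hxy

end IsSemistrongOutside

section Greedy

variable {ι : Type*} [Fintype α]

theorem exists_notMem_of_card_lt (S : Finset α) (h : #S < Fintype.card α) : ∃ a, a ∉ S := by
  obtain ⟨a, -, ha⟩ := Finset.exists_mem_notMem_of_card_lt_card (Finset.card_univ (α := α) ▸ h)
  exact ⟨a, ha⟩

theorem exists_greedy_coloring {r : ι → ι → Prop} (hr : WellFounded r) (N : ι → Finset ι)
    (hN : ∀ i, ∀ j ∈ N i, r j i) (hcard : ∀ i, #(N i) < Fintype.card α) :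
    ∃ c : ι → α, ∀ i, ∀ j ∈ N i, c i ≠ c j := by
  classical
  have exists_color : ∀ i, ∀ c : ∀ j, r j i → α,
      ∃ a, ∀ j (hj : j ∈ N i), a ≠ c j (hN i j hj) := by
    intro i c
    have hlt : ((N i).attach.image fun j : N i => c j (hN i j j.2)).card < Fintype.card α :=
      (Finset.card_image_le.trans_eq (N i).card_attach).trans_lt (hcard i)
    obtain ⟨a, ha⟩ := exists_notMem_of_card_lt _ hlt
    exact ⟨a, fun j hj h => ha (Finset.mem_image.2 ⟨⟨j, hj⟩, Finset.mem_attach _ _, h.symm⟩)⟩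
  choose color hcolor using exists_color
  refine ⟨hr.fix color, fun i j hj => ?_⟩
  rw [hr.fix_eq]
  exact hcolor i _ j hj

/-- The item `i₀` gets a second colour by colouring a twin of it right after `i₀`. -/
theorem exists_greedy_coloring_update [DecidableEq ι] (key : ι → ℕ) (N : ι → Finset ι)
    (hN : ∀ i, ∀ j ∈ N i, key j < key i) (hcard : ∀ i, #(N i) < Fintype.card α) (i₀ : ι)
    (h₀ : #(N i₀) + 1 < Fintype.card α)
    (hcard' : ∀ i, i₀ ∈ N i → #(N i) + 1 < Fintype.card α) :
    ∃ (c : ι → α) (a : α), a ≠ c i₀ ∧ (∀ i, ∀ j ∈ N i, c i ≠ c j) ∧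
      ∀ i, ∀ j ∈ N i, Function.update c i₀ a i ≠ Function.update c i₀ a j := by
  let key' : Option ι → ℕ := fun o => o.elim (2 * key i₀ + 1) (2 * key ·)
  let N' : Option ι → Finset (Option ι) := fun o => o.elim (insert (some i₀) ((N i₀).map .some))
    fun i => if i₀ ∈ N i then (N i).insertNone else (N i).map .some
  have key'_lt : ∀ o, ∀ p ∈ N' o, key' p < key' o := by
    rintro (_ | i) (_ | j) hj <;> simp only [key', N', Option.elim] at hj ⊢
    · simp at hj
    · obtain rfl | hj : j = i₀ ∨ j ∈ N i₀ := by simpa using hj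
      · omega
      · have := hN i₀ j hj
        omega
    · split_ifs at hj with hi
      · have := hN i i₀ hi
        omega
      · simp at hj
    · have := hN i j (by split_ifs at hj <;> simpa using hj)
      omega
  have card_N' : ∀ o, (N' o).card < Fintype.card α := by
    rintro (_ | i) <;> simp only [N', Option.elim]
    · exact (Finset.card_insert_le _ _).trans_lt (by rwa [Finset.card_map])
    · split_ifs with hi
      · rw [Finset.card_insertNone]
        exact hcard' i hi
      · rw [Finset.card_map]
        exact hcard i
  obtain ⟨c, hc⟩ := exists_greedy_coloring (InvImage.wf key' wellFounded_lt) N' key'_lt card_N'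
  have hsome : ∀ i, ∀ j ∈ N i, c (some i) ≠ c (some j) := fun i j hj => hc (some i) (some j) (by
    simp only [N', Option.elim]
    split_ifs <;> simpa using hj)
  have hnone : ∀ i, i₀ ∈ N i → c (some i) ≠ c none :=
    fun i hi => hc (some i) none (by simp [N', hi])
  refine ⟨fun i => c (some i), c none, hc none (some i₀) (by simp [N']), hsome, fun i j hj => ?_⟩
  simp only [Function.update_apply]
  split_ifs with hi hj' hj'
  · subst hi hj'
    exact absurd (hN _ _ hj) (lt_irrefl _)
  · subst hi
    exact hc none (some j) (by simp [N', hj])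
  · subst hj'
    exact hnone i hj
  · exact hsome i j hj

end Greedy

theorem exists_injective_rank {I K : Type*} [Finite I] [LinearOrder K] (k : I → K) :
    ∃ τ : I → ℕ, Function.Injective τ ∧ ∀ i j, k i < k j → τ i < τ j := by
  have := Fintype.ofFinite I
  let k' : I → K ×ₗ Fin (Fintype.card I) := fun i => toLex (k i, Fintype.equivFin I i)
  have hk' : Function.Injective k' := fun i j h =>
    (Fintype.equivFin I).injective (Prod.ext_iff.1 (toLex.injective h)).2
  let : LinearOrder I := LinearOrder.lift' k' hk'
  let e := (Fintype.orderIsoFinOfCardEq I rfl).symm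
  refine ⟨fun i => e i, fun i j h => e.injective (Fin.ext h), fun i j h => e.strictMono ?_⟩
  exact Prod.Lex.toLex_lt_toLex.2 (Or.inl h)

section Arcs

/-- The pair `p` is an edge not inside `U`, directed from its earlier end to its later end; in the
orders considered the vertices outside `U` come first. -/
def IsArc (G : SimpleGraph V) (U : Set V) (τ : V → ℕ) (p : V × V) : Prop :=
  p.1 ∉ U ∧ G.Adj p.1 p.2 ∧ τ p.1 < τ p.2

/-- The arcs `p` and `q` must receive different colours if each is to be seen once by its tail.
Two arcs with a common end are covered by the adjacencies listed. -/
def ArcConflict (G : SimpleGraph V) (U : Set V) (τ : V → ℕ) (p q : V × V) : Prop :=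
  IsArc G U τ p ∧ IsArc G U τ q ∧ p ≠ q ∧ (G.Adj p.1 q.1 ∨ G.Adj p.1 q.2 ∨ G.Adj q.1 p.2)

theorem ArcConflict.symm {G : SimpleGraph V} {U : Set V} {τ : V → ℕ} {p q : V × V}
    (h : ArcConflict G U τ p q) : ArcConflict G U τ q p :=
  ⟨h.2.1, h.1, h.2.2.1.symm, h.2.2.2.imp Adj.symm Or.symm⟩

variable [Fintype V]

/-- The neighbours of `v` which come after `v` with respect to `τ`. -/
def laterNeighbors (G : SimpleGraph V) [DecidableRel G.Adj] (τ : V → ℕ) (v : V) : Finset V :=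
  {x ∈ G.neighborFinset v | τ v < τ x}

/-- The neighbours of `v` which come before time `n` with respect to `τ`. -/
def neighborsBefore (G : SimpleGraph V) [DecidableRel G.Adj] (τ : V → ℕ) (n : ℕ) (v : V) :
    Finset V :=
  {x ∈ G.neighborFinset v | τ x < n}

variable {G : SimpleGraph V} [DecidableRel G.Adj] {U : Set V} {τ : V → ℕ}

theorem mem_laterNeighbors {v x : V} : x ∈ laterNeighbors G τ v ↔ G.Adj v x ∧ τ v < τ x := by
  simp [laterNeighbors]

theorem mem_neighborsBefore {n : ℕ} {v x : V} :
    x ∈ neighborsBefore G τ n v ↔ G.Adj v x ∧ τ x < n := by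
  simp [neighborsBefore]

theorem card_laterNeighbors_le {d : ℕ} (hdeg : ∀ v, G.degree v ≤ d) (v : V) :
    #(laterNeighbors G τ v) ≤ d :=
  (Finset.card_filter_le _ _).trans (hdeg v)

theorem card_neighborsBefore_add_card_le {n : ℕ} {x : V} {s : Finset V}
    (hs : ∀ y ∈ s, G.Adj x y ∧ n ≤ τ y) : #(neighborsBefore G τ n x) + #s ≤ G.degree x := by
  classical
  rw [← Finset.card_union_of_disjoint]
  · exact Finset.card_le_card (Finset.union_subset (Finset.filter_subset _ _)
      fun y hy => (mem_neighborFinset G x y).2 (hs y hy).1)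
  · exact Finset.disjoint_left.2 fun y hy hys =>
      ((mem_neighborsBefore.1 hy).2.trans_le (hs y hys).2).false

open scoped Classical in
theorem card_arcs_meeting_le {d : ℕ} (hdeg : ∀ v, G.degree v ≤ d) (E : Finset V) :
    #{q : V × V | IsArc G U τ q ∧ (q.1 ∈ E ∨ q.2 ∈ E)} ≤ #E * d := by
  refine (Finset.card_le_card (t := E.biUnion fun n => (G.neighborFinset n).image
    fun y => if τ n < τ y then (n, y) else (y, n)) ?_).trans
    (Finset.card_biUnion_le_card_mul _ _ _ fun n _ => Finset.card_image_le.trans (hdeg n))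
  rintro ⟨g, h⟩ hq
  obtain ⟨⟨-, hgh : G.Adj g h, hlt : τ g < τ h⟩, hE⟩ := (Finset.mem_filter.1 hq).2
  simp only [Finset.mem_biUnion, Finset.mem_image, mem_neighborFinset]
  rcases hE with hg | hh
  · exact ⟨g, hg, h, hgh, if_pos hlt⟩
  · exact ⟨h, hh, g, hgh.symm, if_neg hlt.not_gt⟩

theorem ArcConflict.cases_of_lt (hτ : Function.Injective τ) {v x g h : V}
    (hc : ArcConflict G U τ (v, x) (g, h)) (hgv : τ g < τ v) :
    (g ∈ neighborsBefore G τ (τ v) v ∨ h ∈ neighborsBefore G τ (τ v) v) ∨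
      (h ∈ laterNeighbors G τ v ∧ h ≠ x ∧ g ∈ neighborsBefore G τ (τ v) h) ∨
      (g ∈ neighborsBefore G τ (τ v) x ∧ ¬ G.Adj v g ∧ h ∈ laterNeighbors G τ g) := by
  obtain ⟨-, ⟨-, hgh : G.Adj g h, hlt : τ g < τ h⟩, -, hadj⟩ := hc
  simp only [mem_neighborsBefore, mem_laterNeighbors] at hadj ⊢
  by_cases hvg : G.Adj v g
  · exact Or.inl (Or.inl ⟨hvg, hgv⟩)
  by_cases hgx : G.Adj g x
  · exact Or.inr (Or.inr ⟨⟨hgx.symm, hgv⟩, hvg, hgh, hlt⟩)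
  have hvh : G.Adj v h := by tauto
  rcases lt_or_gt_of_ne (hτ.ne hvh.ne) with hvh' | hvh'
  · exact Or.inr (Or.inl ⟨⟨hvh, hvh'⟩, fun hhx => hgx (hhx ▸ hgh), hgh.symm, hgv⟩)
  · exact Or.inl (Or.inr ⟨hvh, hvh'⟩)

end Arcs

theorem exists_min_neighbor {G : SimpleGraph V} (ρ : V → ℕ) {v : V} (hv : ∃ y, G.Adj v y) :
    ∃ y, G.Adj v y ∧ ∀ w, G.Adj v w → ρ y ≤ ρ w := by
  obtain ⟨y, hy, hmin⟩ := (InvImage.wf ρ wellFounded_lt).has_min {y | G.Adj v y} hv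
  exact ⟨y, hy, fun w hw => not_lt.1 (hmin w hw)⟩

section GreedyOrder

variable [Fintype V] {G : SimpleGraph V} [DecidableRel G.Adj] {κ : V → ℕ} {U P : Set V}

/-- The number of neighbours of `v` whose level is at most that of `v`. -/
def levelDegree (G : SimpleGraph V) [DecidableRel G.Adj] (level : V → ℕ) (v : V) : ℕ :=
  #{z ∈ G.neighborFinset v | level z ≤ level v}

/-- The order of the greedy colouring of the edges which are not inside `U`. The vertices are
ranked by `κ`, ties being broken arbitrarily, and the *parent* of a vertex outside `U` is its
neighbour of least rank. The *level* of a vertex is the rank of its parent, shifted by one so that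
level `0` is left for `U`. Vertices are treated by decreasing level, within a level by increasing
`levelDegree`, and then with preference for the vertices of `P`. Each edge is coloured from its
earlier end, the edge to the parent coming last. -/
structure GreedyOrder (G : SimpleGraph V) [DecidableRel G.Adj] (κ : V → ℕ) (U P : Set V) where
  rank : V → ℕ
  parent : V → V
  level : V → ℕ
  time : V → ℕ
  arcRank : V × V → ℕ
  rank_injective : Function.Injective rank
  rank_lt : ∀ {a b}, κ a < κ b → rank a < rank b
  adj_parent : ∀ {v}, v ∉ U → G.Adj v (parent v)
  level_of_mem : ∀ {v}, v ∈ U → level v = 0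
  level_of_notMem : ∀ {v}, v ∉ U → level v = rank (parent v) + 1
  level_le : ∀ {v y}, G.Adj v y → level v ≤ rank y + 1
  level_le_rank : ∀ v, level v ≤ rank v
  time_injective : Function.Injective time
  time_lt_of_level_lt : ∀ {a b}, level b < level a → time a < time b
  time_lt_of_levelDegree_lt : ∀ {a b}, level a = level b →
    levelDegree G level a < levelDegree G level b → time a < time b
  time_lt_of_mem : ∀ {a b}, level a = level b → levelDegree G level a = levelDegree G level b →
    a ∈ P → b ∉ P → time a < time b
  arcRank_injective : Function.Injective arcRank
  arcRank_lt_of_time_lt : ∀ {v x g h}, time g < time v → arcRank (g, h) < arcRank (v, x)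
  arcRank_lt_parent : ∀ {v h}, h ≠ parent v → arcRank (v, h) < arcRank (v, parent v)

theorem exists_greedyOrder (hκ : ∀ v, v ∉ U → ∃ y, G.Adj v y ∧ κ y < κ v) (P : Set V) :
    Nonempty (GreedyOrder G κ U P) := by
  classical
  obtain ⟨rank, rank_inj, hrank⟩ := exists_injective_rank κ
  have exists_parent : ∀ v, ∃ y, v ∉ U → G.Adj v y ∧ ∀ w, G.Adj v w → rank y ≤ rank w := by
    intro v
    by_cases hv : v ∈ U
    · exact ⟨v, fun h => absurd hv h⟩
    · obtain ⟨y, hy⟩ := exists_min_neighbor rank ((hκ v hv).imp fun _ => And.left)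
      exact ⟨y, fun _ => hy⟩
  choose parent hparent using exists_parent
  let level : V → ℕ := fun v => if v ∈ U then 0 else rank (parent v) + 1
  obtain ⟨time, time_inj, htime⟩ := exists_injective_rank fun v =>
    toLex (OrderDual.toDual (level v), toLex (levelDegree G level v, if v ∈ P then 0 else 1))
  obtain ⟨arcRank, arcRank_inj, harcRank⟩ := exists_injective_rank fun p : V × V =>
    toLex (time p.1, if p.2 = parent p.1 then 1 else 0)
  have level_le : ∀ {v y}, G.Adj v y → level v ≤ rank y + 1 := fun {v y} hvy => by
    by_cases hv : v ∈ U
    · simp [level, hv]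
    · simpa [level, hv] using (hparent v hv).2 y hvy
  refine ⟨{
    rank, parent, level, time, arcRank, level_le
    rank_injective := rank_inj
    rank_lt := hrank _ _
    adj_parent := fun hv => (hparent _ hv).1
    level_of_mem := fun hv => if_pos hv
    level_of_notMem := fun hv => if_neg hv
    level_le_rank := fun v => ?_
    time_injective := time_inj
    time_lt_of_level_lt := fun h => htime _ _ ?_
    time_lt_of_levelDegree_lt := fun h h' => htime _ _ ?_
    time_lt_of_mem := fun h h' ha hb => htime _ _ ?_
    arcRank_injective := arcRank_inj
    arcRank_lt_of_time_lt := fun h => harcRank _ _ ?_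
    arcRank_lt_parent := fun h => harcRank _ _ ?_ }⟩
  · by_cases hv : v ∈ U
    · simp [level, hv]
    · obtain ⟨y, hvy, hy⟩ := hκ v hv
      exact (level_le hvy).trans (hrank _ _ hy)
  · simp [Prod.Lex.toLex_lt_toLex, h]
  · simp [Prod.Lex.toLex_lt_toLex, h, h']
  · simp [Prod.Lex.toLex_lt_toLex, h, h', ha, hb]
  · simp [Prod.Lex.toLex_lt_toLex, h]
  · simp [Prod.Lex.toLex_lt_toLex, h]

end GreedyOrder

namespace GreedyOrder

variable [Fintype V] {G : SimpleGraph V} [DecidableRel G.Adj] {κ : V → ℕ} {U P : Set V}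
  (O : GreedyOrder G κ U P) {v x g : V}

theorem level_pos (hv : v ∉ U) : 0 < O.level v := by
  rw [O.level_of_notMem hv]
  exact Nat.succ_pos _

theorem notMem_of_level_pos (hv : 0 < O.level v) : v ∉ U :=
  fun h => hv.ne' (O.level_of_mem h)

theorem level_le_of_time_lt (h : O.time v < O.time x) : O.level x ≤ O.level v :=
  not_lt.1 fun hl => (O.time_lt_of_level_lt hl).asymm h

theorem time_lt_of_mem_of_notMem (hv : v ∉ U) (hx : x ∈ U) : O.time v < O.time x :=
  O.time_lt_of_level_lt ((O.level_of_mem hx).trans_lt (O.level_pos hv))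

theorem parent_eq_of_level_eq (hv : v ∉ U) (hx : x ∉ U) (h : O.level v = O.level x) :
    O.parent v = O.parent x := by
  rw [O.level_of_notMem hv, O.level_of_notMem hx] at h
  exact O.rank_injective (Nat.succ_injective h)

theorem level_parent_lt (hv : v ∉ U) : O.level (O.parent v) < O.level v := by
  rw [O.level_of_notMem hv]
  exact Nat.lt_succ_of_le (O.level_le_rank _)

theorem parent_mem_laterNeighbors (hv : v ∉ U) : O.parent v ∈ laterNeighbors G O.time v :=
  mem_laterNeighbors.2 ⟨O.adj_parent hv, O.time_lt_of_level_lt (O.level_parent_lt hv)⟩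

theorem card_laterNeighbors_pos (hv : v ∉ U) : 0 < #(laterNeighbors G O.time v) :=
  Finset.card_pos.2 ⟨_, O.parent_mem_laterNeighbors hv⟩

theorem two_le_card_laterNeighbors (hv : v ∉ U) (hx : x ∈ laterNeighbors G O.time v)
    (hne : x ≠ O.parent v) : 2 ≤ #(laterNeighbors G O.time v) :=
  Finset.one_lt_card.2 ⟨x, hx, _, O.parent_mem_laterNeighbors hv, hne⟩

theorem card_neighborsBefore_le_one (hdeg : ∀ v, G.degree v ≤ 3)
    (hU : ∀ x ∈ U, G.degree x ≤ 2 ∨ ∃ y ∈ U, G.Adj x y) (hv : v ∉ U)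
    (hx : x ∈ laterNeighbors G O.time v) :
    #(neighborsBefore G O.time (O.time v) x) ≤ 1 := by
  classical
  obtain ⟨hvx, hlt⟩ := mem_laterNeighbors.1 hx
  have le_one_of_later : ∀ y, G.Adj x y → O.time v < O.time y →
      #(neighborsBefore G O.time (O.time v) x) ≤ 1 := by
    intro y hxy hvy
    have hne : v ≠ y := by rintro rfl; exact hvy.false
    have hcard := card_neighborsBefore_add_card_le (G := G) (τ := O.time) (n := O.time v)
      (x := x) (s := {v, y}) (by simp [hvx.symm, hxy, hvy.le])
    rw [Finset.card_pair hne] at hcard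
    have := hdeg x
    omega
  by_cases hxU : x ∈ U
  · rcases hU x hxU with hdegx | ⟨y, hyU, hxy⟩
    · have hcard := card_neighborsBefore_add_card_le (G := G) (τ := O.time) (n := O.time v)
        (x := x) (s := {v}) (by simp [hvx.symm])
      rw [Finset.card_singleton] at hcard
      omega
    · exact le_one_of_later y hxy (O.time_lt_of_mem_of_notMem hv hyU)
  · exact le_one_of_later _ (O.adj_parent hxU) (O.time_lt_of_level_lt
      ((O.level_parent_lt hxU).trans_le (O.level_le_of_time_lt hlt)))

theorem card_laterNeighbors_le_levelDegree (v : V) :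
    #(laterNeighbors G O.time v) ≤ levelDegree G O.level v :=
  Finset.card_le_card <| Finset.monotone_filter_right _ fun _ _ h => O.level_le_of_time_lt h

theorem level_eq_of_adj_parent (hv : v ∉ U) (hg : G.Adj (O.parent v) g)
    (hlt : O.time g < O.time v) : O.level g = O.level v :=
  le_antisymm (by rw [O.level_of_notMem hv]; exact O.level_le hg.symm) (O.level_le_of_time_lt hlt)

theorem notMem_of_adj_parent (hv : v ∉ U) (hg : G.Adj (O.parent v) g)
    (hlt : O.time g < O.time v) : g ∉ U :=
  O.notMem_of_level_pos (O.level_eq_of_adj_parent hv hg hlt ▸ O.level_pos hv)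

theorem levelDegree_le_of_adj_parent (hv : v ∉ U) (hg : G.Adj (O.parent v) g)
    (hlt : O.time g < O.time v) : levelDegree G O.level g ≤ levelDegree G O.level v :=
  not_lt.1 fun h =>
    (O.time_lt_of_levelDegree_lt (O.level_eq_of_adj_parent hv hg hlt).symm h).asymm hlt

theorem mem_or_levelDegree_lt_of_adj_parent (hv : v ∉ U) (hg : G.Adj (O.parent v) g)
    (hlt : O.time g < O.time v) (hvP : v ∈ P) :
    g ∈ P ∨ levelDegree G O.level g < levelDegree G O.level v := by
  by_contra! h
  exact (O.time_lt_of_mem (O.level_eq_of_adj_parent hv hg hlt).symm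
    (h.2.antisymm (O.levelDegree_le_of_adj_parent hv hg hlt)) hvP h.1).asymm hlt

/-- An earlier neighbour of `v` in its level would be a second earlier neighbour of the parent. -/
theorem levelDegree_le_card_laterNeighbors (hdeg : ∀ v, G.degree v ≤ 3)
    (hU : ∀ x ∈ U, G.degree x ≤ 2 ∨ ∃ y ∈ U, G.Adj x y) (hv : v ∉ U) (hg : G.Adj (O.parent v) g)
    (hlt : O.time g < O.time v) (hvg : ¬ G.Adj v g) :
    levelDegree G O.level v ≤ #(laterNeighbors G O.time v) := by
  refine Finset.card_le_card fun z hz => ?_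
  obtain ⟨hvz, hlevel⟩ : G.Adj v z ∧ O.level z ≤ O.level v := by simpa using hz
  refine mem_laterNeighbors.2 ⟨hvz, ((O.time_injective.ne hvz.ne).lt_or_gt).resolve_right ?_⟩
  intro hzv
  have hle := O.level_le_of_time_lt hzv
  have hzU : z ∉ U := O.notMem_of_level_pos ((O.level_pos hv).trans_le hle)
  have hpz : G.Adj (O.parent v) z := by
    rw [O.parent_eq_of_level_eq hv hzU (hle.antisymm hlevel)]
    exact (O.adj_parent hzU).symm
  have hzg : z = g := Finset.card_le_one.1
    (O.card_neighborsBefore_le_one hdeg hU hv (O.parent_mem_laterNeighbors hv))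
    z (mem_neighborsBefore.2 ⟨hpz, hzv⟩) g (mem_neighborsBefore.2 ⟨hg, hlt⟩)
  exact hvg (hzg ▸ hvz)

theorem eq_or_time_lt_of_arcRank_lt {h : V} (hlt : O.arcRank (g, h) < O.arcRank (v, x)) :
    O.time g < O.time v ∨ g = v ∧ h ≠ x ∧ h ≠ O.parent v := by
  rcases lt_trichotomy (O.time g) (O.time v) with hgv | hgv | hgv
  · exact Or.inl hgv
  · obtain rfl := O.time_injective hgv
    refine Or.inr ⟨rfl, fun hhx => (hhx ▸ hlt).false, ?_⟩
    rintro rfl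
    by_cases hx : x = O.parent g
    · exact (hx ▸ hlt).false
    · exact (O.arcRank_lt_parent hx).asymm hlt
  · exact absurd hlt (O.arcRank_lt_of_time_lt hgv).asymm

open scoped Classical in
/-- The arcs in conflict with `p` which are coloured before `p`. -/
noncomputable def earlierConflicts (p : V × V) : Finset (V × V) :=
  {q | O.arcRank q < O.arcRank p ∧ ArcConflict G U O.time p q}

theorem mem_earlierConflicts {p q : V × V} :
    q ∈ O.earlierConflicts p ↔ O.arcRank q < O.arcRank p ∧ ArcConflict G U O.time p q := by
  simp [earlierConflicts]

open scoped Classical in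
/-- The four summands count the arcs meeting an earlier neighbour of `v`, the arcs leaving `v`, the
arcs entering another later neighbour of `v`, and the other arcs leaving an earlier neighbour
of `x`. -/
theorem card_earlierConflicts_le_sum (hdeg : ∀ v, G.degree v ≤ 3)
    (hU : ∀ x ∈ U, G.degree x ≤ 2 ∨ ∃ y ∈ U, G.Adj x y) (hv : v ∉ U)
    (hx : x ∈ laterNeighbors G O.time v) {R : ℕ}
    (hR : ∀ g, G.Adj x g → O.time g < O.time v → ¬ G.Adj v g → #(laterNeighbors G O.time g) ≤ R) :
    #(O.earlierConflicts (v, x)) ≤ #(neighborsBefore G O.time (O.time v) v) * 3 +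
      #(laterNeighbors G O.time v \ {x, O.parent v}) +
      #((laterNeighbors G O.time v).erase x) + R := by
  let E := neighborsBefore G O.time (O.time v) v
  let L := laterNeighbors G O.time v
  let meeting : Finset (V × V) := {q | IsArc G U O.time q ∧ (q.1 ∈ E ∨ q.2 ∈ E)}
  let leaving := (L \ {x, O.parent v}).image fun h => (v, h)
  let entering := (L.erase x).biUnion fun h =>
    (neighborsBefore G O.time (O.time v) h).image fun g => (g, h)
  let distant := {g ∈ neighborsBefore G O.time (O.time v) x | ¬ G.Adj v g}.biUnion fun g =>
    (laterNeighbors G O.time g).image fun h => (g, h)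
  have hsub : O.earlierConflicts (v, x) ⊆ meeting ∪ leaving ∪ entering ∪ distant := by
    rintro ⟨g, h⟩ hq
    obtain ⟨hlt, hc⟩ := O.mem_earlierConflicts.1 hq
    obtain ⟨-, hgh⟩ : IsArc G U O.time (g, h) := hc.2.1
    rcases O.eq_or_time_lt_of_arcRank_lt hlt with hgv | ⟨rfl, hhx, hhp⟩
    · rcases hc.cases_of_lt O.time_injective hgv with hE | ⟨hh, hhx, hg⟩ | ⟨hg, hvg, hh⟩
      · simp [meeting, E, hE, hc.2.1]
      · have : (g, h) ∈ entering := by simp [entering, L, hh, hhx, hg]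
        simp [this]
      · have : (g, h) ∈ distant := by simp [distant, hg, hvg, hh]
        simp [this]
    · have : (g, h) ∈ leaving := by simp [leaving, L, mem_laterNeighbors, hgh.1, hgh.2, hhx, hhp]
      simp [this]
  have card_before : ∀ y ∈ L, #(neighborsBefore G O.time (O.time v) y) ≤ 1 :=
    fun y hy => O.card_neighborsBefore_le_one hdeg hU hv hy
  have card_entering : #entering ≤ #(L.erase x) * 1 := Finset.card_biUnion_le_card_mul _ _ _
    fun y hy => Finset.card_image_le.trans (card_before y (Finset.mem_of_mem_erase hy))
  have card_distant : #distant ≤ 1 * R :=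
    (Finset.card_biUnion_le_card_mul _ _ _ fun g hg => Finset.card_image_le.trans (by
      simp only [Finset.mem_filter, mem_neighborsBefore] at hg
      exact hR g hg.1.1 hg.1.2 hg.2)).trans (Nat.mul_le_mul_right R
        ((Finset.card_filter_le _ _).trans (card_before x hx)))
  calc #(O.earlierConflicts (v, x))
      ≤ #(meeting ∪ leaving ∪ entering ∪ distant) := Finset.card_le_card hsub
    _ ≤ #meeting + #leaving + #entering + #distant :=
        (Finset.card_union_le _ _).trans (Nat.add_le_add_right ((Finset.card_union_le _ _).trans
          (Nat.add_le_add_right (Finset.card_union_le _ _) _)) _)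
    _ ≤ #E * 3 + #(L \ {x, O.parent v}) + #(L.erase x) + R :=
        add_le_add (add_le_add (add_le_add (card_arcs_meeting_le hdeg E) Finset.card_image_le)
          (by rwa [mul_one] at card_entering)) (by rwa [one_mul] at card_distant)

open scoped Classical in
theorem card_earlierConflicts_le (hdeg : ∀ v, G.degree v ≤ 3)
    (hU : ∀ x ∈ U, G.degree x ≤ 2 ∨ ∃ y ∈ U, G.Adj x y) (hv : v ∉ U)
    (hx : x ∈ laterNeighbors G O.time v) {R : ℕ}
    (hR : ∀ g, G.Adj x g → O.time g < O.time v → ¬ G.Adj v g → #(laterNeighbors G O.time g) ≤ R) :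
    #(O.earlierConflicts (v, x)) + #{x, O.parent v} + #(laterNeighbors G O.time v) ≤ 8 + R := by
  have hsum := O.card_earlierConflicts_le_sum hdeg hU hv hx hR
  have hE : #(neighborsBefore G O.time (O.time v) v) + #(laterNeighbors G O.time v) ≤ 3 :=
    (card_neighborsBefore_add_card_le fun y hy =>
      (mem_laterNeighbors.1 hy).imp_right le_of_lt).trans (hdeg v)
  have hpair : ({x, O.parent v} : Finset V) ⊆ laterNeighbors G O.time v := by
    simp [Finset.insert_subset_iff, hx, O.parent_mem_laterNeighbors hv]
  have hleaving := Finset.card_sdiff_add_card_eq_card hpair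
  have hentering := Finset.card_erase_add_one hx
  omega

theorem card_earlierConflicts_parent_le (hdeg : ∀ v, G.degree v ≤ 3)
    (hU : ∀ x ∈ U, G.degree x ≤ 2 ∨ ∃ y ∈ U, G.Adj x y) (hv : v ∉ U) {R : ℕ}
    (hR : ∀ g, G.Adj (O.parent v) g → O.time g < O.time v → ¬ G.Adj v g →
      #(laterNeighbors G O.time g) ≤ R) :
    #(O.earlierConflicts (v, O.parent v)) + #(laterNeighbors G O.time v) ≤ 7 + R := by
  classical
  have hcard := O.card_earlierConflicts_le hdeg hU hv (O.parent_mem_laterNeighbors hv) hR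
  rw [Finset.pair_eq_singleton, Finset.card_singleton] at hcard
  omega

theorem card_earlierConflicts_le_of_ne_parent (hdeg : ∀ v, G.degree v ≤ 3)
    (hU : ∀ x ∈ U, G.degree x ≤ 2 ∨ ∃ y ∈ U, G.Adj x y) (hv : v ∉ U)
    (hx : x ∈ laterNeighbors G O.time v) (hne : x ≠ O.parent v) {R : ℕ}
    (hR : ∀ g, G.Adj x g → O.time g < O.time v → ¬ G.Adj v g → #(laterNeighbors G O.time g) ≤ R) :
    #(O.earlierConflicts (v, x)) + #(laterNeighbors G O.time v) ≤ 6 + R := by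
  classical
  have hcard := O.card_earlierConflicts_le hdeg hU hv hx hR
  rw [Finset.card_pair hne] at hcard
  omega

theorem card_earlierConflicts_lt_eight (hdeg : ∀ v, G.degree v ≤ 3)
    (hU : ∀ x ∈ U, G.degree x ≤ 2 ∨ ∃ y ∈ U, G.Adj x y) (p : V × V) :
    #(O.earlierConflicts p) < 8 := by
  by_cases hp : IsArc G U O.time p
  swap
  · rw [Finset.card_eq_zero.2 (Finset.eq_empty_of_forall_notMem fun q hq =>
      hp (O.mem_earlierConflicts.1 hq).2.1)]
    exact Nat.succ_pos 7
  obtain ⟨v, x⟩ := p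
  obtain ⟨hv, hx⟩ : v ∉ U ∧ x ∈ laterNeighbors G O.time v := ⟨hp.1, mem_laterNeighbors.2 hp.2⟩
  by_cases hne : x = O.parent v
  · subst hne
    have := O.card_earlierConflicts_parent_le hdeg hU hv (R := #(laterNeighbors G O.time v))
      fun g hg hlt hvg => (O.card_laterNeighbors_le_levelDegree g).trans
        ((O.levelDegree_le_of_adj_parent hv hg hlt).trans
          (O.levelDegree_le_card_laterNeighbors hdeg hU hv hg hlt hvg))
    omega
  · have := O.card_earlierConflicts_le_of_ne_parent hdeg hU hv hx hne (R := 3)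
      fun g _ _ _ => card_laterNeighbors_le hdeg g
    have := O.two_le_card_laterNeighbors hv hx hne
    omega

end GreedyOrder

theorem exists_sym2_coloring {τ : V → ℕ} (hτ : Function.Injective τ) (c : V × V → α) :
    ∃ C : Sym2 V → α, ∀ v x, τ v < τ x → C s(v, x) = c (v, x) := by
  refine ⟨Sym2.lift ⟨fun a b => if τ a < τ b then c (a, b) else c (b, a), fun a b => ?_⟩,
    fun v x h => if_pos h⟩
  rcases lt_trichotomy (τ a) (τ b) with h | h | h
  · simp only [h, h.not_gt, if_true, if_false]
  · rw [hτ h]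
  · simp only [h, h.not_gt, if_true, if_false]

theorem isSemistrongOutside_of_arcConflict {G : SimpleGraph V} {U : Set V} {τ : V → ℕ}
    (hτ : Function.Injective τ) (hU : ∀ v x, v ∉ U → x ∈ U → τ v < τ x) {c : V × V → α}
    (hc : ∀ p q, ArcConflict G U τ p q → c p ≠ c q) {C : Sym2 V → α}
    (hC : ∀ v x, τ v < τ x → C s(v, x) = c (v, x)) :
    IsSemistrongOutside G U C fun v x => IsArc G U τ (v, x) where
  adj h := h.2.1
  tail_notMem h := h.1
  oriented {v x} hv hvx := by
    rcases lt_or_gt_of_ne (hτ.ne hvx.ne) with h | h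
    · exact Or.inl ⟨hv, hvx, h⟩
    · exact Or.inr ⟨fun hx => h.not_gt (hU v x hv hx), hvx.symm, h⟩
  ne {v x} hvx z w hvz hzw hout hne := by
    rw [hC v x hvx.2.2]
    rcases lt_or_gt_of_ne (hτ.ne hzw.ne) with h | h
    · have hz : z ∉ U := fun hz => hout.elim (· hz) fun hw => h.not_gt (hU w z hw hz)
      rw [hC z w h]
      refine (hc (v, x) (z, w) ⟨hvx, ⟨hz, hzw, h⟩, fun heq => hne ?_, Or.inl hvz⟩).symm
      cases heq
      rfl
    · have hw : w ∉ U := fun hw => hout.elim (fun hz => h.not_gt (hU z w hz hw)) (· hw)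
      rw [Sym2.eq_swap, hC w z h]
      refine (hc (v, x) (w, z)
        ⟨hvx, ⟨hw, hzw.symm, h⟩, fun heq => hne ?_, Or.inr (Or.inl hvz)⟩).symm
      cases heq
      exact Sym2.eq_swap

namespace GreedyOrder

variable [Fintype V] {G : SimpleGraph V} [DecidableRel G.Adj] {κ : V → ℕ} {U P : Set V}
  (O : GreedyOrder G κ U P)

theorem isSemistrongOutside {c : V × V → α} (hc : ∀ p, ∀ q ∈ O.earlierConflicts p, c p ≠ c q)
    {C : Sym2 V → α} (hC : ∀ v x, O.time v < O.time x → C s(v, x) = c (v, x)) :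
    IsSemistrongOutside G U C fun v x => IsArc G U O.time (v, x) := by
  refine isSemistrongOutside_of_arcConflict O.time_injective
    (fun v x => O.time_lt_of_mem_of_notMem) (fun p q hpq => ?_) hC
  rcases lt_or_gt_of_ne (O.arcRank_injective.ne hpq.2.2.1) with h | h
  · exact (hc q p (O.mem_earlierConflicts.2 ⟨h, hpq.symm⟩)).symm
  · exact hc p q (O.mem_earlierConflicts.2 ⟨h, hpq⟩)

theorem exists_adj_forall_le {v x : V} (hvx : IsArc G U O.time (v, x)) (hx : x ∉ U) :
    ∃ y, G.Adj x y ∧ ∀ n, G.Adj v n → κ y ≤ κ n := by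
  refine ⟨O.parent x, O.adj_parent hx, fun n hvn => not_lt.1 fun hlt => ?_⟩
  have hlevel := O.level_le_of_time_lt hvx.2.2
  rw [O.level_of_notMem hx] at hlevel
  exact (O.rank_lt hlt).not_ge (Nat.succ_le_succ_iff.1 (hlevel.trans (O.level_le hvn)))

end GreedyOrder

section PartialColoring

variable [Fintype V] {G : SimpleGraph V} [DecidableRel G.Adj] {κ : V → ℕ} {U : Set V}

theorem exists_isSemistrongOutside (hdeg : ∀ v, G.degree v ≤ 3)
    (hκ : ∀ v, v ∉ U → ∃ y, G.Adj v y ∧ κ y < κ v)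
    (hU : ∀ x ∈ U, G.degree x ≤ 2 ∨ ∃ y ∈ U, G.Adj x y) :
    ∃ (C : Sym2 V → Fin 8) (A : V → V → Prop), IsSemistrongOutside G U C A ∧
      ∀ v x, A v x → x ∉ U → ∃ y, G.Adj x y ∧ ∀ n, G.Adj v n → κ y ≤ κ n := by
  obtain ⟨O⟩ := exists_greedyOrder hκ ∅
  obtain ⟨c, hc⟩ := exists_greedy_coloring (α := Fin 8) (InvImage.wf O.arcRank wellFounded_lt)
    O.earlierConflicts (fun p q hq => (O.mem_earlierConflicts.1 hq).1)
    fun p => by simpa using O.card_earlierConflicts_lt_eight hdeg hU p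
  obtain ⟨C, hC⟩ := exists_sym2_coloring O.time_injective c
  exact ⟨C, _, O.isSemistrongOutside hc hC, fun v x => O.exists_adj_forall_le⟩

/-- A neighbour `h` of `s` other than `t` is *live* if it has a neighbour of smaller `κ` than `t`.
When `t` is the parent of `s`, only live neighbours of `s` other than `t` come after `s` in the
greedy order. -/
def IsLive (G : SimpleGraph V) (κ : V → ℕ) (s t h : V) : Prop :=
  G.Adj s h ∧ h ≠ t ∧ ∃ y, G.Adj h y ∧ κ y < κ t

/-- Conditions under which the greedy colouring leaves two choices for the colour of the edge
`st`, where `s` and `q` are the neighbours of `t ∈ U` outside `U`: few edges are coloured after `st`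
and in conflict with it, and each of these has a colour to spare. -/
structure IsFlexibleEdge (G : SimpleGraph V) (κ : V → ℕ) (U : Set V) (s t q : V) : Prop where
  t_mem : t ∈ U
  s_notMem : s ∉ U
  q_notMem : q ∉ U
  adj_st : G.Adj s t
  adj_qt : G.Adj q t
  of_adj_t : ∀ w, G.Adj t w → w ∈ U ∨ w = q ∨ w = s
  eq_or_lt_of_adj_s : ∀ y, G.Adj s y → y = t ∨ κ t < κ y
  eq_of_κ_eq : ∀ y, κ y = κ t → y = t
  exists_adj_q_lt : ∃ y, G.Adj q y ∧ κ y < κ t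
  not_adj_t : ∀ w, G.Adj s w → ¬ G.Adj w t
  notMem_of_adj_s : ∀ h, G.Adj s h → h ≠ t → h ∉ U
  live_unique : ∀ h h', IsLive G κ s t h → IsLive G κ s t h' → h = h'
  exists_lt_of_live : ∀ h, IsLive G κ s t h → ∃ p, G.Adj h p ∧
    ∀ z, G.Adj h z → z ≠ p → z ∉ U ∧ ∀ y, G.Adj z y → κ p < κ y

namespace IsFlexibleEdge

variable {P : Set V} {s t q : V} (hst : IsFlexibleEdge G κ U s t q) (O : GreedyOrder G κ U P)

include hst

theorem parent_s : O.parent s = t := by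
  refine (hst.eq_or_lt_of_adj_s _ (O.adj_parent hst.s_notMem)).resolve_right fun hlt => ?_
  have hle := O.level_le hst.adj_st
  rw [O.level_of_notMem hst.s_notMem] at hle
  exact (O.rank_lt hlt).not_ge (Nat.succ_le_succ_iff.1 hle)

theorem t_mem_laterNeighbors_s : t ∈ laterNeighbors G O.time s :=
  hst.parent_s O ▸ O.parent_mem_laterNeighbors hst.s_notMem

theorem t_mem_laterNeighbors_q : t ∈ laterNeighbors G O.time q :=
  mem_laterNeighbors.2 ⟨hst.adj_qt, O.time_lt_of_mem_of_notMem hst.q_notMem hst.t_mem⟩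

theorem level_s : O.level s = O.rank t + 1 := by
  rw [O.level_of_notMem hst.s_notMem, hst.parent_s O]

theorem level_q_lt : O.level q < O.rank t + 1 := by
  obtain ⟨y, hqy, hlt⟩ := hst.exists_adj_q_lt
  exact (O.level_le hqy).trans_lt (Nat.succ_lt_succ (O.rank_lt hlt))

theorem time_s_lt_time_q : O.time s < O.time q :=
  O.time_lt_of_level_lt ((hst.level_q_lt O).trans_eq (hst.level_s O).symm)

theorem t_ne_parent_q : t ≠ O.parent q := fun h => by
  have hlt := hst.level_q_lt O
  rw [O.level_of_notMem hst.q_notMem, ← h] at hlt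
  exact hlt.false

theorem isLive_of_time_lt {h : V} (hsh : G.Adj s h) (hht : h ≠ t) (hlt : O.time s < O.time h) :
    IsLive G κ s t h := by
  have hhU := hst.notMem_of_adj_s h hsh hht
  refine ⟨hsh, hht, O.parent h, O.adj_parent hhU, ?_⟩
  have hparent : O.parent h ≠ t := fun heq => hst.not_adj_t h hsh (heq ▸ O.adj_parent hhU)
  have hlevel := O.level_le_of_time_lt hlt
  rw [hst.level_s O, O.level_of_notMem hhU] at hlevel
  refine lt_of_le_of_ne (not_lt.1 fun h => ?_) fun h => hparent (hst.eq_of_κ_eq _ h)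
  exact (O.rank_lt h).not_ge (Nat.succ_le_succ_iff.1 hlevel)

theorem card_laterNeighbors_s_le : #(laterNeighbors G O.time s) ≤ 2 := by
  classical
  have hone : #((laterNeighbors G O.time s).erase t) ≤ 1 := by
    refine Finset.card_le_one.2 fun a ha b hb => ?_
    simp only [Finset.mem_erase, mem_laterNeighbors] at ha hb
    exact hst.live_unique a b (hst.isLive_of_time_lt O ha.2.1 ha.1 ha.2.2)
      (hst.isLive_of_time_lt O hb.2.1 hb.1 hb.2.2)
  rw [Finset.card_erase_of_mem (hst.t_mem_laterNeighbors_s O)] at hone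
  omega

theorem levelDegree_le_one_of_isLive {h : V} (hh : IsLive G κ s t h) :
    levelDegree G O.level h ≤ 1 := by
  obtain ⟨p, hhp, hp⟩ := hst.exists_lt_of_live h hh
  have eq_p : ∀ z, G.Adj h z → O.level z ≤ O.level h → z = p := by
    intro z hhz hlevel
    by_contra hzp
    obtain ⟨hzU, hlt⟩ := hp z hhz hzp
    rw [O.level_of_notMem hzU] at hlevel
    exact (O.rank_lt (hlt _ (O.adj_parent hzU))).not_ge
      (Nat.succ_le_succ_iff.1 (hlevel.trans (O.level_le hhp)))
  refine Finset.card_le_one.2 fun a ha b hb => ?_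
  simp only [Finset.mem_filter, mem_neighborFinset] at ha hb
  rw [eq_p a ha.1 ha.2, eq_p b hb.1 hb.2]

variable (hdeg : ∀ v, G.degree v ≤ 3) (hU : ∀ x ∈ U, G.degree x ≤ 2 ∨ ∃ y ∈ U, G.Adj x y)

include hdeg hU

/-- Every other neighbour of `t` comes after `s`. -/
theorem card_earlierConflicts_st_lt : #(O.earlierConflicts (s, t)) < 7 := by
  have hcard := O.card_earlierConflicts_parent_le hdeg hU hst.s_notMem (R := 0) fun g hg hlt _ => by
    rw [hst.parent_s O] at hg
    rcases hst.of_adj_t g hg with hgU | rfl | rfl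
    · exact absurd hlt (O.time_lt_of_mem_of_notMem hst.s_notMem hgU).not_gt
    · exact absurd hlt (hst.time_s_lt_time_q O).not_gt
    · exact absurd hlt (lt_irrefl _)
  rw [hst.parent_s O] at hcard
  have := O.card_laterNeighbors_pos hst.s_notMem
  omega

theorem card_earlierConflicts_q_lt (hq : q ∈ P) (hP : ∀ g ∈ P, g = q ∨ IsLive G κ s t g) {x : V}
    (hx : x ∈ laterNeighbors G O.time q) : #(O.earlierConflicts (q, x)) < 7 := by
  classical
  have htq := hst.t_mem_laterNeighbors_q O
  have htp := hst.t_ne_parent_q O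
  have htwo := O.two_le_card_laterNeighbors hst.q_notMem htq htp
  by_cases hxp : x = O.parent q
  · subst hxp
    have := O.card_earlierConflicts_parent_le hdeg hU hst.q_notMem
      (R := #(laterNeighbors G O.time q) - 1) fun g hg hlt hqg => by
        have hlater := O.card_laterNeighbors_le_levelDegree g
        have hq_le := O.levelDegree_le_card_laterNeighbors hdeg hU hst.q_notMem hg hlt hqg
        rcases O.mem_or_levelDegree_lt_of_adj_parent hst.q_notMem hg hlt hq with hgP | hlt'
        · rcases hP g hgP with rfl | hlive
          · exact absurd hlt (lt_irrefl _)
          · have := hst.levelDegree_le_one_of_isLive O hlive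
            omega
        · omega
    omega
  by_cases hxt : x = t
  · subst hxt
    have := O.card_earlierConflicts_le_of_ne_parent hdeg hU hst.q_notMem hx hxp (R := 2)
      fun g hg hlt _ => by
        rcases hst.of_adj_t g hg with hgU | rfl | rfl
        · exact absurd hlt (O.time_lt_of_mem_of_notMem hst.q_notMem hgU).not_gt
        · exact absurd hlt (lt_irrefl _)
        · exact hst.card_laterNeighbors_s_le O
    omega
  · have := O.card_earlierConflicts_le_of_ne_parent hdeg hU hst.q_notMem hx hxp (R := 3)
      fun g _ _ _ => card_laterNeighbors_le hdeg g
    have hthree : #{x, t, O.parent q} ≤ #(laterNeighbors G O.time q) := Finset.card_le_card (by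
      simp [Finset.insert_subset_iff, hx, htq, O.parent_mem_laterNeighbors hst.q_notMem])
    rw [Finset.card_eq_three.2 ⟨x, t, _, hxt, hxp, htp, rfl⟩] at hthree
    omega

theorem card_earlierConflicts_of_isLive_lt {h x : V} (hh : IsLive G κ s t h) (hhP : h ∈ P)
    (hP : ∀ g ∈ P, g = q ∨ IsLive G κ s t g) (hx : x ∈ laterNeighbors G O.time h) :
    #(O.earlierConflicts (h, x)) < 7 := by
  have hhU := hst.notMem_of_adj_s h hh.1 hh.2.1
  have hone := hst.levelDegree_le_one_of_isLive O hh
  have hlater := O.card_laterNeighbors_le_levelDegree h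
  obtain rfl : x = O.parent h := by
    by_contra hne
    have := O.two_le_card_laterNeighbors hhU hx hne
    omega
  have := O.card_earlierConflicts_parent_le hdeg hU hhU (R := 0) fun g hg hlt _ => by
    exfalso
    have hgU := O.notMem_of_adj_parent hhU hg hlt
    have hpos := O.card_laterNeighbors_pos hgU
    have hle := O.card_laterNeighbors_le_levelDegree g
    rcases O.mem_or_levelDegree_lt_of_adj_parent hhU hg hlt hhP with hgP | hlt'
    · rcases hP g hgP with rfl | hlive
      · have := O.two_le_card_laterNeighbors hgU (hst.t_mem_laterNeighbors_q O)
          (hst.t_ne_parent_q O)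
        have := O.levelDegree_le_of_adj_parent hhU hg hlt
        omega
      · exact (hst.live_unique g h hlive hh ▸ hlt).false
    · omega
  have := O.card_laterNeighbors_pos hhU
  omega

/-- The only earlier neighbour of a live `h` is `s`, which has at most two later neighbours. -/
theorem card_earlierConflicts_to_isLive_lt {v h : V} (hv : v ∉ U) (hsv : O.time s < O.time v)
    (hh : IsLive G κ s t h) (hvh : h ∈ laterNeighbors G O.time v) :
    #(O.earlierConflicts (v, h)) < 7 := by
  have hne : h ≠ O.parent v := by
    rintro rfl
    have hlevel := O.level_le_of_time_lt hsv
    rw [O.level_of_notMem hv, hst.level_s O] at hlevel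
    exact (O.rank_lt ((hst.eq_or_lt_of_adj_s _ hh.1).resolve_left hh.2.1)).not_ge
      (Nat.succ_le_succ_iff.1 hlevel)
  have := O.card_earlierConflicts_le_of_ne_parent hdeg hU hv hvh hne (R := 2) fun g hg hlt _ => by
    have hgs : g = s := Finset.card_le_one.1 (O.card_neighborsBefore_le_one hdeg hU hv hvh)
      g (mem_neighborsBefore.2 ⟨hg, hlt⟩) s (mem_neighborsBefore.2 ⟨hh.1.symm, hsv⟩)
    exact hgs ▸ hst.card_laterNeighbors_s_le O
  have := O.two_le_card_laterNeighbors hv hvh hne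
  omega

theorem card_earlierConflicts_lt_of_mem (hP : ∀ g, g ∈ P ↔ g = q ∨ IsLive G κ s t g) {p : V × V}
    (hp : (s, t) ∈ O.earlierConflicts p) : #(O.earlierConflicts p) < 7 := by
  obtain ⟨v, x⟩ := p
  obtain ⟨hrank, ⟨hv : v ∉ U, hvx : G.Adj v x, hlt : O.time v < O.time x⟩, -, -, hadj⟩ :=
    O.mem_earlierConflicts.1 hp
  have hx : x ∈ laterNeighbors G O.time v := mem_laterNeighbors.2 ⟨hvx, hlt⟩
  have hsv : O.time s < O.time v := (O.eq_or_time_lt_of_arcRank_lt hrank).resolve_right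
    fun h => h.2.2 (h.1 ▸ (hst.parent_s O).symm)
  have of_adj_t : G.Adj t v → #(O.earlierConflicts (v, x)) < 7 := by
    intro htv
    rcases hst.of_adj_t v htv with hvU | rfl | rfl
    · exact absurd hvU hv
    · exact hst.card_earlierConflicts_q_lt O hdeg hU ((hP v).2 (Or.inl rfl)) (fun g => (hP g).1) hx
    · exact absurd hsv (lt_irrefl _)
  rcases hadj with hvs | hvt | hsx
  · have hlive := hst.isLive_of_time_lt O hvs.symm (fun h : v = t => hv (h ▸ hst.t_mem)) hsv
    exact hst.card_earlierConflicts_of_isLive_lt O hdeg hU hlive ((hP v).2 (Or.inr hlive))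
      (fun g => (hP g).1) hx
  · exact of_adj_t hvt.symm
  · by_cases hxt : x = t
    · exact of_adj_t (hxt ▸ hvx.symm)
    · exact hst.card_earlierConflicts_to_isLive_lt O hdeg hU hv hsv
        (hst.isLive_of_time_lt O hsx hxt (hsv.trans hlt)) hx

omit hdeg hU

theorem exists_isSemistrongOutside_update [DecidableEq V] (hdeg : ∀ v, G.degree v ≤ 3)
    (hκ : ∀ v, v ∉ U → ∃ y, G.Adj v y ∧ κ y < κ v)
    (hU : ∀ x ∈ U, G.degree x ≤ 2 ∨ ∃ y ∈ U, G.Adj x y) :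
    ∃ (C : Sym2 V → Fin 8) (a : Fin 8) (A : V → V → Prop), a ≠ C s(s, t) ∧
      IsSemistrongOutside G U C A ∧
      IsSemistrongOutside G U (Function.update C s(s, t) a) A := by
  obtain ⟨O⟩ := exists_greedyOrder hκ (insert q {h | IsLive G κ s t h})
  obtain ⟨c, a, ha, hc, hc'⟩ := exists_greedy_coloring_update (α := Fin 8) O.arcRank
    O.earlierConflicts (fun p q hq => (O.mem_earlierConflicts.1 hq).1)
    (fun p => by simpa using O.card_earlierConflicts_lt_eight hdeg hU p) (s, t)
    (by simpa using Nat.succ_lt_succ (hst.card_earlierConflicts_st_lt O hdeg hU))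
    (fun p hp => (Nat.succ_lt_succ
      (hst.card_earlierConflicts_lt_of_mem O hdeg hU (fun g => Iff.rfl) hp)).trans_eq
        (Fintype.card_fin 8).symm)
  obtain ⟨C, hC⟩ := exists_sym2_coloring O.time_injective c
  have hst_lt := (mem_laterNeighbors.1 (hst.t_mem_laterNeighbors_s O)).2
  refine ⟨C, a, _, by rwa [hC s t hst_lt], O.isSemistrongOutside hc hC,
    O.isSemistrongOutside hc' fun v x hlt => ?_⟩
  by_cases heq : (v, x) = (s, t)
  · cases heq
    simp
  · have hne : s(v, x) ≠ s(s, t) := fun h => by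
      rcases Sym2.eq_iff.1 h with ⟨rfl, rfl⟩ | ⟨rfl, rfl⟩
      · exact heq rfl
      · exact hlt.not_gt hst_lt
    rw [Function.update_of_ne hne, Function.update_of_ne heq, hC v x hlt]

end IsFlexibleEdge

end PartialColoring

theorem exists_adj_dist_lt {G : SimpleGraph V} (hconn : G.Connected) {r v : V} (h : v ≠ r) :
    ∃ y, G.Adj v y ∧ G.dist y r < G.dist v r := by
  obtain ⟨p, hp⟩ := hconn.exists_walk_length_eq_dist v r
  cases p with
  | nil => exact absurd rfl h
  | cons hadj p => exact ⟨_, hadj, (dist_le p).trans_lt (by simp [← hp])⟩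

theorem forall_of_connected {G : SimpleGraph V} (hconn : G.Connected) {S : V → Prop} {r : V}
    (hr : S r) (h : ∀ x y, S x → G.Adj x y → S y) (v : V) : S v := by
  obtain ⟨p⟩ := hconn.preconnected r v
  induction p with
  | nil => exact hr
  | cons hadj _ ih => exact ih (h _ _ hr hadj)

/-- The set of colours of the edges at `g`. -/
def colorsAt [Fintype V] (G : SimpleGraph V) [DecidableRel G.Adj] [DecidableEq α]
    (C : Sym2 V → α) (g : V) : Finset α :=
  (G.neighborFinset g).image fun x => C s(g, x)

section ColorsAt

variable [Fintype V] {G : SimpleGraph V} [DecidableRel G.Adj] [DecidableEq α] (C : Sym2 V → α)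

theorem mem_colorsAt {g x : V} (h : G.Adj g x) : C s(g, x) ∈ colorsAt G C g :=
  Finset.mem_image_of_mem _ ((G.mem_neighborFinset g x).2 h)

theorem card_colorsAt_le (g : V) : #(colorsAt G C g) ≤ G.degree g :=
  Finset.card_image_le

end ColorsAt

/-- The neighbours of `v` are exactly the three distinct vertices `a`, `b` and `c`. -/
structure HasNeighbors (G : SimpleGraph V) (v a b c : V) : Prop where
  adj_iff : ∀ {w}, G.Adj v w ↔ w = a ∨ w = b ∨ w = c
  ne₁₂ : a ≠ b
  ne₁₃ : a ≠ c
  ne₂₃ : b ≠ c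

namespace HasNeighbors

variable {G : SimpleGraph V} {v a b c : V}

theorem adj₁ (h : HasNeighbors G v a b c) : G.Adj v a := h.adj_iff.2 (Or.inl rfl)

theorem adj₂ (h : HasNeighbors G v a b c) : G.Adj v b := h.adj_iff.2 (Or.inr (Or.inl rfl))

theorem adj₃ (h : HasNeighbors G v a b c) : G.Adj v c := h.adj_iff.2 (Or.inr (Or.inr rfl))

theorem swap (h : HasNeighbors G v a b c) : HasNeighbors G v b a c :=
  ⟨h.adj_iff.trans or_left_comm, h.ne₁₂.symm, h.ne₂₃, h.ne₁₃⟩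

theorem rotate (h : HasNeighbors G v a b c) : HasNeighbors G v b c a :=
  ⟨h.adj_iff.trans (or_rotate), h.ne₂₃, h.ne₁₂.symm, h.ne₁₃.symm⟩

variable [Fintype V] [DecidableRel G.Adj]

theorem exists_of_adj_of_adj (h : G.degree v = 3) (ha : G.Adj v a) (hb : G.Adj v b) (hab : a ≠ b) :
    ∃ c, HasNeighbors G v a b c := by
  classical
  have hsub : ({a, b} : Finset V) ⊆ G.neighborFinset v := by simp [Finset.insert_subset_iff, ha, hb]
  obtain ⟨c, hc, heq⟩ : ∃ c ∉ ({a, b} : Finset V), insert c {a, b} = G.neighborFinset v :=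
    Finset.exists_eq_insert_iff.2
      ⟨hsub, by rw [Finset.card_pair hab, card_neighborFinset_eq_degree, h]⟩
  simp only [Finset.mem_insert, Finset.mem_singleton, not_or] at hc
  refine ⟨c, fun {w} => ?_, hab, Ne.symm hc.1, Ne.symm hc.2⟩
  rw [← mem_neighborFinset, ← heq]
  simp [or_rotate]

theorem exists_of_adj (h : G.degree v = 3) (ha : G.Adj v a) : ∃ b c, HasNeighbors G v a b c := by
  obtain ⟨b, hb, hba⟩ := Finset.exists_mem_ne (by simp [h] : 1 < #(G.neighborFinset v)) a
  exact ⟨b, exists_of_adj_of_adj h ha (by simpa using hb) hba.symm⟩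

theorem colorsAt_eq [DecidableEq α] {C : Sym2 V → α} (h : HasNeighbors G v a b c) :
    colorsAt G C v = {C s(v, a), C s(v, b), C s(v, c)} := by
  ext
  simp [colorsAt, h.adj_iff, eq_comm]

end HasNeighbors

section Extension

variable {G : SimpleGraph V} {U : Set V} {C : Sym2 V → α} {A : V → V → Prop}

/-- The set of colours of the edges at `g` that do not lie inside `U`. -/
def outerColors (G : SimpleGraph V) (U : Set V) (C : Sym2 V → α) (g : V) : Set α :=
  {a | ∃ x, G.Adj g x ∧ (g ∉ U ∨ x ∉ U) ∧ C s(g, x) = a}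

/-- The set of colours of the arcs of the orientation `A` that leave `g`. -/
def arcColors (A : V → V → Prop) (C : Sym2 V → α) (g : V) : Set α :=
  {a | ∃ x, A g x ∧ C s(g, x) = a}

/-- The colour `a` can be given to the edge `zw` inside `U`, oriented from `z`, as far as conflicts
with the edges that do not lie inside `U` are concerned. -/
def IsFreeColor (G : SimpleGraph V) (U : Set V) (C : Sym2 V → α) (A : V → V → Prop) (z w : V)
    (a : α) : Prop :=
  (∀ n, G.Adj z n → a ∉ outerColors G U C n) ∧ ∀ g, G.Adj w g → a ∉ arcColors A C g

theorem notMem_outerColors_of_subset {g : V} (hg : g ∈ U) (h : ∀ x, G.Adj g x → x ∈ U) (a : α) :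
    a ∉ outerColors G U C g := by
  rintro ⟨x, hx, hout, -⟩
  exact hout.elim (· hg) (· (h x hx))

theorem HasNeighbors.notMem_outerColors {g x y z : V} (h : HasNeighbors G g x y z) (hg : g ∈ U)
    (hx : x ∈ U) (hy : y ∈ U) {a : α} (ha : a ≠ C s(z, g)) : a ∉ outerColors G U C g := by
  rintro ⟨w, hw, hout, rfl⟩
  rcases h.adj_iff.1 hw with rfl | rfl | rfl
  · exact hout.elim (· hg) (· hx)
  · exact hout.elim (· hg) (· hy)
  · exact ha (by rw [Sym2.eq_swap])

theorem notMem_outerColors_of_notMem_colorsAt [Fintype V] [DecidableRel G.Adj] [DecidableEq α]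
    {g : V} {a : α} (h : a ∉ colorsAt G C g) : a ∉ outerColors G U C g := by
  rintro ⟨x, hx, -, rfl⟩
  exact h (mem_colorsAt C hx)

namespace IsSemistrongOutside

theorem notMem_arcColors_of_mem (h : IsSemistrongOutside G U C A) {g : V} (hg : g ∈ U) (a : α) :
    a ∉ arcColors A C g := by
  rintro ⟨x, hx, -⟩
  exact h.tail_notMem hx hg

theorem notMem_arcColors_of_notMem_colorsAt [Fintype V] [DecidableRel G.Adj] [DecidableEq α]
    (h : IsSemistrongOutside G U C A) {g : V} {a : α} (ha : a ∉ colorsAt G C g) :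
    a ∉ arcColors A C g := by
  rintro ⟨x, hx, rfl⟩
  exact ha (mem_colorsAt C (h.adj hx))

theorem isFreeColor (h : IsSemistrongOutside G U C A) {z w p q e f : V} {a : α} (hz : z ∈ U)
    (hw : w ∈ U) (Nz : HasNeighbors G z w p q) (Nw : HasNeighbors G w z e f)
    (hp : a ∉ outerColors G U C p) (hq : a ∉ outerColors G U C q) (he : a ∉ arcColors A C e)
    (hf : a ∉ arcColors A C f) : IsFreeColor G U C A z w a := by
  have notMem_arcColors : ∀ g, G.Adj w g → a ∉ arcColors A C g := by
    intro g hg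
    rcases Nw.adj_iff.1 hg with rfl | rfl | rfl
    exacts [h.notMem_arcColors_of_mem hz a, he, hf]
  refine ⟨fun n hn => ?_, notMem_arcColors⟩
  rcases Nz.adj_iff.1 hn with rfl | rfl | rfl
  · rintro ⟨x, hx, hout, rfl⟩
    have hxU : x ∉ U := hout.resolve_left (not_not_intro hw)
    have hxw : A x n := (h.oriented hxU hx.symm).resolve_right fun hA => h.tail_notMem hA hw
    exact notMem_arcColors x hx ⟨n, hxw, by rw [Sym2.eq_swap]⟩
  · exact hp
  · exact hq

/-- The edges inside `U` are presented as a family of arcs; two of them only have to get distinct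
colours if the tail of one is adjacent to an end of the other. -/
theorem extend_of_isFreeColor {k : ℕ} {C : Sym2 V → Fin k} (h : IsSemistrongOutside G U C A)
    {ι : Type*} (arc : ι → V × V) (c : ι → Fin k) (hmem : ∀ i, (arc i).1 ∈ U ∧ (arc i).2 ∈ U)
    (hcover : ∀ x ∈ U, ∀ y ∈ U, G.Adj x y → ∃ i, s((arc i).1, (arc i).2) = s(x, y))
    (hfree : ∀ i, IsFreeColor G U C A (arc i).1 (arc i).2 (c i))
    (hne : ∀ i j, i ≠ j → G.Adj (arc i).1 (arc j).1 ∨ G.Adj (arc i).1 (arc j).2 → c i ≠ c j) :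
    HasSemistrongEdgeColoring G k := by
  classical
  let D : Sym2 V → Fin k := fun e =>
    if he : ∃ i, s((arc i).1, (arc i).2) = e then c he.choose else C e
  have hD : ∀ x y, x ∉ U → D s(x, y) = C s(x, y) := by
    refine fun x y hx => dif_neg ?_
    rintro ⟨i, hi⟩
    rcases Sym2.eq_iff.1 hi with ⟨rfl, rfl⟩ | ⟨rfl, rfl⟩
    exacts [hx (hmem i).1, hx (hmem i).2]
  have exists_index : ∀ x ∈ U, ∀ y ∈ U, G.Adj x y →
      ∃ i, s((arc i).1, (arc i).2) = s(x, y) ∧ D s(x, y) = c i := by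
    intro x hx y hy hxy
    have he := hcover x hx y hy hxy
    exact ⟨he.choose, he.choose_spec, dif_pos he⟩
  have isCompatibleArc : ∀ i, D s((arc i).1, (arc i).2) = c i →
      IsCompatibleArc G A D (arc i).1 (arc i).2 := by
    intro i hi
    refine ⟨fun n x hn hnx hedge => ?_, fun g x hg hgx => ?_⟩ <;> rw [hi]
    · by_cases hout : n ∉ U ∨ x ∉ U
      · have hDC : D s(n, x) = C s(n, x) := by
          rcases hout with hnU | hxU
          · exact hD n x hnU
          · rw [Sym2.eq_swap, hD x n hxU]
        exact fun heq => (hfree i).1 n hn ⟨x, hnx, hout, hDC.symm.trans heq⟩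
      · push Not at hout
        obtain ⟨j, hj, hDj⟩ := exists_index n hout.1 x hout.2 hnx
        rw [hDj]
        refine (hne i j (fun hij => hedge (hij ▸ hj.symm)) ?_).symm
        rcases Sym2.eq_iff.1 hj with ⟨hj, -⟩ | ⟨-, hj⟩
        exacts [Or.inl (hj ▸ hn), Or.inr (hj ▸ hn)]
    · rw [hD g x (h.tail_notMem hgx)]
      exact fun heq => (hfree i).2 g hg ⟨x, hgx, heq.symm⟩
  refine h.extend hD fun x y hx hy hxy => ?_
  obtain ⟨i, hi, hDi⟩ := exists_index x hx y hy hxy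
  have hci := isCompatibleArc i (hi ▸ hDi)
  rcases Sym2.eq_iff.1 hi with ⟨rfl, rfl⟩ | ⟨rfl, rfl⟩
  exacts [Or.inl hci, Or.inr hci]

end IsSemistrongOutside

end Extension

theorem exists_injective_forall_notMem [Fintype α] {n : ℕ} (S : Fin n → Finset α)
    (hS : ∀ i, #(S i) + i < Fintype.card α) :
    ∃ c : Fin n → α, Function.Injective c ∧ ∀ i, c i ∉ S i := by
  classical
  induction n with
  | zero => exact ⟨Fin.elim0, fun i => i.elim0, fun i => i.elim0⟩
  | succ n ih =>
    obtain ⟨c, hc, hcS⟩ := ih (fun i => S i.castSucc) fun i => hS i.castSucc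
    obtain ⟨a, ha⟩ := exists_notMem_of_card_lt (S (Fin.last n) ∪ Finset.univ.image c)
      (((Finset.card_union_le _ _).trans (Nat.add_le_add_left
        (Finset.card_image_le.trans_eq (Finset.card_fin n)) _)).trans_lt (hS (Fin.last n)))
    simp only [Finset.mem_union, Finset.mem_image, Finset.mem_univ, true_and, not_or] at ha
    refine ⟨Fin.snoc c a, Fin.snoc_injective_iff.2 ⟨hc, ha.2⟩, Fin.lastCases ?_ fun i => ?_⟩
    · simpa using ha.1
    · simpa using hcS i

section Cases

variable [Fintype V] {G : SimpleGraph V} [DecidableRel G.Adj]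

theorem hasSemistrongEdgeColoring_of_degree_le_two (hconn : G.Connected)
    (hdeg : ∀ v, G.degree v ≤ 3) {r : V} (hr : G.degree r ≤ 2) : HasSemistrongEdgeColoring G 8 := by
  obtain ⟨C, A, h, -⟩ := exists_isSemistrongOutside (U := {r}) hdeg
    (fun v hv => exists_adj_dist_lt hconn hv) (by rintro x rfl; exact Or.inl hr)
  refine h.extend (fun _ _ _ => rfl) ?_
  rintro z w rfl rfl hzw
  exact absurd rfl hzw.ne

theorem IsSemistrongOutside.extend_triangle {k : ℕ} {C : Sym2 V → Fin k}
    {A : V → V → Prop} {r a b v a' b' v₁ v₂ : V} (h : IsSemistrongOutside G {r, a, b, v} C A)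
    (hr : HasNeighbors G r a b v) (ha : HasNeighbors G a r b a') (hb : HasNeighbors G b r a b')
    (hv : HasNeighbors G v r v₁ v₂) (ha' : a' ∉ ({r, a, b, v} : Set V))
    (hb' : b' ∉ ({r, a, b, v} : Set V)) (hv₁ : v₁ ∉ ({r, a, b, v} : Set V))
    (hv₂ : v₂ ∉ ({r, a, b, v} : Set V)) {c : Fin 4 → Fin k} (hc : Function.Injective c)
    (h₀ : c 0 ∉ colorsAt G C v₁ ∪ colorsAt G C v₂)
    (h₁ : c 1 ∉ colorsAt G C a' ∪ colorsAt G C b')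
    (h₂ : c 2 ∉ insert (C s(b', b)) (colorsAt G C a'))
    (h₃ : c 3 ∉ insert (C s(a', a)) (colorsAt G C b')) : HasSemistrongEdgeColoring G k := by
  simp only [Finset.mem_union, Finset.mem_insert, not_or] at h₀ h₁ h₂ h₃
  have notMem_r : ∀ i, c i ∉ outerColors G {r, a, b, v} C r := fun i =>
    notMem_outerColors_of_subset (U := {r, a, b, v}) (by simp)
      (fun x hx => Or.inr (hr.adj_iff.1 hx)) _
  refine h.extend_of_isFreeColor ![(v, r), (a, b), (a, r), (b, r)] c (by simp [Fin.forall_fin_succ])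
    ?_ ?_ fun i j hij _ => hc.ne hij
  · rintro x (rfl | rfl | rfl | rfl) y hy hxy
    · rcases hr.adj_iff.1 hxy with rfl | rfl | rfl
      exacts [⟨2, Sym2.eq_swap⟩, ⟨3, Sym2.eq_swap⟩, ⟨0, Sym2.eq_swap⟩]
    · rcases ha.adj_iff.1 hxy with rfl | rfl | rfl
      exacts [⟨2, rfl⟩, ⟨1, rfl⟩, absurd hy ha']
    · rcases hb.adj_iff.1 hxy with rfl | rfl | rfl
      exacts [⟨3, rfl⟩, ⟨1, Sym2.eq_swap⟩, absurd hy hb']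
    · rcases hv.adj_iff.1 hxy with rfl | rfl | rfl
      exacts [⟨0, rfl⟩, absurd hy hv₁, absurd hy hv₂]
  · intro i
    fin_cases i
    · exact h.isFreeColor (by simp) (by simp) hv hr.rotate.rotate
        (notMem_outerColors_of_notMem_colorsAt h₀.1) (notMem_outerColors_of_notMem_colorsAt h₀.2)
        (h.notMem_arcColors_of_mem (by simp) _) (h.notMem_arcColors_of_mem (by simp) _)
    · exact h.isFreeColor (by simp) (by simp) ha.rotate hb.swap
        (notMem_outerColors_of_notMem_colorsAt h₁.1) (notMem_r 1)
        (h.notMem_arcColors_of_mem (by simp) _) (h.notMem_arcColors_of_notMem_colorsAt h₁.2)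
    · exact h.isFreeColor (by simp) (by simp) ha hr
        (hb.notMem_outerColors (by simp) (by simp) (by simp) h₂.1)
        (notMem_outerColors_of_notMem_colorsAt h₂.2)
        (h.notMem_arcColors_of_mem (by simp) _) (h.notMem_arcColors_of_mem (by simp) _)
    · exact h.isFreeColor (by simp) (by simp) hb hr.swap
        (ha.notMem_outerColors (by simp) (by simp) (by simp) h₃.1)
        (notMem_outerColors_of_notMem_colorsAt h₃.2)
        (h.notMem_arcColors_of_mem (by simp) _) (h.notMem_arcColors_of_mem (by simp) _)

theorem hasSemistrongEdgeColoring_of_triangle (hconn : G.Connected) (hdeg : ∀ v, G.degree v ≤ 3)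
    {r a b v a' b' v₁ v₂ : V} (hr : HasNeighbors G r a b v) (ha : HasNeighbors G a r b a')
    (hb : HasNeighbors G b r a b') (hv : HasNeighbors G v r v₁ v₂) (hva' : v ≠ a') (hvb' : v ≠ b') :
    HasSemistrongEdgeColoring G 8 := by
  have hra := hr.adj₁
  have hrb := hr.adj₂
  have hrv := hr.adj₃
  have hav : ¬ G.Adj v a := by simp [adj_comm, ha.adj_iff, hrv.ne', hr.ne₂₃.symm, hva']
  have hbv : ¬ G.Adj v b := by simp [adj_comm, hb.adj_iff, hrv.ne', hr.ne₁₃.symm, hvb']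
  have notMem_of_adj : ∀ {x}, G.Adj v x → x ≠ r → x ∉ ({r, a, b, v} : Set V) := by
    rintro x hx hxr (rfl | rfl | rfl | rfl)
    exacts [hxr rfl, hav hx, hbv hx, hx.ne rfl]
  obtain ⟨C, A, h, -⟩ := exists_isSemistrongOutside (U := {r, a, b, v}) hdeg
    (fun x hx => exists_adj_dist_lt (r := r) hconn fun hxr => hx (by simp [hxr]))
    (by simp [hra, hra.symm, hrb.symm, hrv.symm])
  have card_le (g : V) : #(colorsAt G C g) ≤ 3 := (card_colorsAt_le C g).trans (hdeg g)
  have card_union_le (g g' : V) : #(colorsAt G C g ∪ colorsAt G C g') ≤ 6 :=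
    (Finset.card_union_le _ _).trans (add_le_add (card_le g) (card_le g'))
  have card_insert_le (e : Fin 8) (g : V) : #(insert e (colorsAt G C g)) ≤ 4 :=
    (Finset.card_insert_le _ _).trans (Nat.succ_le_succ (card_le g))
  obtain ⟨c, hc, hcS⟩ := exists_injective_forall_notMem
    ![colorsAt G C v₁ ∪ colorsAt G C v₂, colorsAt G C a' ∪ colorsAt G C b',
      insert (C s(b', b)) (colorsAt G C a'), insert (C s(a', a)) (colorsAt G C b')] (by
    have := card_union_le v₁ v₂
    have := card_union_le a' b'
    have := card_insert_le (C s(b', b)) a'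
    have := card_insert_le (C s(a', a)) b'
    simp only [Fin.forall_fin_succ, Matrix.cons_val_zero, Matrix.cons_val_succ, Fintype.card_fin,
      Fin.val_zero, Fin.val_succ]
    exact ⟨by omega, by omega, by omega, by omega, fun i => i.elim0⟩)
  exact h.extend_triangle hr ha hb hv
    (by simp [ha.ne₁₃.symm, ha.adj₃.ne', ha.ne₂₃.symm, hva'.symm])
    (by simp [hb.ne₁₃.symm, hb.adj₃.ne', hb.ne₂₃.symm, hvb'.symm])
    (notMem_of_adj hv.adj₂ hv.ne₁₂.symm) (notMem_of_adj hv.adj₃ hv.ne₁₃.symm)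
    hc (hcS 0) (hcS 1) (hcS 2) (hcS 3)

end Cases

section Small

variable [Fintype V] {G : SimpleGraph V} [DecidableRel G.Adj]

theorem hasSemistrongEdgeColoring_of_card_edgeFinset_le {k : ℕ} (h : #G.edgeFinset ≤ k) :
    HasSemistrongEdgeColoring G k := by
  classical
  rcases isEmpty_or_nonempty G.edgeSet with hE | hE
  · exact ⟨fun _ => 0, fun e he => (hE.false ⟨e, he⟩).elim, fun i =>
      ⟨⟨fun e he => he.1, fun e he => (hE.false ⟨e, he.1⟩).elim⟩,
        fun e he => (hE.false ⟨e, he.1⟩).elim⟩⟩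
  obtain ⟨f⟩ : Nonempty (G.edgeSet ↪ Fin k) :=
    Function.Embedding.nonempty_of_card_le (by rwa [Fintype.card_fin, ← edgeFinset_card])
  let C : Sym2 V → Fin k := fun e => if he : e ∈ G.edgeSet then f ⟨e, he⟩ else f hE.some
  have hC : ∀ e (he : e ∈ G.edgeSet), C e = f ⟨e, he⟩ := fun e he => dif_pos he
  refine hasSemistrongEdgeColoring_of_seesOnce C fun x y hxy => Or.inl fun z w _ hzw hne heq => ?_
  rw [hC _ (show s(x, y) ∈ G.edgeSet from hxy), hC _ (show s(z, w) ∈ G.edgeSet from hzw)] at heq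
  exact hne (congrArg Subtype.val (f.injective heq))

theorem hasSemistrongEdgeColoring_of_card_le_four {G : SimpleGraph V} (h : Fintype.card V ≤ 4) :
    HasSemistrongEdgeColoring G 8 := by
  classical
  exact
  hasSemistrongEdgeColoring_of_card_edgeFinset_le <|
    (card_edgeFinset_le_card_choose_two.trans (Nat.choose_le_choose 2 h)).trans (by decide)

end Small

section Triangle

variable [Fintype V] {G : SimpleGraph V} [DecidableRel G.Adj]

theorem hasSemistrongEdgeColoring_of_not_cliqueFree_three (hconn : G.Connected)
    (h3 : ∀ v, G.degree v = 3) (h : ¬ G.CliqueFree 3) : HasSemistrongEdgeColoring G 8 := by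
  classical
  obtain ⟨r, a, b, hra, hrb, hab⟩ : ∃ r a b, G.Adj r a ∧ G.Adj r b ∧ G.Adj a b := by
    simp only [CliqueFree, not_forall, not_not, is3Clique_iff] at h
    obtain ⟨-, r, a, b, hra, hrb, hab, -⟩ := h
    exact ⟨r, a, b, hra, hrb, hab⟩
  obtain ⟨r', hr⟩ := HasNeighbors.exists_of_adj_of_adj (h3 r) hra hrb hab.ne
  obtain ⟨a', ha⟩ := HasNeighbors.exists_of_adj_of_adj (h3 a) hra.symm hab hrb.ne
  obtain ⟨b', hb⟩ := HasNeighbors.exists_of_adj_of_adj (h3 b) hrb.symm hab.symm hra.ne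
  have of_ne : ∀ {r a b r' a' b'}, HasNeighbors G r a b r' → HasNeighbors G a r b a' →
      HasNeighbors G b r a b' → r' ≠ a' → r' ≠ b' → HasSemistrongEdgeColoring G 8 := by
    intro r a b r' a' b' hr ha hb hra' hrb'
    obtain ⟨v₁, v₂, hr'⟩ := HasNeighbors.exists_of_adj (h3 r') hr.adj₃.symm
    exact hasSemistrongEdgeColoring_of_triangle hconn (fun v => (h3 v).le) hr ha hb hr' hra' hrb'
  rcases eq_or_ne r' a' with rfl | hra'
  · rcases eq_or_ne r' b' with rfl | hrb'
    · obtain ⟨c, hr'⟩ :=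
        HasNeighbors.exists_of_adj_of_adj (h3 r') hr.adj₃.symm ha.adj₃.symm hra.ne
      obtain rfl : b = c := by
        simpa [hrb.ne', hab.ne'] using hr'.adj_iff.1 hb.adj₃.symm
      have huniv : (Finset.univ : Finset V) = {r, a, b, r'} := by
        ext x
        refine iff_of_true (Finset.mem_univ x) (forall_of_connected hconn
          (S := (· ∈ ({r, a, b, r'} : Finset V))) (r := r) (by simp) (fun x y hx hxy => ?_) x)
        simp only [Finset.mem_insert, Finset.mem_singleton] at hx ⊢
        rcases hx with rfl | rfl | rfl | rfl
        exacts [.inr (hr.adj_iff.1 hxy), by have := ha.adj_iff.1 hxy; tauto,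
          by have := hb.adj_iff.1 hxy; tauto, by have := hr'.adj_iff.1 hxy; tauto]
      exact hasSemistrongEdgeColoring_of_card_le_four (by
        rw [← Finset.card_univ, huniv]
        exact Finset.card_le_four)
    · exact of_ne hb hr.swap ha.swap hrb'.symm hrb'.symm
  · rcases eq_or_ne r' b' with rfl | hrb'
    · exact of_ne ha hr hb.swap hra'.symm hra'.symm
    · exact of_ne hr ha hb hra' hrb'

end Triangle

section Representatives

variable [Fintype α] [DecidableEq α]

theorem exists_injective_forall_notMem_of_card_inter (S : Fin 3 → Finset α)
    (hS : ∀ i, #(S i) + 2 ≤ Fintype.card α) (h : #(S 0 ∩ S 1 ∩ S 2) + 3 ≤ Fintype.card α) :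
    ∃ c : Fin 3 → α, Function.Injective c ∧ ∀ i, c i ∉ S i := by
  suffices hall : ∀ s : Finset (Fin 3), #s ≤ #(s.biUnion fun i => (S i)ᶜ) by
    simpa using (Finset.all_card_le_biUnion_card_iff_exists_injective fun i => (S i)ᶜ).1 hall
  intro s
  rcases s.eq_empty_or_nonempty with rfl | ⟨i, hi⟩
  · simp
  have two_le : 2 ≤ #(s.biUnion fun i => (S i)ᶜ) :=
    calc 2 ≤ #(S i)ᶜ := by have := hS i; rw [Finset.card_compl]; omega
      _ ≤ _ := Finset.card_le_card (Finset.subset_biUnion_of_mem (fun i => (S i)ᶜ) hi)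
  by_cases hs : s = Finset.univ
  · have hunion : (s.biUnion fun i => (S i)ᶜ) = (S 0 ∩ S 1 ∩ S 2)ᶜ := by
      ext a
      simp only [hs, Finset.mem_biUnion, Finset.mem_univ, true_and, Fin.exists_fin_succ,
        Finset.mem_compl, Finset.mem_inter, IsEmpty.exists_iff, or_false, not_and_or, or_assoc]
      rfl
    rw [hunion, Finset.card_compl, hs, Finset.card_univ, Fintype.card_fin]
    omega
  · have : #s < 3 := by
      simpa using (Finset.card_lt_card (Finset.ssubset_univ_iff.2 hs))
    omega

/-- By Hall's theorem the only obstruction for a given `β` is that the three forbidden sets coincide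
and have the maximal size, and two distinct `β` cannot both lead to this. -/
theorem exists_mem_pair_exists_injective_notMem {n : ℕ} (hn : Fintype.card α = n + 3)
    {E K : Finset α} (T : α → Finset α) (hE : #E ≤ n) (hT : ∀ β, #(T β) ≤ n + 1) (hK : #K ≤ n + 1)
    {b b' : α} (hbb' : b ≠ b') : ∃ β ∈ ({b, b'} : Finset α), ∃ c : Fin 3 → α,
      Function.Injective c ∧ c 0 ∉ insert β E ∧ c 1 ∉ T β ∧ c 2 ∉ K := by
  have card_insert_le (β : α) : #(insert β E) ≤ n + 1 :=
    (Finset.card_insert_le β E).trans (Nat.succ_le_succ hE)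
  by_contra! hno
  have le_card_inter : ∀ β ∈ ({b, b'} : Finset α), n + 1 ≤ #(insert β E ∩ T β ∩ K) := by
    intro β hβ
    by_contra! hlt
    obtain ⟨c, hc, hcS⟩ := exists_injective_forall_notMem_of_card_inter ![insert β E, T β, K]
      (by have := card_insert_le β
          have := hT β
          simp only [Fin.forall_fin_succ, Matrix.cons_val_zero, Matrix.cons_val_succ, hn]
          exact ⟨by omega, by omega, by omega, fun i => i.elim0⟩)
      (by rw [hn]; exact Nat.add_le_add_right (Nat.lt_succ_iff.1 hlt) 3)
    exact hcS 2 (hno β hβ c hc (hcS 0) (hcS 1))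
  have insert_subset : insert b E ⊆ K := by
    rw [← Finset.eq_of_subset_of_card_le (Finset.inter_subset_left.trans Finset.inter_subset_left)
      ((card_insert_le b).trans (le_card_inter b (by simp)))]
    exact Finset.inter_subset_right
  have subset_insert : K ⊆ insert b' E := by
    rw [← Finset.eq_of_subset_of_card_le Finset.inter_subset_right
      (hK.trans (le_card_inter b' (by simp)))]
    exact Finset.inter_subset_left.trans Finset.inter_subset_left
  have hbE : b ∈ E := Finset.mem_of_mem_insert_of_ne
    (subset_insert (insert_subset (Finset.mem_insert_self b E))) hbb'
  have := le_card_inter b (by simp)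
  rw [Finset.insert_eq_of_mem hbE] at this
  have := Finset.card_le_card
    ((Finset.inter_subset_left.trans Finset.inter_subset_left : E ∩ T b ∩ K ⊆ E))
  omega

omit [Fintype α] [DecidableEq α] in
theorem exists_notMem_and_notMem_pair {X T Y : Finset α} (hX : 3 ≤ #X) (hT : #T ≤ 2) (hY : #Y ≤ 1)
    (h : Disjoint T Y) :
    ∃ a ∈ X, a ∉ T ∧ ∃ b ∈ X, ∃ b' ∈ X, b ∉ Y ∧ b' ∉ Y ∧ a ≠ b ∧ a ≠ b' ∧ b ≠ b' := by
  classical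
  obtain ⟨a, haX, haT, hYa⟩ : ∃ a ∈ X, a ∉ T ∧ ∀ b ∈ X, b ∈ Y → b = a := by
    by_cases hXY : ∃ a ∈ X, a ∈ Y
    · obtain ⟨a, haX, haY⟩ := hXY
      exact ⟨a, haX, fun haT => Finset.disjoint_left.1 h haT haY,
        fun b _ hbY => Finset.card_le_one.1 hY b hbY a haY⟩
    · obtain ⟨a, haX, haT⟩ := Finset.exists_mem_notMem_of_card_lt_card (hT.trans_lt hX)
      exact ⟨a, haX, haT, fun b hbX hbY => absurd ⟨b, hbX, hbY⟩ hXY⟩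
  obtain ⟨b, hb, b', hb', hbb'⟩ := Finset.one_lt_card.1
    (show 1 < #(X.erase a) by rw [Finset.card_erase_of_mem haX]; omega)
  rw [Finset.mem_erase] at hb hb'
  exact ⟨a, haX, haT, b, hb.2, b', hb'.2, fun hbY => hb.1 (hYa b hb.2 hbY),
    fun hbY => hb'.1 (hYa b' hb'.2 hbY), hb.1.symm, hb'.1.symm, hbb'⟩

end Representatives

theorem exists_rank {G : SimpleGraph V} (hconn : G.Connected) (p : ℕ → V) (n : ℕ)
    (hp : ∀ i < n, ∃ j ≤ i, G.Adj (p (i + 1)) (p j)) :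
    ∃ κ : V → ℕ, (∀ i ≤ n, κ (p i) ≤ i) ∧ (∀ x, κ x ≤ n → p (κ x) = x) ∧
      ∀ x, x ≠ p 0 → ∃ y, G.Adj x y ∧ κ y < κ x := by
  classical
  let κ : V → ℕ := fun x => if h : ∃ i ≤ n, p i = x then Nat.find h else n + 1 + G.dist x (p 0)
  have hκ : ∀ i ≤ n, κ (p i) ≤ i := fun i hi => by
    have h : ∃ j ≤ n, p j = p i := ⟨i, hi, rfl⟩
    simp only [κ, dif_pos h]
    exact Nat.find_min' h ⟨hi, rfl⟩
  have p_κ : ∀ x, κ x ≤ n → p (κ x) = x := fun x hx => by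
    by_cases h : ∃ i ≤ n, p i = x
    · simp only [κ, dif_pos h]
      exact (Nat.find_spec h).2
    · simp only [κ, dif_neg h] at hx
      omega
  have κ_of_lt : ∀ x, n < κ x → κ x = n + 1 + G.dist x (p 0) := fun x hx => dif_neg <| by
    rintro ⟨i, hi, rfl⟩
    exact absurd (hκ i hi) (by omega)
  refine ⟨κ, hκ, p_κ, fun x hx => ?_⟩
  by_cases hxn : κ x ≤ n
  · obtain ⟨i, hi⟩ := Nat.exists_eq_succ_of_ne_zero fun h0 : κ x = 0 => hx (h0 ▸ p_κ x hxn).symm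
    obtain ⟨j, hj, hadj⟩ := hp i (by omega)
    refine ⟨p j, ?_, (hκ j (by omega)).trans_lt (by omega)⟩
    rwa [← Nat.succ_eq_add_one, ← hi, p_κ x hxn] at hadj
  · obtain ⟨y, hxy, hlt⟩ := exists_adj_dist_lt hconn hx
    refine ⟨y, hxy, ?_⟩
    by_cases hyn : κ y ≤ n
    · omega
    · rw [κ_of_lt x (by omega), κ_of_lt y (by omega)]
      omega

theorem not_adj_of_cliqueFree_three {G : SimpleGraph V} (h : G.CliqueFree 3) {a b c : V}
    (hab : G.Adj a b) (hac : G.Adj a c) : ¬ G.Adj b c := by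
  classical
  exact fun hbc => h {a, b, c} (is3Clique_triple_iff.2 ⟨hab, hac, hbc⟩)

/-- The 4-cycle `r y q t` of a cubic graph; the third neighbours of `r`, `y`, `q` and `t` are `v`,
`z`, `g` and `s`. -/
structure IsFourCycle (G : SimpleGraph V) (r y q t v z g s : V) : Prop where
  neighbors_r : HasNeighbors G r y t v
  neighbors_y : HasNeighbors G y r q z
  neighbors_q : HasNeighbors G q y t g
  neighbors_t : HasNeighbors G t r q s

section FourCycle

variable {G : SimpleGraph V} {r y q t v z g s v₁ v₂ : V} {k : ℕ} {C : Sym2 V → Fin k}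
  {A : V → V → Prop}

theorem IsFourCycle.exists_arc_eq (hsq : IsFourCycle G r y q t v z g s)
    (hv : HasNeighbors G v r v₁ v₂)
    (hU : ∀ x ∈ ({z, g, s, v₁, v₂} : Set V), x ∉ ({r, y, t, v, q} : Set V)) :
    ∀ x ∈ ({r, y, t, v, q} : Set V), ∀ w ∈ ({r, y, t, v, q} : Set V), G.Adj x w →
      ∃ i, s((![(y, r), (t, r), (v, r), (q, t), (q, y)] i).1,
        (![(y, r), (t, r), (v, r), (q, t), (q, y)] i).2) = s(x, w) := by
  obtain ⟨hr, hy, hq, ht⟩ := hsq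
  rintro x (rfl | rfl | rfl | rfl | rfl) w hw hxw
  · rcases hr.adj_iff.1 hxw with rfl | rfl | rfl
    exacts [⟨0, Sym2.eq_swap⟩, ⟨1, Sym2.eq_swap⟩, ⟨2, Sym2.eq_swap⟩]
  · rcases hy.adj_iff.1 hxw with rfl | rfl | rfl
    exacts [⟨0, rfl⟩, ⟨4, Sym2.eq_swap⟩, absurd hw (hU w (by simp))]
  · rcases ht.adj_iff.1 hxw with rfl | rfl | rfl
    exacts [⟨1, rfl⟩, ⟨3, Sym2.eq_swap⟩, absurd hw (hU w (by simp))]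
  · rcases hv.adj_iff.1 hxw with rfl | rfl | rfl
    exacts [⟨2, rfl⟩, absurd hw (hU w (by simp)), absurd hw (hU w (by simp))]
  · rcases hq.adj_iff.1 hxw with rfl | rfl | rfl
    exacts [⟨4, rfl⟩, ⟨3, rfl⟩, absurd hw (hU w (by simp))]

theorem IsFourCycle.not_adj (hsq : IsFourCycle G r y q t v z g s) (hv : HasNeighbors G v r v₁ v₂)
    (hU : ∀ x ∈ ({z, g, s, v₁, v₂} : Set V), x ∉ ({r, y, t, v, q} : Set V)) :
    ¬ G.Adj q r ∧ ∀ w ∈ ({y, t, q} : Set V), ¬ G.Adj v w := by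
  obtain ⟨hr, hy, hq, ht⟩ := hsq
  refine ⟨fun hqr => ?_, fun w hw hvw => ?_⟩
  · rcases hq.adj_iff.1 hqr with rfl | rfl | rfl
    exacts [hr.adj₁.ne rfl, hr.adj₂.ne rfl, hU r (by simp) (by simp)]
  · obtain rfl : w = r := by
      rcases hv.adj_iff.1 hvw with rfl | rfl | rfl
      · rfl
      all_goals exact absurd (by rcases hw with rfl | rfl | rfl <;> simp) (hU w (by simp))
    rcases hw with rfl | rfl | rfl
    exacts [hr.adj₁.ne rfl, hr.adj₂.ne rfl, hy.ne₁₂ rfl]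

namespace IsSemistrongOutside

variable [Fintype V] [DecidableRel G.Adj]

theorem extend_fourCycle (h : IsSemistrongOutside G {r, y, t, v, q} C A)
    (hsq : IsFourCycle G r y q t v z g s) (hv : HasNeighbors G v r v₁ v₂)
    (hU : ∀ x ∈ ({z, g, s, v₁, v₂} : Set V), x ∉ ({r, y, t, v, q} : Set V)) {b b' : Fin k}
    {d : Fin 3 → Fin k} (hd : Function.Injective d) (hb : b ∉ insert (C s(z, y)) (colorsAt G C g))
    (hbs : b ∉ arcColors A C s) (hb' : b' ∉ insert (C s(s, t)) (colorsAt G C g))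
    (hbz' : b' ∉ arcColors A C z) (hbb' : b ≠ b')
    (hd₀ : d 0 ∉ insert b' (insert (C s(g, q)) (insert b (colorsAt G C z))))
    (hd₁ : d 1 ∉ insert b' (insert (C s(g, q)) (insert b (colorsAt G C s))))
    (hd₂ : d 2 ∉ colorsAt G C v₁ ∪ colorsAt G C v₂) : HasSemistrongEdgeColoring G k := by
  obtain ⟨hqr, not_adj_v⟩ := hsq.not_adj hv hU
  have exists_arc_eq := hsq.exists_arc_eq hv hU
  obtain ⟨hr, hy, hq, ht⟩ := hsq
  simp only [Finset.mem_union, Finset.mem_insert, not_or] at hd₀ hd₁ hd₂ hb hb'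
  refine h.extend_of_isFreeColor ![(y, r), (t, r), (v, r), (q, t), (q, y)]
    ![d 0, d 1, d 2, b, b'] (by simp [Fin.forall_fin_succ]) exists_arc_eq ?_ ?_
  · have notMem_arcColors {x : V} (hx : x ∈ ({r, y, t, v, q} : Set V)) (a) : a ∉ arcColors A C x :=
      h.notMem_arcColors_of_mem hx a
    intro i
    fin_cases i
    · exact h.isFreeColor (by simp) (by simp) hy hr
        (hq.notMem_outerColors (by simp) (by simp) (by simp) hd₀.2.1)
        (notMem_outerColors_of_notMem_colorsAt hd₀.2.2.2)
        (notMem_arcColors (by simp) _) (notMem_arcColors (by simp) _)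
    · exact h.isFreeColor (by simp) (by simp) ht hr.swap
        (hq.notMem_outerColors (by simp) (by simp) (by simp) hd₁.2.1)
        (notMem_outerColors_of_notMem_colorsAt hd₁.2.2.2)
        (notMem_arcColors (by simp) _) (notMem_arcColors (by simp) _)
    · exact h.isFreeColor (by simp) (by simp) hv hr.rotate.rotate
        (notMem_outerColors_of_notMem_colorsAt hd₂.1) (notMem_outerColors_of_notMem_colorsAt hd₂.2)
        (notMem_arcColors (by simp) _) (notMem_arcColors (by simp) _)
    · exact h.isFreeColor (by simp) (by simp) hq.swap ht.swap
        (hy.notMem_outerColors (by simp) (by simp) (by simp) hb.1)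
        (notMem_outerColors_of_notMem_colorsAt hb.2) (notMem_arcColors (by simp) _) hbs
    · exact h.isFreeColor (by simp) (by simp) hq hy.swap
        (ht.notMem_outerColors (by simp) (by simp) (by simp) hb'.1)
        (notMem_outerColors_of_notMem_colorsAt hb'.2) (notMem_arcColors (by simp) _) hbz'
  · intro i j hij hadj
    fin_cases i <;> fin_cases j <;>
      simp [hd.eq_iff, hbb', hbb'.symm, hd₀, Ne.symm hd₀.1, Ne.symm hd₀.2.2.1, hd₁,
        Ne.symm hd₁.1, Ne.symm hd₁.2.2.1, not_adj_v, hqr, G.adj_comm q v] at hij hadj ⊢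

end IsSemistrongOutside

theorem IsFourCycle.exists_rank (hconn : G.Connected) (hsq : IsFourCycle G r y q t v z g s) :
    ∃ κ : V → ℕ, κ y ≤ 1 ∧ κ t ≤ 2 ∧ (∀ x, x ≠ r → ∃ w, G.Adj x w ∧ κ w < κ x) ∧
      ∀ x w, x ∉ ({r, y, t, v, q} : Set V) → G.Adj w x → κ w ≤ 2 → x = z ∨ x = s ∧ κ w = 2 := by
  obtain ⟨hr, hy, -, ht⟩ := hsq
  obtain ⟨κ, hκ, p_κ, exists_adj⟩ := _root_.exists_rank hconn (fun | 0 => r | 1 => y | _ => t) 2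
    fun i hi => ⟨0, Nat.zero_le i, by
      interval_cases i
      exacts [hr.adj₁.symm, hr.adj₂.symm]⟩
  refine ⟨κ, hκ 1 one_le_two, hκ 2 le_rfl, exists_adj, fun x w hxU hwx hw => ?_⟩
  simp only [Set.mem_insert_iff, Set.mem_singleton_iff, not_or] at hxU
  have hpw := p_κ w hw
  interval_cases hκw : κ w <;> subst hpw
  · simpa [hxU] using hr.adj_iff.1 hwx
  · simpa [hxU] using hy.adj_iff.1 hwx
  · simpa [hxU] using Or.inr (ht.adj_iff.1 hwx)

variable [Fintype V] [DecidableRel G.Adj]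

theorem IsFourCycle.exists_isSemistrongOutside (hconn : G.Connected) (hdeg : ∀ v, G.degree v ≤ 3)
    (h3 : G.CliqueFree 3) (hsq : IsFourCycle G r y q t v z g s) (hzs : z ≠ s) :
    ∃ (C : Sym2 V → Fin 8) (A : V → V → Prop), IsSemistrongOutside G {r, y, t, v, q} C A ∧
      (∀ x, A s x → x = t ∨ x = v ∨ x = z) ∧ ∀ x, A z x → x = y ∨ x = v := by
  obtain ⟨κ, hκy, hκt, exists_adj, eq_or_of_adj⟩ := hsq.exists_rank hconn
  obtain ⟨hr, hy, hq, ht⟩ := hsq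
  obtain ⟨C, A, h, hA⟩ := _root_.exists_isSemistrongOutside (U := {r, y, t, v, q}) (κ := κ) hdeg
    (fun x hx => exists_adj x fun hxr => hx (by simp [hxr]))
    (by simp [hr.adj₁, hy.adj₁, ht.adj₁, hr.adj₃.symm, hq.adj₁])
  refine ⟨C, A, h, fun x hx => ?_, fun x hx => ?_⟩
  · have hsx := h.adj hx
    by_cases hxU : x ∈ ({r, y, t, v, q} : Set V)
    · rcases hxU with rfl | rfl | rfl | rfl | rfl
      · exact absurd hsx.symm (not_adj_of_cliqueFree_three h3 ht.adj₁ ht.adj₃)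
      · simpa [ht.ne₁₃.symm, ht.ne₂₃.symm, hzs.symm] using hy.adj_iff.1 hsx.symm
      · exact Or.inl rfl
      · exact Or.inr (Or.inl rfl)
      · exact absurd hsx.symm (not_adj_of_cliqueFree_three h3 ht.adj₂ ht.adj₃)
    · obtain ⟨w, hw, hmin⟩ := hA s x hx hxU
      rcases eq_or_of_adj x w hxU hw.symm ((hmin t ht.adj₃.symm).trans hκt) with
        hxz | ⟨hxs, -⟩
      exacts [Or.inr (Or.inr hxz), absurd hxs.symm hsx.ne]
  · have hzx := h.adj hx
    by_cases hxU : x ∈ ({r, y, t, v, q} : Set V)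
    · rcases hxU with rfl | rfl | rfl | rfl | rfl
      · exact absurd hzx.symm (not_adj_of_cliqueFree_three h3 hy.adj₁ hy.adj₃)
      · exact Or.inl rfl
      · simpa [hy.ne₁₃.symm, hy.ne₂₃.symm, hzs] using ht.adj_iff.1 hzx.symm
      · exact Or.inr rfl
      · exact absurd hzx.symm (not_adj_of_cliqueFree_three h3 hy.adj₂ hy.adj₃)
    · obtain ⟨w, hw, hmin⟩ := hA z x hx hxU
      have hκw : κ w ≤ 1 := (hmin y hy.adj₃.symm).trans hκy
      rcases eq_or_of_adj x w hxU hw.symm (by omega) with hxz | ⟨-, hκw'⟩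
      exacts [absurd hxz.symm hzx.ne, by omega]

omit [Fintype V] [DecidableRel G.Adj] in
theorem IsFourCycle.notMem_of_mem (h3 : G.CliqueFree 3) (hsq : IsFourCycle G r y q t v z g s)
    (hv : HasNeighbors G v r v₁ v₂) (hvg : v ≠ g) :
    ∀ x ∈ ({z, g, s, v₁, v₂} : Set V), x ∉ ({r, y, t, v, q} : Set V) := by
  obtain ⟨hr, hy, hq, ht⟩ := hsq
  have hyt : ¬ G.Adj y t := not_adj_of_cliqueFree_three h3 hr.adj₁ hr.adj₂
  have hyv : ¬ G.Adj y v := not_adj_of_cliqueFree_three h3 hr.adj₁ hr.adj₃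
  have htv : ¬ G.Adj t v := not_adj_of_cliqueFree_three h3 hr.adj₂ hr.adj₃
  have hqr : ¬ G.Adj q r := not_adj_of_cliqueFree_three h3 hy.adj₂ hy.adj₁
  have hqv : ¬ G.Adj q v := by simp [hq.adj_iff, hr.ne₁₃.symm, hr.ne₂₃.symm, hvg]
  have notMem_of_adj : ∀ w, G.Adj v w → w ≠ r → w ∉ ({r, y, t, v, q} : Set V) := by
    rintro w hvw hwr (rfl | rfl | rfl | rfl | rfl)
    exacts [hwr rfl, hyv hvw.symm, htv hvw.symm, hvw.ne rfl, hqv hvw.symm]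
  rintro x (rfl | rfl | rfl | rfl | rfl)
  · rintro (rfl | rfl | rfl | rfl | rfl)
    exacts [hy.ne₁₃ rfl, hy.adj₃.ne rfl, hyt hy.adj₃, hyv hy.adj₃, hy.ne₂₃ rfl]
  · rintro (rfl | rfl | rfl | rfl | rfl)
    exacts [hqr hq.adj₃, hq.ne₁₃ rfl, hq.ne₂₃ rfl, hvg rfl, hq.adj₃.ne rfl]
  · rintro (rfl | rfl | rfl | rfl | rfl)
    exacts [ht.ne₁₃ rfl, hyt ht.adj₃.symm, ht.adj₃.ne rfl, htv ht.adj₃, ht.ne₂₃ rfl]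
  · exact notMem_of_adj _ hv.adj₂ hv.ne₁₂.symm
  · exact notMem_of_adj _ hv.adj₃ hv.ne₁₃.symm

omit [Fintype V] [DecidableRel G.Adj] in
theorem IsSemistrongOutside.exists_notMem_arcColors {U : Set V} (h : IsSemistrongOutside G U C A)
    {X : Finset (Fin k)} (hX : 3 ≤ #X) (hs : s ∉ U) (hz : z ∉ U) (hvs : v ≠ s) (hzs : z ≠ s)
    (hAs : ∀ x, A s x → C s(s, x) ∈ X → x = v ∨ x = z)
    (hAz : ∀ x, A z x → C s(z, x) ∈ X → x = v) :
    ∃ b ∈ X, b ∉ arcColors A C s ∧ ∃ b₁ ∈ X, ∃ b₂ ∈ X, b₁ ∉ arcColors A C z ∧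
      b₂ ∉ arcColors A C z ∧ b ≠ b₁ ∧ b ≠ b₂ ∧ b₁ ≠ b₂ := by
  classical
  have card_s : #(X.filter (· ∈ arcColors A C s)) ≤ 2 := by
    refine (Finset.card_le_card (t := {C s(s, v), C s(s, z)}) fun a ha => ?_).trans
      Finset.card_le_two
    obtain ⟨haX, x, hx, rfl⟩ := Finset.mem_filter.1 ha
    rcases hAs x hx haX with rfl | rfl <;> simp
  have card_z : #(X.filter (· ∈ arcColors A C z)) ≤ 1 := by
    refine (Finset.card_le_card (t := {C s(z, v)}) fun a ha => ?_).trans_eq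
      (Finset.card_singleton _)
    obtain ⟨haX, x, hx, rfl⟩ := Finset.mem_filter.1 ha
    rw [hAz x hx haX, Finset.mem_singleton]
  have hdisj : Disjoint (X.filter (· ∈ arcColors A C s)) (X.filter (· ∈ arcColors A C z)) := by
    refine Finset.disjoint_left.2 fun a has haz => ?_
    obtain ⟨haX, x, hsx, rfl⟩ := Finset.mem_filter.1 has
    obtain ⟨-, w, hzw, heq⟩ := Finset.mem_filter.1 haz
    obtain rfl : w = v := hAz w hzw (heq ▸ haX)
    rcases hAs x hsx haX with rfl | rfl
    · refine h.ne hzw x s (h.adj hzw) (h.adj hsx).symm (Or.inr hs) (by simp [hzs.symm, hvs.symm])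
        (by rw [heq, Sym2.eq_swap])
    · exact h.ne hsx x w (h.adj hsx) (h.adj hzw) (Or.inl hz)
        (by simp [(h.adj hsx).ne', hvs]) heq
  obtain ⟨b, hbX, hbS, b₁, hb₁X, b₂, hb₂X, hb₁Z, hb₂Z, hne⟩ :=
    exists_notMem_and_notMem_pair hX card_s card_z hdisj
  simp only [Finset.mem_filter, not_and] at hbS hb₁Z hb₂Z
  exact ⟨b, hbX, hbS hbX, b₁, hb₁X, b₂, hb₂X, hb₁Z hb₁X, hb₂Z hb₂X, hne⟩

theorem IsFourCycle.hasSemistrongEdgeColoring_of_ne (hconn : G.Connected)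
    (hdeg : ∀ v, G.degree v ≤ 3) (h3 : G.CliqueFree 3) (hsq : IsFourCycle G r y q t v z g s)
    (hv : HasNeighbors G v r v₁ v₂) (hzs : z ≠ s) (hvg : v ≠ g) :
    HasSemistrongEdgeColoring G 8 := by
  have notMem := hsq.notMem_of_mem h3 hv hvg
  obtain ⟨C, A, h, hAs, hAz⟩ := hsq.exists_isSemistrongOutside hconn hdeg h3 hzs
  have card_le (x : V) : #(colorsAt G C x) ≤ 3 := (card_colorsAt_le C x).trans (hdeg x)
  have card_insert_le (a b : Fin 8) {S : Finset (Fin 8)} (hS : #S ≤ 3) :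
      #(insert a (insert b S)) ≤ 5 :=
    (Finset.card_insert_le _ _).trans (Nat.succ_le_succ ((Finset.card_insert_le _ _).trans
      (Nat.succ_le_succ hS)))
  let X := (insert (C s(z, y)) (insert (C s(s, t)) (colorsAt G C g)))ᶜ
  have mem_X : ∀ {a}, a ∈ X → a ≠ C s(z, y) ∧ a ≠ C s(s, t) ∧ a ∉ colorsAt G C g := by
    simp [X]
  have hX : 3 ≤ #X := by
    have := card_insert_le (C s(z, y)) (C s(s, t)) (card_le g)
    rw [Finset.card_compl, Fintype.card_fin]
    omega
  obtain ⟨b, hbX, hbs, b₁, hb₁X, b₂, hb₂X, hb₁z, hb₂z, hbb₁, hbb₂, hb₁b₂⟩ :=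
    h.exists_notMem_arcColors hX (notMem s (by simp)) (notMem z (by simp))
      (ne_of_mem_of_not_mem (by simp) (notMem s (by simp)) : v ≠ s) hzs
      (fun x hx hxX => (hAs x hx).resolve_left fun hxt => (mem_X hxX).2.1 (by rw [hxt]))
      (fun x hx hxX => (hAz x hx).resolve_left fun hxy => (mem_X hxX).1 (by rw [hxy]))
  obtain ⟨b', hb', d, hd, hd₀, hd₁, hd₂⟩ :=
    exists_mem_pair_exists_injective_notMem (n := 5) (by simp)
      (E := insert (C s(g, q)) (insert b (colorsAt G C z)))
      (K := colorsAt G C v₁ ∪ colorsAt G C v₂)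
      (fun b' => insert b' (insert (C s(g, q)) (insert b (colorsAt G C s))))
      (card_insert_le _ _ (card_le z))
      (fun b' => (Finset.card_insert_le _ _).trans
        (Nat.succ_le_succ (card_insert_le _ _ (card_le s))))
      ((Finset.card_union_le _ _).trans (show _ ≤ 3 + 3 from add_le_add (card_le v₁) (card_le v₂)))
      hb₁b₂
  obtain ⟨hb'X, hb'z, hbb'⟩ : b' ∈ X ∧ b' ∉ arcColors A C z ∧ b ≠ b' := by
    rcases Finset.mem_insert.1 hb' with rfl | hb'
    · exact ⟨hb₁X, hb₁z, hbb₁⟩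
    · exact Finset.mem_singleton.1 hb' ▸ ⟨hb₂X, hb₂z, hbb₂⟩
  have hbX := mem_X hbX
  have hb'X := mem_X hb'X
  exact h.extend_fourCycle hsq hv notMem hd (by simp [hbX]) hbs (by simp [hb'X]) hb'z hbb'
    hd₀ hd₁ hd₂

end FourCycle

section Representatives

variable [Fintype α] [DecidableEq α] {E F K : Finset α} {a b : α}

omit [DecidableEq α] in
theorem exists_injective_fin_four_of_notMem (hα : Fintype.card α = 8) (hE : #E ≤ 3) (hF : #F ≤ 3)
    {x : α} (hx : x ∉ F) : ∃ e : Fin 4 → α, Function.Injective e ∧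
      (e 0 ∉ E ∧ e 1 ∉ E ∧ e 2 ∉ F ∧ e 3 ∉ F) ∧ e 2 = x := by
  classical
  obtain ⟨e, he, heS⟩ := exists_injective_forall_notMem ![{x}ᶜ, F, E, E] (by
    have : #({x}ᶜ : Finset α) = 7 := by rw [Finset.card_compl, hα, Finset.card_singleton]
    simp only [Fin.forall_fin_succ, Matrix.cons_val_zero, Matrix.cons_val_succ, hα,
      Fin.val_zero, Fin.val_succ]
    exact ⟨by omega, by omega, by omega, by omega, fun i => i.elim0⟩)
  have he₀ : e 0 = x := by simpa using heS 0
  exact ⟨e ∘ ![2, 3, 0, 1], he.comp (by decide), ⟨heS 2, heS 3, fun h => hx (he₀ ▸ h), heS 1⟩, he₀⟩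

omit [DecidableEq α] in
theorem subset_of_not_exists_injective_fin_three (hα : Fintype.card α = 8) {W : Finset α}
    (hW : #W ≤ 6) (hK : #K ≤ 6)
    (h : ¬ ∃ c : Fin 3 → α, Function.Injective c ∧ c 0 ∉ W ∧ c 1 ∉ W ∧ c 2 ∉ K) :
    W ⊆ K ∧ #W = 6 := by
  classical
  have six_le : 6 ≤ #(W ∩ K) := by
    by_contra! hlt
    refine h ((exists_injective_forall_notMem_of_card_inter ![W, W, K] ?_ ?_).imp
      fun c hc => ⟨hc.1, hc.2 0, hc.2 1, hc.2 2⟩)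
    · simp only [Fin.forall_fin_succ, Matrix.cons_val_zero, Matrix.cons_val_succ, hα]
      exact ⟨by omega, by omega, by omega, fun i => i.elim0⟩
    · change #(W ∩ W ∩ K) + 3 ≤ _
      rw [hα, Finset.inter_self]
      omega
  have hle := Finset.card_le_card (Finset.inter_subset_left (s₁ := W) (s₂ := K))
  exact ⟨Finset.inter_eq_left.1 (Finset.eq_of_subset_of_card_le Finset.inter_subset_left
    (hW.trans six_le)), by omega⟩

/-- The three last colours can be found unless `W`, the set of `a`, `b` and the first four colours,
has six elements and is contained in `K`. If this happens for all choices, then `Fᶜ ⊆ K` and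
`a ∈ F`, so that `F` contains the four elements of `Kᶜ ∪ {a, b}`. -/
theorem exists_injective_fin_four_and_three (hα : Fintype.card α = 8) (hE : #E ≤ 3) (hF : #F ≤ 3)
    (hK : #K ≤ 6) (hb : b ∈ F) :
    ∃ e : Fin 4 → α, Function.Injective e ∧ (e 0 ∉ E ∧ e 1 ∉ E ∧ e 2 ∉ F ∧ e 3 ∉ F) ∧
      ∃ c : Fin 3 → α, Function.Injective c ∧ c 0 ∉ insert a (insert b (Finset.univ.image e)) ∧
        c 1 ∉ insert a (insert b (Finset.univ.image e)) ∧ c 2 ∉ K := by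
  by_contra hno
  have mem_and_ne : ∀ e : Fin 4 → α, Function.Injective e →
      e 0 ∉ E ∧ e 1 ∉ E ∧ e 2 ∉ F ∧ e 3 ∉ F →
      a ∈ K ∧ b ∈ K ∧ a ≠ b ∧ ∀ i, e i ∈ K ∧ e i ≠ a := by
    intro e he heS
    have card_le : #(insert b (Finset.univ.image e)) ≤ 5 :=
      (Finset.card_insert_le _ _).trans (Nat.succ_le_succ Finset.card_image_le)
    obtain ⟨hsub, hcard⟩ := subset_of_not_exists_injective_fin_three hα
      ((Finset.card_insert_le a _).trans (Nat.succ_le_succ card_le)) hK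
      fun hc => hno ⟨e, he, heS, hc⟩
    have ha : a ∉ insert b (Finset.univ.image e) := fun ha => by
      rw [Finset.insert_eq_of_mem ha] at hcard
      omega
    simp only [Finset.insert_subset_iff, Finset.image_subset_iff, Finset.mem_univ, forall_const,
      Finset.mem_insert, Finset.mem_image, true_and, not_or, not_exists] at hsub ha
    exact ⟨hsub.1, hsub.2.1, ha.1, fun i => ⟨hsub.2.2 i, ha.2 i⟩⟩
  have mem_and_ne_of_notMem : ∀ x ∉ F, a ∈ K ∧ b ∈ K ∧ a ≠ b ∧ x ∈ K ∧ x ≠ a := fun x hx => by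
    obtain ⟨e, he, heS, rfl⟩ := exists_injective_fin_four_of_notMem hα hE hF hx
    obtain ⟨haK, hbK, hab, hmem⟩ := mem_and_ne e he heS
    exact ⟨haK, hbK, hab, hmem 2⟩
  obtain ⟨x, hx⟩ := exists_notMem_of_card_lt F (by omega)
  obtain ⟨haK, hbK, hab, -⟩ := mem_and_ne_of_notMem x hx
  have ha : a ∈ F := by_contra fun ha => (mem_and_ne_of_notMem a ha).2.2.2.2 rfl
  have hKF : Kᶜ ⊆ F := fun x hx =>
    by_contra fun hxF => Finset.mem_compl.1 hx (mem_and_ne_of_notMem x hxF).2.2.2.1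
  have hcard : #(insert a (insert b Kᶜ)) = 8 - #K + 2 := by
    rw [Finset.card_insert_of_notMem (by simp [hab, haK]),
      Finset.card_insert_of_notMem (by simp [hbK]), Finset.card_compl, hα]
  have := hcard ▸ Finset.card_le_card (Finset.insert_subset ha (Finset.insert_subset hb hKF))
  omega

end Representatives

/-- The `K_{2,3}` with parts `{y, t}` and `{r, q, p}` in a cubic graph; the third neighbours of
`r`, `q` and `p` are `v`, `g` and `g'`. -/
structure IsK23 (G : SimpleGraph V) (y t r q p v g g' : V) : Prop where
  neighbors_y : HasNeighbors G y r q p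
  neighbors_t : HasNeighbors G t r q p
  neighbors_r : HasNeighbors G r y t v
  neighbors_q : HasNeighbors G q y t g
  neighbors_p : HasNeighbors G p y t g'

section K23

variable {G : SimpleGraph V} {y t r q p v g g' v₁ v₂ : V} {k : ℕ} {C : Sym2 V → Fin k}
  {A : V → V → Prop}

theorem IsK23.rotate (h : IsK23 G y t r q p v g g') : IsK23 G y t q p r g g' v :=
  ⟨h.neighbors_y.rotate, h.neighbors_t.rotate, h.neighbors_q, h.neighbors_p, h.neighbors_r⟩

theorem IsK23.notMem_of_mem (h3 : G.CliqueFree 3) (h : IsK23 G y t r q p v g g')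
    (hv : HasNeighbors G v r v₁ v₂) (hvg : v ≠ g) (hvg' : v ≠ g') :
    ∀ x ∈ ({g, g', v₁, v₂} : Set V), x ∉ ({r, y, t, v, q, p} : Set V) := by
  obtain ⟨hy, ht, hr, hq, hp⟩ := h
  have hqr : ¬ G.Adj q r := not_adj_of_cliqueFree_three h3 hy.adj₂ hy.adj₁
  have hpr : ¬ G.Adj p r := not_adj_of_cliqueFree_three h3 hy.adj₃ hy.adj₁
  have hqp : ¬ G.Adj q p := not_adj_of_cliqueFree_three h3 hy.adj₂ hy.adj₃
  have hyv : ¬ G.Adj y v := not_adj_of_cliqueFree_three h3 hr.adj₁ hr.adj₃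
  have htv : ¬ G.Adj t v := not_adj_of_cliqueFree_three h3 hr.adj₂ hr.adj₃
  have hqv : ¬ G.Adj q v := by simp [hq.adj_iff, hr.ne₁₃.symm, hr.ne₂₃.symm, hvg]
  have hpv : ¬ G.Adj p v := by simp [hp.adj_iff, hr.ne₁₃.symm, hr.ne₂₃.symm, hvg']
  have notMem_of_adj : ∀ w, G.Adj v w → w ≠ r → w ∉ ({r, y, t, v, q, p} : Set V) := by
    rintro w hvw hwr (rfl | rfl | rfl | rfl | rfl | rfl)
    exacts [hwr rfl, hyv hvw.symm, htv hvw.symm, hvw.ne rfl, hqv hvw.symm, hpv hvw.symm]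
  rintro x (rfl | rfl | rfl | rfl)
  · rintro (rfl | rfl | rfl | rfl | rfl | rfl)
    exacts [hqr hq.adj₃, hq.ne₁₃ rfl, hq.ne₂₃ rfl, hvg rfl, hq.adj₃.ne rfl, hqp hq.adj₃]
  · rintro (rfl | rfl | rfl | rfl | rfl | rfl)
    exacts [hpr hp.adj₃, hp.ne₁₃ rfl, hp.ne₂₃ rfl, hvg' rfl, hqp hp.adj₃.symm, hp.adj₃.ne rfl]
  · exact notMem_of_adj _ hv.adj₂ hv.ne₁₂.symm
  · exact notMem_of_adj _ hv.adj₃ hv.ne₁₃.symm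

theorem IsK23.exists_arc_eq (hK : IsK23 G y t r q p v g g') (hv : HasNeighbors G v r v₁ v₂)
    (hU : ∀ x ∈ ({g, g', v₁, v₂} : Set V), x ∉ ({r, y, t, v, q, p} : Set V)) :
    ∀ x ∈ ({r, y, t, v, q, p} : Set V), ∀ w ∈ ({r, y, t, v, q, p} : Set V), G.Adj x w →
      ∃ i, s((![(y, r), (t, r), (v, r), (q, t), (q, y), (p, t), (p, y)] i).1,
        (![(y, r), (t, r), (v, r), (q, t), (q, y), (p, t), (p, y)] i).2) = s(x, w) := by
  obtain ⟨hy, ht, hr, hq, hp⟩ := hK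
  rintro x (rfl | rfl | rfl | rfl | rfl | rfl) w hw hxw
  · rcases hr.adj_iff.1 hxw with rfl | rfl | rfl
    exacts [⟨0, Sym2.eq_swap⟩, ⟨1, Sym2.eq_swap⟩, ⟨2, Sym2.eq_swap⟩]
  · rcases hy.adj_iff.1 hxw with rfl | rfl | rfl
    exacts [⟨0, rfl⟩, ⟨4, Sym2.eq_swap⟩, ⟨6, Sym2.eq_swap⟩]
  · rcases ht.adj_iff.1 hxw with rfl | rfl | rfl
    exacts [⟨1, rfl⟩, ⟨3, Sym2.eq_swap⟩, ⟨5, Sym2.eq_swap⟩]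
  · rcases hv.adj_iff.1 hxw with rfl | rfl | rfl
    exacts [⟨2, rfl⟩, absurd hw (hU w (by simp)), absurd hw (hU w (by simp))]
  · rcases hq.adj_iff.1 hxw with rfl | rfl | rfl
    exacts [⟨4, rfl⟩, ⟨3, rfl⟩, absurd hw (hU w (by simp))]
  · rcases hp.adj_iff.1 hxw with rfl | rfl | rfl
    exacts [⟨6, rfl⟩, ⟨5, rfl⟩, absurd hw (hU w (by simp))]

theorem IsK23.not_adj (hK : IsK23 G y t r q p v g g') (hv : HasNeighbors G v r v₁ v₂)
    (hU : ∀ x ∈ ({g, g', v₁, v₂} : Set V), x ∉ ({r, y, t, v, q, p} : Set V)) :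
    ¬ G.Adj q r ∧ ¬ G.Adj p r ∧ ∀ w ∈ ({y, t, q, p} : Set V), ¬ G.Adj v w := by
  obtain ⟨hy, ht, hr, hq, hp⟩ := hK
  refine ⟨fun hqr => ?_, fun hpr => ?_, fun w hw hvw => ?_⟩
  · rcases hq.adj_iff.1 hqr with rfl | rfl | rfl
    exacts [hr.adj₁.ne rfl, hr.adj₂.ne rfl, hU r (by simp) (by simp)]
  · rcases hp.adj_iff.1 hpr with rfl | rfl | rfl
    exacts [hr.adj₁.ne rfl, hr.adj₂.ne rfl, hU r (by simp) (by simp)]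
  · obtain rfl : w = r := by
      rcases hv.adj_iff.1 hvw with rfl | rfl | rfl
      · rfl
      all_goals exact absurd (by rcases hw with rfl | rfl | rfl | rfl <;> simp) (hU w (by simp))
    rcases hw with rfl | rfl | rfl | rfl
    exacts [hr.adj₁.ne rfl, hr.adj₂.ne rfl, hy.ne₁₂ rfl, hy.ne₁₃ rfl]

variable [Fintype V] [DecidableRel G.Adj]

theorem IsSemistrongOutside.extend_K23 (h : IsSemistrongOutside G {r, y, t, v, q, p} C A)
    (hK : IsK23 G y t r q p v g g') (hv : HasNeighbors G v r v₁ v₂)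
    (hU : ∀ x ∈ ({g, g', v₁, v₂} : Set V), x ∉ ({r, y, t, v, q, p} : Set V))
    {e : Fin 4 → Fin k} (he : Function.Injective e) (he₀ : e 0 ∉ colorsAt G C g)
    (he₁ : e 1 ∉ colorsAt G C g) (he₂ : e 2 ∉ colorsAt G C g') (he₃ : e 3 ∉ colorsAt G C g')
    {c : Fin 3 → Fin k} (hc : Function.Injective c)
    (hc₀ : c 0 ∉ insert (C s(g, q)) (insert (C s(g', p)) (Finset.univ.image e)))
    (hc₁ : c 1 ∉ insert (C s(g, q)) (insert (C s(g', p)) (Finset.univ.image e)))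
    (hc₂ : c 2 ∉ colorsAt G C v₁ ∪ colorsAt G C v₂) : HasSemistrongEdgeColoring G k := by
  obtain ⟨hqr, hpr, not_adj_v⟩ := hK.not_adj hv hU
  have exists_arc_eq := hK.exists_arc_eq hv hU
  obtain ⟨hy, ht, hr, hq, hp⟩ := hK
  simp only [Finset.mem_union, Finset.mem_insert, Finset.mem_image, Finset.mem_univ, true_and,
    not_or, not_exists] at hc₀ hc₁ hc₂
  have notMem_outer {x : V} (hx : x ∈ ({y, t} : Set V)) (a : Fin k) :
      a ∉ outerColors G {r, y, t, v, q, p} C x := by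
    rcases hx with rfl | rfl
    · exact notMem_outerColors_of_subset (by simp) (by simp +contextual [hy.adj_iff]) a
    · exact notMem_outerColors_of_subset (by simp) (by simp +contextual [ht.adj_iff]) a
  have notMem_arc {x : V} (hx : x ∈ ({r, y, t, v, q, p} : Set V)) (a) : a ∉ arcColors A C x :=
    h.notMem_arcColors_of_mem hx a
  have of_colorsAt {x : V} {a : Fin k} (ha : a ∉ colorsAt G C x) :
      a ∉ outerColors G {r, y, t, v, q, p} C x := notMem_outerColors_of_notMem_colorsAt ha
  refine h.extend_of_isFreeColor ![(y, r), (t, r), (v, r), (q, t), (q, y), (p, t), (p, y)]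
    ![c 0, c 1, c 2, e 0, e 1, e 2, e 3] (by simp [Fin.forall_fin_succ])
    exists_arc_eq ?_ ?_
  · intro i
    fin_cases i
    · exact h.isFreeColor (by simp) (by simp) hy hr
        (hq.notMem_outerColors (by simp) (by simp) (by simp) hc₀.1)
        (hp.notMem_outerColors (by simp) (by simp) (by simp) hc₀.2.1)
        (notMem_arc (by simp) _) (notMem_arc (by simp) _)
    · exact h.isFreeColor (by simp) (by simp) ht hr.swap
        (hq.notMem_outerColors (by simp) (by simp) (by simp) hc₁.1)
        (hp.notMem_outerColors (by simp) (by simp) (by simp) hc₁.2.1)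
        (notMem_arc (by simp) _) (notMem_arc (by simp) _)
    · exact h.isFreeColor (by simp) (by simp) hv hr.rotate.rotate (of_colorsAt hc₂.1)
        (of_colorsAt hc₂.2) (notMem_arc (by simp) _) (notMem_arc (by simp) _)
    · exact h.isFreeColor (by simp) (by simp) hq.swap ht.swap (notMem_outer (by simp) _)
        (of_colorsAt he₀) (notMem_arc (by simp) _) (notMem_arc (by simp) _)
    · exact h.isFreeColor (by simp) (by simp) hq hy.swap (notMem_outer (by simp) _)
        (of_colorsAt he₁) (notMem_arc (by simp) _) (notMem_arc (by simp) _)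
    · exact h.isFreeColor (by simp) (by simp) hp.swap ht.rotate.rotate (notMem_outer (by simp) _)
        (of_colorsAt he₂) (notMem_arc (by simp) _) (notMem_arc (by simp) _)
    · exact h.isFreeColor (by simp) (by simp) hp hy.rotate.rotate (notMem_outer (by simp) _)
        (of_colorsAt he₃) (notMem_arc (by simp) _) (notMem_arc (by simp) _)
  · intro i j hij hadj
    fin_cases i <;> fin_cases j <;>
      simp [hc.eq_iff, he.eq_iff, hc₀, hc₁, Ne.symm (hc₀.2.2 _), Ne.symm (hc₁.2.2 _), not_adj_v,
        hqr, hpr, G.adj_comm q v, G.adj_comm p v] at hij hadj ⊢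

theorem IsK23.hasSemistrongEdgeColoring_of_ne (hconn : G.Connected) (hdeg : ∀ v, G.degree v ≤ 3)
    (h3 : G.CliqueFree 3) (hK : IsK23 G y t r q p v g g') (hv : HasNeighbors G v r v₁ v₂)
    (hvg : v ≠ g) (hvg' : v ≠ g') : HasSemistrongEdgeColoring G 8 := by
  obtain ⟨C, A, h, -⟩ := exists_isSemistrongOutside (U := {r, y, t, v, q, p})
    (κ := (G.dist · r)) hdeg
    (fun x hx => exists_adj_dist_lt hconn fun hxr => hx (by simp [hxr]))
    (by simp [hK.neighbors_r.adj₁, hK.neighbors_y.adj₁, hK.neighbors_t.adj₁, hv.adj₁,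
      hK.neighbors_q.adj₁, hK.neighbors_p.adj₁])
  have card_le (x : V) : #(colorsAt G C x) ≤ 3 := (card_colorsAt_le C x).trans (hdeg x)
  obtain ⟨e, he, ⟨he₀, he₁, he₂, he₃⟩, c, hc, hc₀, hc₁, hc₂⟩ :=
    exists_injective_fin_four_and_three (a := C s(g, q)) (Fintype.card_fin 8) (card_le g)
      (card_le g')
      ((Finset.card_union_le _ _).trans (show _ ≤ 3 + 3 from add_le_add (card_le v₁) (card_le v₂)))
      (mem_colorsAt C hK.neighbors_p.adj₃.symm)
  exact h.extend_K23 hK hv (hK.notMem_of_mem h3 hv hvg hvg') he he₀ he₁ he₂ he₃ hc hc₀ hc₁ hc₂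

end K23

namespace HasNeighbors

variable {G : SimpleGraph V} {v a b c : V}

theorem injective (h : HasNeighbors G v a b c) : Function.Injective ![a, b, c] := by
  intro i j hij
  fin_cases i <;> fin_cases j <;>
    simp [h.ne₁₂, h.ne₁₃, h.ne₂₃, h.ne₁₂.symm, h.ne₁₃.symm, h.ne₂₃.symm] at hij ⊢

theorem adj_iff_exists (h : HasNeighbors G v a b c) (w : V) :
    G.Adj v w ↔ ∃ i, ![a, b, c] i = w := by
  simp [h.adj_iff, Fin.exists_fin_succ, eq_comm]

end HasNeighbors

theorem nonempty_iso_completeBipartiteGraph {G : SimpleGraph V} (hconn : G.Connected)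
    {ι κ : Type*} [Nonempty ι] {a : ι → V} {b : κ → V} (ha : Function.Injective a)
    (hb : Function.Injective b) (hab : ∀ i w, G.Adj (a i) w ↔ ∃ j, b j = w)
    (hba : ∀ j w, G.Adj (b j) w ↔ ∃ i, a i = w) :
    Nonempty (G ≃g completeBipartiteGraph ι κ) := by
  have adj_ab (i j) : G.Adj (a i) (b j) := (hab i _).2 ⟨j, rfl⟩
  have hne (i j) : a i ≠ b j := (adj_ab i j).ne
  have hsurj : Function.Surjective (Sum.elim a b) := by
    refine forall_of_connected hconn ⟨Sum.inl (Classical.arbitrary ι), rfl⟩ ?_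
    rintro x y ⟨i | j, rfl⟩ hxy
    · obtain ⟨j, rfl⟩ := (hab i y).1 hxy
      exact ⟨Sum.inr j, rfl⟩
    · obtain ⟨i, rfl⟩ := (hba j y).1 hxy
      exact ⟨Sum.inl i, rfl⟩
  refine ⟨RelIso.symm ⟨Equiv.ofBijective _ ⟨ha.sumElim hb hne, hsurj⟩, ?_⟩⟩
  change ∀ x y, G.Adj (Sum.elim a b x) (Sum.elim a b y) ↔ _
  rintro (i | j) (i' | j')
  · simp [hab, (hne _ _).symm]
  · simp [adj_ab]
  · simp [(adj_ab _ _).symm]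
  · simp [hba, hne]

section FourCycle

variable {G : SimpleGraph V} {y t r q p v g g' z s : V}

theorem IsK23.nonempty_iso_K33 (hconn : G.Connected) (hK : IsK23 G y t r q p v v v)
    (hv : HasNeighbors G v r q p) :
    Nonempty (G ≃g completeBipartiteGraph (Fin 3) (Fin 3)) := by
  obtain ⟨hy, ht, hr, hq, hp⟩ := hK
  refine nonempty_iso_completeBipartiteGraph (a := ![y, t, v]) (b := ![r, q, p]) hconn
    hr.injective hy.injective ?_ ?_
  · simpa only [Fin.forall_fin_succ] using
      ⟨hy.adj_iff_exists, ht.adj_iff_exists, hv.adj_iff_exists, fun i => i.elim0⟩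
  · simpa only [Fin.forall_fin_succ] using
      ⟨hr.adj_iff_exists, hq.adj_iff_exists, hp.adj_iff_exists, fun i => i.elim0⟩

variable [Fintype V] [DecidableRel G.Adj]

theorem IsK23.hasSemistrongEdgeColoring (hconn : G.Connected) (h3 : G.CliqueFree 3)
    (hdeg : ∀ v, G.degree v = 3) (hK33 : ¬ Nonempty (G ≃g completeBipartiteGraph (Fin 3) (Fin 3)))
    (hK : IsK23 G y t r q p v g g') : HasSemistrongEdgeColoring G 8 := by
  have of_ne : ∀ {r q p v g g'}, IsK23 G y t r q p v g g' → v ≠ g → v ≠ g' →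
      HasSemistrongEdgeColoring G 8 := by
    intro r q p v g g' hK hvg hvg'
    obtain ⟨v₁, v₂, hv⟩ := HasNeighbors.exists_of_adj (hdeg v) hK.neighbors_r.adj₃.symm
    exact hK.hasSemistrongEdgeColoring_of_ne hconn (fun v => (hdeg v).le) h3 hv hvg hvg'
  by_cases hvg : v = g
  · by_cases hvg' : v = g'
    · subst hvg hvg'
      obtain ⟨w, hw⟩ := HasNeighbors.exists_of_adj_of_adj (hdeg v) hK.neighbors_r.adj₃.symm
        hK.neighbors_q.adj₃.symm hK.neighbors_y.ne₁₂
      have hwp : p = w := by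
        simpa [hK.neighbors_y.ne₁₃.symm, hK.neighbors_y.ne₂₃.symm] using
          hw.adj_iff.1 hK.neighbors_p.adj₃.symm
      exact absurd (hK.nonempty_iso_K33 hconn (hwp ▸ hw)) hK33
    · exact of_ne hK.rotate.rotate (Ne.symm hvg') (hvg ▸ Ne.symm hvg')
  · by_cases hvg' : v = g'
    · exact of_ne hK.rotate (hvg' ▸ Ne.symm hvg) (Ne.symm hvg)
    · exact of_ne hK hvg hvg'

theorem IsFourCycle.hasSemistrongEdgeColoring (hconn : G.Connected) (h3 : G.CliqueFree 3)
    (hdeg : ∀ v, G.degree v = 3) (hK33 : ¬ Nonempty (G ≃g completeBipartiteGraph (Fin 3) (Fin 3)))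
    (hsq : IsFourCycle G r y q t v z g s) : HasSemistrongEdgeColoring G 8 := by
  obtain ⟨hr, hy, hq, ht⟩ := hsq
  by_cases hzs : z = s
  · subst hzs
    obtain ⟨g', hz⟩ := HasNeighbors.exists_of_adj_of_adj (hdeg z) hy.adj₃.symm ht.adj₃.symm hr.ne₁₂
    exact IsK23.hasSemistrongEdgeColoring hconn h3 hdeg hK33 ⟨hy, ht, hr, hq, hz⟩
  by_cases hvg : v = g
  · subst hvg
    obtain ⟨g', hv⟩ := HasNeighbors.exists_of_adj_of_adj (hdeg v) hr.adj₃.symm hq.adj₃.symm hy.ne₁₂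
    exact IsK23.hasSemistrongEdgeColoring hconn h3 hdeg hK33 ⟨hr, hq, hy, ht, hv⟩
  obtain ⟨v₁, v₂, hv⟩ := HasNeighbors.exists_of_adj (hdeg v) hr.adj₃.symm
  exact hasSemistrongEdgeColoring_of_ne hconn (fun v => (hdeg v).le) h3 ⟨hr, hy, hq, ht⟩ hv hzs hvg

theorem hasSemistrongEdgeColoring_of_adj_of_adj (hconn : G.Connected) (h3 : G.CliqueFree 3)
    (hdeg : ∀ v, G.degree v = 3) (hK33 : ¬ Nonempty (G ≃g completeBipartiteGraph (Fin 3) (Fin 3)))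
    (hry : G.Adj r y) (hyq : G.Adj y q) (hqt : G.Adj q t) (htr : G.Adj t r) (hrq : r ≠ q)
    (hyt : y ≠ t) : HasSemistrongEdgeColoring G 8 := by
  obtain ⟨v, hr⟩ := HasNeighbors.exists_of_adj_of_adj (hdeg r) hry htr.symm hyt
  obtain ⟨z, hy⟩ := HasNeighbors.exists_of_adj_of_adj (hdeg y) hry.symm hyq hrq
  obtain ⟨g, hq⟩ := HasNeighbors.exists_of_adj_of_adj (hdeg q) hyq.symm hqt hyt
  obtain ⟨s, ht⟩ := HasNeighbors.exists_of_adj_of_adj (hdeg t) htr hqt.symm hrq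
  exact IsFourCycle.hasSemistrongEdgeColoring hconn h3 hdeg hK33 ⟨hr, hy, hq, ht⟩

end FourCycle

/-- Distinct vertices have at most one common neighbour: `G` has no cycle of length four. -/
def FourCycleFree (G : SimpleGraph V) : Prop :=
  ∀ ⦃a b⦄, a ≠ b → ∀ ⦃x y⦄, G.Adj a x → G.Adj b x → G.Adj a y → G.Adj b y → x = y

theorem notMem_closedNeighborSet_of_adj {G : SimpleGraph V} (h3 : G.CliqueFree 3) {r x y : V}
    (hrx : G.Adj r x) (hxy : G.Adj x y) (hyr : y ≠ r) : y ∉ insert r (G.neighborSet r) := by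
  rintro (rfl | hry)
  exacts [hyr rfl, not_adj_of_cliqueFree_three h3 hrx hry hxy]

theorem colorsAt_congr [DecidableEq α] [Fintype V] {G : SimpleGraph V} [DecidableRel G.Adj]
    {C D : Sym2 V → α} {g : V} (h : ∀ x, G.Adj g x → C s(g, x) = D s(g, x)) :
    colorsAt G C g = colorsAt G D g :=
  Finset.image_congr fun x hx => h x (by simpa using hx)

section Star

variable {G : SimpleGraph V} [Fintype V] [DecidableRel G.Adj]

theorem IsSemistrongOutside.extend_closedNeighborSet {k : ℕ} {C : Sym2 V → Fin k}
    {A : V → V → Prop} {r y t v y₁ y₂ t₁ t₂ v₁ v₂ : V}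
    (h : IsSemistrongOutside G (insert r (G.neighborSet r)) C A) (h3 : G.CliqueFree 3)
    (hr : HasNeighbors G r y t v) (hy : HasNeighbors G y r y₁ y₂) (ht : HasNeighbors G t r t₁ t₂)
    (hv : HasNeighbors G v r v₁ v₂) {c : Fin 3 → Fin k} (hc : Function.Injective c)
    (h₀ : c 0 ∉ colorsAt G C y₁ ∪ colorsAt G C y₂) (h₁ : c 1 ∉ colorsAt G C t₁ ∪ colorsAt G C t₂)
    (h₂ : c 2 ∉ colorsAt G C v₁ ∪ colorsAt G C v₂) : HasSemistrongEdgeColoring G k := by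
  simp only [Finset.mem_union, not_or] at h₀ h₁ h₂
  have isFreeColor : ∀ {x p q a b e}, HasNeighbors G x r p q → HasNeighbors G r x a b →
      e ∉ colorsAt G C p ∧ e ∉ colorsAt G C q →
      IsFreeColor G (insert r (G.neighborSet r)) C A x r e := fun hx hr he =>
    h.isFreeColor (Or.inr hr.adj₁) (Or.inl rfl) hx hr
      (notMem_outerColors_of_notMem_colorsAt he.1) (notMem_outerColors_of_notMem_colorsAt he.2)
      (h.notMem_arcColors_of_mem (Or.inr hr.adj₂) _) (h.notMem_arcColors_of_mem (Or.inr hr.adj₃) _)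
  refine h.extend_of_isFreeColor ![(y, r), (t, r), (v, r)] c
    (by simp [Fin.forall_fin_succ, hr.adj₁, hr.adj₂, hr.adj₃]) ?_ ?_ fun i j hij _ => hc.ne hij
  · have exists_index : ∀ x, G.Adj r x →
        ∃ i, s((![(y, r), (t, r), (v, r)] i).1, (![(y, r), (t, r), (v, r)] i).2) = s(x, r) := by
      intro x hx
      rcases hr.adj_iff.1 hx with rfl | rfl | rfl
      exacts [⟨0, rfl⟩, ⟨1, rfl⟩, ⟨2, rfl⟩]
    rintro x (rfl | hx) z (rfl | hz) hxz
    · exact absurd rfl hxz.ne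
    · rw [Sym2.eq_swap]; exact exists_index z hz
    · exact exists_index x hx
    · exact absurd hxz (not_adj_of_cliqueFree_three h3 hx hz)
  · intro i
    fin_cases i
    exacts [isFreeColor hy hr h₀, isFreeColor ht hr.swap h₁, isFreeColor hv hr.rotate.rotate h₂]

theorem hasSemistrongEdgeColoring_of_isSemistrongOutside_update [DecidableEq V]
    (h3 : G.CliqueFree 3) (h4 : FourCycleFree G) (hdeg : ∀ v, G.degree v = 3) {C : Sym2 V → Fin 8}
    {a : Fin 8} {A : V → V → Prop} {r t y v q s : V} (hr : HasNeighbors G r t y v)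
    (ht : HasNeighbors G t r q s) (ha : a ≠ C s(s, t))
    (h : IsSemistrongOutside G (insert r (G.neighborSet r)) C A)
    (h' : IsSemistrongOutside G (insert r (G.neighborSet r)) (Function.update C s(s, t) a) A) :
    HasSemistrongEdgeColoring G 8 := by
  obtain ⟨y₁, y₂, hy⟩ := HasNeighbors.exists_of_adj (hdeg y) hr.adj₂.symm
  obtain ⟨v₁, v₂, hv⟩ := HasNeighbors.exists_of_adj (hdeg v) hr.adj₃.symm
  obtain ⟨s₁, s₂, hs⟩ := HasNeighbors.exists_of_adj (hdeg s) ht.adj₃.symm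
  have card_le (g : V) : #(colorsAt G C g) ≤ 3 := (card_colorsAt_le C g).trans (hdeg g).le
  have card_union_le (g g' : V) : #(colorsAt G C g ∪ colorsAt G C g') ≤ 6 :=
    (Finset.card_union_le _ _).trans (add_le_add (card_le g) (card_le g'))
  obtain ⟨β, hβ, c, hc, hc₀, hc₁, hc₂⟩ := exists_mem_pair_exists_injective_notMem (n := 5)
    (E := {C s(s, s₁), C s(s, s₂)} ∪ colorsAt G C q) (K := colorsAt G C v₁ ∪ colorsAt G C v₂)
    (Fintype.card_fin 8) (fun _ => colorsAt G C y₁ ∪ colorsAt G C y₂)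
    ((Finset.card_union_le _ _).trans (add_le_add Finset.card_le_two (card_le q)))
    (fun _ => card_union_le y₁ y₂) (card_union_le v₁ v₂) ha
  obtain ⟨D, hD, hDβ, hDC⟩ : ∃ D, IsSemistrongOutside G (insert r (G.neighborSet r)) D A ∧
      D s(s, t) = β ∧ ∀ e, e ≠ s(s, t) → D e = C e := by
    rcases Finset.mem_insert.1 hβ with rfl | hβ
    · exact ⟨_, h', Function.update_self _ _ _, fun e he => Function.update_of_ne he _ _⟩
    · exact ⟨C, h, (Finset.mem_singleton.1 hβ).symm, fun _ _ => rfl⟩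
  have colorsAt_eq : ∀ {g}, g ≠ s → g ≠ t → colorsAt G D g = colorsAt G C g := fun hs ht =>
    colorsAt_congr fun x _ => hDC _ (by simp [hs, ht])
  have colorsAt_eq_of_adj : ∀ {x g}, G.Adj r x → x ≠ t → G.Adj x g →
      colorsAt G D g = colorsAt G C g := by
    refine fun hrx hxt hxg => colorsAt_eq ?_ ?_
    · rintro rfl
      exact hxt (h4 ht.ne₁₃ hrx hxg.symm hr.adj₁ ht.adj₃.symm)
    · rintro rfl
      exact not_adj_of_cliqueFree_three h3 hrx hr.adj₁ hxg
  refine hD.extend_closedNeighborSet h3 hr ht hy hv hc ?_ ?_ ?_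
  · have ne_st : ∀ {x}, x ≠ t → s(s, x) ≠ s(s, t) := fun hx => by
      simp [hx, ht.adj₃.ne']
    rw [hs.colorsAt_eq, hDβ, hDC _ (ne_st hs.ne₁₂.symm), hDC _ (ne_st hs.ne₁₃.symm),
      colorsAt_eq ht.ne₂₃ ht.adj₂.ne']
    simp only [Finset.mem_insert, Finset.mem_union, Finset.mem_singleton, not_or] at hc₀ ⊢
    exact ⟨hc₀.2.2, hc₀.1, hc₀.2.1⟩
  · rwa [colorsAt_eq_of_adj hr.adj₂ hr.ne₁₂.symm hy.adj₂,
      colorsAt_eq_of_adj hr.adj₂ hr.ne₁₂.symm hy.adj₃]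
  · rwa [colorsAt_eq_of_adj hr.adj₃ hr.ne₁₃.symm hv.adj₂,
      colorsAt_eq_of_adj hr.adj₃ hr.ne₁₃.symm hv.adj₃]

end Star

/-- A cycle through `t` with `t` removed: a walk between two distinct neighbours of `t` which avoids
`t`. -/
structure IsDetour (G : SimpleGraph V) (t : V) {a b : V} (p : G.Walk a b) : Prop where
  adj_start : G.Adj t a
  adj_end : G.Adj t b
  ne : a ≠ b
  notMem_support : t ∉ p.support

/-- A detour that is no longer than any other detour of the graph; it closes up to a shortest cycle
of `G`. -/
structure IsShortestDetour (G : SimpleGraph V) (t : V) {a b : V} (p : G.Walk a b) : Prop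
    extends IsDetour G t p where
  length_le : ∀ {u c d : V} {q : G.Walk c d}, IsDetour G u q → p.length ≤ q.length

section Detour

variable {G : SimpleGraph V} {a b t s : V} {p : G.Walk a b}

theorem IsDetour.three_le_length (h : IsDetour G t p) (h3 : G.CliqueFree 3) (h4 : FourCycleFree G) :
    3 ≤ p.length := by
  obtain ⟨hta, htb, hab, htp⟩ := h
  match p with
  | .nil => exact absurd rfl hab
  | .cons hab .nil => exact absurd hab (not_adj_of_cliqueFree_three h3 hta htb)
  | .cons hac (.cons hcb .nil) =>
    refine absurd (h4 hab hta.symm htb.symm hac hcb.symm) fun htc => htp ?_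
    simp [htc]
  | .cons _ (.cons _ (.cons _ _)) => simp only [Walk.length_cons]; omega

theorem IsDetour.getVert_ne (h : IsDetour G t p) (i : ℕ) : p.getVert i ≠ t := by
  rintro rfl
  exact h.notMem_support (p.getVert_mem_support i)

theorem exists_isDetour_of_isCycle {c : G.Walk t t} (hc : c.IsCycle) :
    ∃ (a b : V) (p : G.Walk a b), IsDetour G t p := by
  match c with
  | .cons hta q =>
    obtain ⟨hq, hedge⟩ := (Walk.cons_isCycle_iff q hta).1 hc
    have hnil : ¬ q.Nil := Walk.not_nil_of_ne hta.ne'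
    rw [← Walk.concat_dropLast (Walk.adj_penultimate hnil), Walk.concat_isPath_iff] at hq
    refine ⟨_, _, q.dropLast, hta, (Walk.adj_penultimate hnil).symm, fun ha => hedge ?_, hq.2⟩
    have hmem := Walk.mk_penultimate_end_mem_edges hnil
    rwa [← ha, Sym2.eq_swap] at hmem

theorem not_isAcyclic_of_degree_eq_three [Fintype V] [DecidableRel G.Adj] (hconn : G.Connected)
    (hdeg : ∀ v, G.degree v = 3) : ¬ G.IsAcyclic := by
  intro hacyc
  obtain ⟨r⟩ := hconn.nonempty
  obtain ⟨x, hrx⟩ := G.degree_pos_iff_exists_adj r |>.1 (by simp [hdeg r])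
  have : Nontrivial V := ⟨r, x, hrx.ne⟩
  obtain ⟨v, hv⟩ := IsTree.exists_vert_degree_one_of_nontrivial ⟨hconn, hacyc⟩
  simp [hdeg v] at hv

theorem exists_isShortestDetour (h : ¬ G.IsAcyclic) :
    ∃ (t a b : V) (p : G.Walk a b), IsShortestDetour G t p := by
  classical
  have hex : ∃ L t a b, ∃ p : G.Walk a b, IsDetour G t p ∧ p.length = L := by
    simp only [IsAcyclic, not_forall, not_not] at h
    obtain ⟨t, c, hc⟩ := h
    obtain ⟨a, b, p, hp⟩ := exists_isDetour_of_isCycle hc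
    exact ⟨_, t, a, b, p, hp, rfl⟩
  obtain ⟨t, a, b, p, hp, hlen⟩ := Nat.find_spec hex
  exact ⟨t, a, b, p, hp, fun {u c d q} hq => hlen ▸ Nat.find_min' hex ⟨u, c, d, q, hq, rfl⟩⟩

namespace IsShortestDetour

variable (hp : IsShortestDetour G t p) (hts : G.Adj t s) (hsa : s ≠ a) (hsb : s ≠ b)

include hp hts hsa hsb

/-- The walk `w` turns each of the two parts of `p` into a new detour at `t`, ending at `s`. -/
theorem length_le_of_walk {i : ℕ} (hi : i ≤ p.length) (w : G.Walk (p.getVert i) s)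
    (hw : t ∉ w.support) : p.length ≤ i + w.length ∧ i ≤ w.length := by
  have h₁ : IsDetour G t ((p.take i).append w) := by
    refine ⟨hp.adj_start, hts, hsa.symm, fun ht => ?_⟩
    rcases (Walk.mem_support_append_iff _ _).1 ht with ht | ht
    exacts [hp.notMem_support ((p.isSubwalk_take i).support_subset ht), hw ht]
  have h₂ : IsDetour G t (w.reverse.append (p.drop i)) := by
    refine ⟨hts, hp.adj_end, hsb, fun ht => ?_⟩
    rcases (Walk.mem_support_append_iff _ _).1 ht with ht | ht
    exacts [hw (by simpa using ht), hp.notMem_support ((p.isSubwalk_drop i).support_subset ht)]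
  have l₁ := hp.length_le h₁
  have l₂ := hp.length_le h₂
  simp only [Walk.length_append, Walk.length_reverse, Walk.take_length, Walk.drop_length] at l₁ l₂
  omega

theorem not_adj_getVert (h3 : G.CliqueFree 3) (h4 : FourCycleFree G) {i : ℕ} (hi : i ≤ p.length) :
    ¬ G.Adj s (p.getVert i) := by
  intro hs
  have hlen := hp.three_le_length h3 h4
  have hw := hp.length_le_of_walk hts hsa hsb hi hs.symm.toWalk
    (by simp [hts.ne, (hp.getVert_ne i).symm])
  simp only [Walk.length_cons, Walk.length_nil] at hw
  omega

theorem getVert_ne_of_adj (h3 : G.CliqueFree 3) (h4 : FourCycleFree G) {i : ℕ}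
    (hi : i ≤ p.length) : p.getVert i ≠ s := by
  rintro rfl
  have hlen := hp.three_le_length h3 h4
  have hw := hp.length_le_of_walk hts hsa hsb hi .nil (by simp [hts.ne])
  simp only [Walk.length_nil] at hw
  omega

theorem length_le_add_two {z : V} (hsz : G.Adj s z) (hzt : z ≠ t) {i : ℕ} (hi : i ≤ p.length)
    (hz : G.Adj z (p.getVert i)) : p.length ≤ i + 2 ∧ i ≤ 2 :=
  hp.length_le_of_walk hts hsa hsb hi (.cons hz.symm (.cons hsz.symm .nil))
    (by simp [hts.ne, (hp.getVert_ne i).symm, hzt.symm])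

end IsShortestDetour

end Detour

/-- A rank function on the vertices in which a prescribed detour comes first, followed by its base
point `t`. -/
structure IsDetourRank (G : SimpleGraph V) (t : V) {a b : V} (p : G.Walk a b) (κ : V → ℕ) :
    Prop where
  base : κ t = p.length + 1
  eq_of_eq : ∀ {x}, κ x = κ t → x = t
  le : ∀ {i}, i ≤ p.length → κ (p.getVert i) ≤ i
  getVert_eq : ∀ {x}, κ x ≤ p.length → p.getVert (κ x) = x
  exists_adj_lt : ∀ {x}, x ≠ a → ∃ y, G.Adj x y ∧ κ y < κ x

section Detour

variable {G : SimpleGraph V} {a b t s : V} {p : G.Walk a b} {κ : V → ℕ}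

theorem IsDetour.exists_isDetourRank (h : IsDetour G t p) (hconn : G.Connected) :
    ∃ κ, IsDetourRank G t p κ := by
  let w : G.Walk a t := p.concat h.adj_end.symm
  have length_w : w.length = p.length + 1 := p.length_concat _
  have getVert_w {i : ℕ} (hi : i ≤ p.length) : w.getVert i = p.getVert i := by
    simp [w, Walk.concat_eq_append, Walk.getVert_append', hi]
  have getVert_w_last : w.getVert (p.length + 1) = t := length_w ▸ w.getVert_length
  obtain ⟨κ, κ_le, getVert_κ, exists_adj⟩ := exists_rank hconn w.getVert (p.length + 1)
    fun i hi => ⟨i, le_rfl, (w.adj_getVert_succ (by omega)).symm⟩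
  have κ_t : κ t = p.length + 1 := by
    have hle : κ t ≤ p.length + 1 := by simpa [getVert_w_last] using κ_le (p.length + 1) le_rfl
    refine hle.eq_of_not_lt fun hlt => h.getVert_ne (κ t) ?_
    rw [← getVert_w (by omega), getVert_κ t hle]
  refine ⟨κ, κ_t, fun {x} hx => ?_, fun {i} hi => ?_, fun {x} hx => ?_, fun {x} hx => ?_⟩
  · rw [← getVert_κ x (by omega), hx, κ_t, getVert_w_last]
  · exact getVert_w hi ▸ κ_le i (by omega)
  · rw [← getVert_w hx, getVert_κ x (by omega)]
  · exact exists_adj x (by rwa [w.getVert_zero])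

namespace IsShortestDetour

variable (hp : IsShortestDetour G t p) (h3 : G.CliqueFree 3) (h4 : FourCycleFree G)
  (ht : HasNeighbors G t a b s)
  (hbad : p.length = 3 → ∀ z, G.Adj s z → z ≠ t → ¬ G.Adj z (p.getVert 2))

include hp h3 h4 ht

section

include hbad

theorem length_eq_add_two {h : V} (hsh : G.Adj s h) (hht : h ≠ t) {i : ℕ} (hi : i ≤ p.length)
    (hadj : G.Adj h (p.getVert i)) : p.length = i + 2 ∧ i ≤ 2 := by
  obtain ⟨hle, hi₂⟩ := hp.length_le_add_two ht.adj₃ ht.ne₁₃.symm ht.ne₂₃.symm hsh hht hi hadj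
  have three_le := hp.three_le_length h3 h4
  refine ⟨by_contra fun hne => ?_, hi₂⟩
  obtain rfl : i = 2 := by omega
  exact hbad (by omega) h hsh hht hadj

theorem adj_getVert_of_isLive (hκ : IsDetourRank G t p κ) {h : V} (hh : IsLive G κ s t h) :
    p.length ≤ 4 ∧ G.Adj h (p.getVert (p.length - 2)) := by
  obtain ⟨hsh, hht, y, hhy, hy⟩ := hh
  have hy' : κ y ≤ p.length := by have := hκ.base; omega
  obtain ⟨hlen, hle⟩ := hp.length_eq_add_two h3 h4 ht hbad hsh hht hy'
    ((hκ.getVert_eq hy').symm ▸ hhy)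
  refine ⟨by omega, ?_⟩
  rwa [show p.length - 2 = κ y by omega, hκ.getVert_eq hy']

/-- A detour of length four passes the vertex `p 2` two steps from each end; were `z` adjacent to
`p 0`, then `p 0, p 1, p 2, h, z` would be a cycle of length five. -/
theorem not_adj_getVert_of_adj {h z : V} (hsh : G.Adj s h) (hht : h ≠ t) (hlen : p.length ≤ 4)
    (hadj : G.Adj h (p.getVert (p.length - 2))) (hhz : G.Adj h z)
    (hz : z ≠ p.getVert (p.length - 2)) {j : ℕ} (hj : j ≤ p.length - 2) :
    ¬ G.Adj z (p.getVert j) := by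
  intro hzj
  have three_le := hp.three_le_length h3 h4
  have not_adj_s {i : ℕ} (hi : i ≤ p.length) : ¬ G.Adj s (p.getVert i) :=
    hp.not_adj_getVert ht.adj₃ ht.ne₁₃.symm ht.ne₂₃.symm h3 h4 hi
  have adj_succ {i : ℕ} (hi : i < p.length) := p.adj_getVert_succ hi
  have h_ne {i : ℕ} (hi : i ≤ p.length) : h ≠ p.getVert i := fun he => not_adj_s hi (he ▸ hsh)
  rcases eq_or_ne z s with rfl | hzs
  · exact not_adj_s (by omega) hzj
  obtain rfl | hj' | ⟨rfl, hlen⟩ : j = p.length - 2 ∨ j + 1 = p.length - 2 ∨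
      j = 0 ∧ p.length = 4 := by omega
  · exact not_adj_of_cliqueFree_three h3 hhz hadj hzj
  · have hjp := adj_succ (show j < p.length by omega)
    rw [hj'] at hjp
    exact h_ne (by omega) (h4 hz hhz.symm hadj.symm hzj hjp.symm)
  · rw [hlen] at hadj
    rw [p.getVert_zero] at hzj
    have length_eq {i : ℕ} (hi : i ≤ p.length) (hhi : G.Adj h (p.getVert i)) : p.length = i + 2 :=
      (hp.length_eq_add_two h3 h4 ht hbad hsh hht hi hhi).1
    have hap : G.Adj a (p.getVert 1) := by simpa using adj_succ (i := 0) (by omega)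
    have hq : IsDetour G a (.cons (adj_succ (i := 1) (by omega)) (.cons hadj.symm hhz.toWalk)) := by
      refine ⟨hap, hzj.symm, fun he => ?_, ?_⟩
      · have := length_eq (i := 1) (by omega) (he ▸ hhz)
        omega
      · have hap₂ : a ≠ p.getVert 2 := fun he => by
          have := length_eq (i := 0) (by omega) (by rwa [p.getVert_zero, he])
          omega
        have hah : a ≠ h := by simpa using (h_ne (i := 0) (by omega)).symm
        simp [hap.ne, hap₂, hah, hzj.ne']
    have := hp.length_le hq
    simp only [Walk.length_cons, Walk.length_nil] at this
    omega

theorem live_unique (hκ : IsDetourRank G t p κ) {h h' : V} (hh : IsLive G κ s t h)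
    (hh' : IsLive G κ s t h') : h = h' :=
  h4 (hp.getVert_ne_of_adj ht.adj₃ ht.ne₁₃.symm ht.ne₂₃.symm h3 h4 (Nat.sub_le _ 2)).symm hh.1
    (hp.adj_getVert_of_isLive h3 h4 ht hbad hκ hh).2.symm hh'.1
    (hp.adj_getVert_of_isLive h3 h4 ht hbad hκ hh').2.symm

theorem exists_lt_of_isLive (hκ : IsDetourRank G t p κ) {h : V} (hh : IsLive G κ s t h) :
    ∃ x, G.Adj h x ∧ ∀ z, G.Adj h z → z ≠ x →
      z ∉ insert a (G.neighborSet a) ∧ ∀ y, G.Adj z y → κ x < κ y := by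
  have three_le := hp.three_le_length h3 h4
  obtain ⟨hlen, hadj⟩ := hp.adj_getVert_of_isLive h3 h4 ht hbad hκ hh
  refine ⟨_, hadj, fun z hhz hz => ?_⟩
  have not_adj {j : ℕ} (hj : j ≤ p.length - 2) : ¬ G.Adj z (p.getVert j) :=
    hp.not_adj_getVert_of_adj h3 h4 ht hbad hh.1 hh.2.1 hlen hadj hhz hz hj
  refine ⟨?_, fun y hzy => ?_⟩
  · rintro (rfl | haz)
    · have := hp.length_eq_add_two h3 h4 ht hbad hh.1 hh.2.1 (Nat.zero_le _) (by simpa using hhz)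
      omega
    · exact not_adj (Nat.zero_le _) (by simpa using haz.symm)
  · by_contra! hle
    have hy : κ y ≤ p.length - 2 := hle.trans (hκ.le (Nat.sub_le _ 2))
    exact not_adj hy (by rwa [hκ.getVert_eq (by omega)])

theorem isFlexibleEdge (hκ : IsDetourRank G t p κ) :
    IsFlexibleEdge G κ (insert a (G.neighborSet a)) s t b where
  t_mem := Or.inr ht.adj₁.symm
  s_notMem := notMem_closedNeighborSet_of_adj h3 ht.adj₁.symm ht.adj₃ ht.ne₁₃.symm
  q_notMem := notMem_closedNeighborSet_of_adj h3 ht.adj₁.symm ht.adj₂ ht.ne₁₂.symm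
  adj_st := ht.adj₃.symm
  adj_qt := ht.adj₂.symm
  of_adj_t w hw := (ht.adj_iff.1 hw).imp_left Or.inl
  eq_or_lt_of_adj_s y hy := by
    refine or_iff_not_imp_right.2 fun hle => hκ.eq_of_eq (le_antisymm (not_lt.1 hle) ?_)
    rw [hκ.base, Nat.succ_le_iff]
    by_contra! hy'
    exact hp.not_adj_getVert ht.adj₃ ht.ne₁₃.symm ht.ne₂₃.symm h3 h4 hy'
      ((hκ.getVert_eq hy').symm ▸ hy)
  eq_of_κ_eq y hy := hκ.eq_of_eq hy
  exists_adj_q_lt := by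
    have three_le := hp.three_le_length h3 h4
    refine ⟨p.penultimate, (Walk.adj_penultimate (Walk.not_nil_of_ne hp.ne)).symm, ?_⟩
    have hle : κ p.penultimate ≤ p.length - 1 := hκ.le (Nat.sub_le _ 1)
    rw [hκ.base]
    omega
  not_adj_t w hsw hwt := not_adj_of_cliqueFree_three h3 ht.adj₃ hwt.symm hsw
  notMem_of_adj_s h hsh hht := by
    rintro (rfl | hah)
    · exact not_adj_of_cliqueFree_three h3 ht.adj₃ ht.adj₁ hsh
    · exact hht (h4 ht.ne₁₃ hah hsh ht.adj₁.symm ht.adj₃.symm)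
  live_unique h h' hh hh' := hp.live_unique h3 h4 ht hbad hκ hh hh'
  exists_lt_of_live h hh := hp.exists_lt_of_isLive h3 h4 ht hbad hκ hh

theorem hasSemistrongEdgeColoring [Fintype V] [DecidableRel G.Adj] (hconn : G.Connected)
    (hdeg : ∀ v, G.degree v = 3) : HasSemistrongEdgeColoring G 8 := by
  classical
  obtain ⟨κ, hκ⟩ := hp.exists_isDetourRank hconn
  obtain ⟨C, α, A, hα, h, h'⟩ := (hp.isFlexibleEdge h3 h4 ht hbad
    hκ).exists_isSemistrongOutside_update (fun v => (hdeg v).le)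
    (fun v hv => hκ.exists_adj_lt fun ha => hv (Or.inl ha)) (by
      rintro x (rfl | hx)
      exacts [Or.inr ⟨t, Or.inr ht.adj₁.symm, ht.adj₁.symm⟩, Or.inr ⟨a, Or.inl rfl, hx.symm⟩])
  obtain ⟨y, v, ha⟩ := HasNeighbors.exists_of_adj (hdeg a) ht.adj₁.symm
  exact hasSemistrongEdgeColoring_of_isSemistrongOutside_update h3 h4 hdeg ha ht hα h h'

end

end IsShortestDetour

end Detour

theorem SeesOnce.comap {W : Type*} {G : SimpleGraph V} {H : SimpleGraph W} {C : Sym2 W → α}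
    (f : Copy G H) {x y : V} (h : SeesOnce H C (f x) (f y)) :
    SeesOnce G (fun e => C (e.map f)) x y := fun z w hxz hzw hne =>
  h (f z) (f w) (f.toHom.map_adj hxz) (f.toHom.map_adj hzw) fun heq =>
    hne (Sym2.map.injective f.injective heq)

theorem HasSemistrongEdgeColoring.mono {G : SimpleGraph V} {k l : ℕ} (hkl : k ≤ l)
    (h : HasSemistrongEdgeColoring G k) : HasSemistrongEdgeColoring G l := by
  obtain ⟨C, hC, h⟩ := h
  exact ⟨C, fun e he => (hC e he).trans_le hkl, h⟩

/-- The Petersen graph: an outer pentagon `inl i` and an inner pentagram `inr i`, joined by five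
spokes. -/
def petersenGraph : SimpleGraph (Fin 5 ⊕ Fin 5) where
  Adj
    | .inl i, .inl j => j = i + 1 ∨ j = i - 1
    | .inl i, .inr j => i = j
    | .inr i, .inl j => i = j
    | .inr i, .inr j => j = i + 2 ∨ j = i - 2
  symm := ⟨by rintro (i | i) (j | j) <;> decide +revert⟩
  loopless := ⟨by rintro (i | i) <;> decide +revert⟩

instance : DecidableRel petersenGraph.Adj := fun u v => by
  rcases u with i | i <;> rcases v with j | j <;> unfold petersenGraph <;> infer_instance

/-- The colouring of the Petersen graph which adds up the indices of the two ends of an edge. -/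
def petersenColoring : Sym2 (Fin 5 ⊕ Fin 5) → Fin 5 :=
  Sym2.lift ⟨fun u v => u.elim id id + v.elim id id, fun _ _ => add_comm _ _⟩

instance [Fintype V] [DecidableEq V] [DecidableEq α] (G : SimpleGraph V) [DecidableRel G.Adj]
    (C : Sym2 V → α) (x y : V) : Decidable (SeesOnce G C x y) :=
  inferInstanceAs (Decidable (∀ z w, G.Adj x z → G.Adj z w → s(z, w) ≠ s(x, y) →
    C s(z, w) ≠ C s(x, y)))

theorem seesOnce_petersenColoring : ∀ u v, petersenGraph.Adj u v →
    SeesOnce petersenGraph petersenColoring u v ∨ SeesOnce petersenGraph petersenColoring v u := by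
  decide +kernel

theorem hasSemistrongEdgeColoring_five_of_copy {G : SimpleGraph V} (f : Copy G petersenGraph) :
    HasSemistrongEdgeColoring G 5 :=
  hasSemistrongEdgeColoring_of_seesOnce (fun e => petersenColoring (e.map f)) fun _ _ hxy =>
    (seesOnce_petersenColoring _ _ (f.toHom.map_adj hxy)).imp (.comap f) (.comap f)

section FiveCycle

variable {G : SimpleGraph V} {c d : Fin 5 → V}

theorem nonempty_copy_petersenGraph (hconn : G.Connected) (hc : c.Injective) (hd : d.Injective)
    (hcd : ∀ i j, c i ≠ d j) (hNc : ∀ i, HasNeighbors G (c i) (c (i + 1)) (c (i - 1)) (d i))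
    (hNd : ∀ i, HasNeighbors G (d i) (c i) (d (i + 2)) (d (i - 2))) :
    Nonempty (Copy G petersenGraph) := by
  have hdc : ∀ i j, d i ≠ c j := fun i j => (hcd j i).symm
  have hsurj : (Sum.elim c d).Surjective := by
    refine forall_of_connected hconn (r := c 0) ⟨.inl 0, rfl⟩ ?_
    rintro _ y ⟨i | i, rfl⟩ hy
    · rcases (hNc i).adj_iff.1 hy with rfl | rfl | rfl
      exacts [⟨.inl _, rfl⟩, ⟨.inl _, rfl⟩, ⟨.inr _, rfl⟩]
    · rcases (hNd i).adj_iff.1 hy with rfl | rfl | rfl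
      exacts [⟨.inl _, rfl⟩, ⟨.inr _, rfl⟩, ⟨.inr _, rfl⟩]
  have hadj : ∀ u v, G.Adj (Sum.elim c d u) (Sum.elim c d v) → petersenGraph.Adj u v := by
    rintro (i | i) (j | j) h <;>
      simpa [petersenGraph, (hNc i).adj_iff, (hNd i).adj_iff, hc.eq_iff, hd.eq_iff, hcd, hdc,
        eq_comm] using h
  refine ⟨⟨⟨Function.surjInv hsurj, fun {x y} hxy => hadj _ _ ?_⟩, Function.injective_surjInv _⟩⟩
  simpa only [Function.surjInv_eq] using hxy

theorem eq_or_eq_add_of_fin_five (i j : Fin 5) :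
    j = i ∨ j = i + 1 ∨ j = i + 2 ∨ i = j + 1 ∨ i = j + 2 := by decide +revert

theorem injective_of_ne_of_ne (h₁ : ∀ i, d i ≠ d (i + 1)) (h₂ : ∀ i, d i ≠ d (i + 2)) :
    d.Injective := by
  intro i j h
  obtain rfl | rfl | rfl | rfl | rfl := eq_or_eq_add_of_fin_five i j
  exacts [rfl, (h₁ _ h).elim, (h₂ _ h).elim, (h₁ _ h.symm).elim, (h₂ _ h.symm).elim]

variable (h3 : G.CliqueFree 3)

include h3

theorem injective_of_adj_add_one (hc : ∀ i, G.Adj (c i) (c (i + 1))) : c.Injective := by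
  refine injective_of_ne_of_ne (fun i => (hc i).ne) fun i h => ?_
  have h₂ : G.Adj (c i) (c (i + 3)) := h ▸ (by simpa [add_assoc] using hc (i + 2))
  have h₃ : G.Adj (c (i + 3)) (c (i + 4)) := by simpa [add_assoc] using hc (i + 3)
  have h₄ : G.Adj (c (i + 4)) (c i) := by simpa [add_assoc] using hc (i + 4)
  exact not_adj_of_cliqueFree_three h3 h₂ h₄.symm h₃

variable (hN : ∀ i, HasNeighbors G (c i) (c (i + 1)) (c (i - 1)) (d i))

include hN

theorem not_adj_add_two (i : Fin 5) : ¬ G.Adj (c i) (c (i + 2)) := fun h =>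
  not_adj_of_cliqueFree_three h3 (hN i).adj₁ h (by simpa [add_assoc] using (hN (i + 1)).adj₁)

theorem cycle_ne_third_neighbor (i j : Fin 5) : c i ≠ d j := by
  intro h
  have hadj : G.Adj (c j) (c i) := h ▸ (hN j).adj₃
  obtain rfl | rfl | rfl | rfl | rfl := eq_or_eq_add_of_fin_five j i
  exacts [hadj.ne rfl, (hN j).ne₁₃ h, not_adj_add_two h3 hN _ hadj,
    (hN (i + 1)).ne₂₃ (by simpa using h), not_adj_add_two h3 hN _ hadj.symm]

/-- The third neighbours `d i` of the cycle form the inner pentagram. -/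
theorem nonempty_copy_petersenGraph_of_forall_exists [Fintype V] [DecidableRel G.Adj]
    (h4 : FourCycleFree G) (hconn : G.Connected) (hdeg : ∀ v, G.degree v = 3)
    (h : ∀ i, ∃ z, G.Adj (d i) z ∧ z ≠ c i ∧ G.Adj z (c (i - 2))) :
    Nonempty (Copy G petersenGraph) := by
  have hcd := cycle_ne_third_neighbor h3 hN
  have hdd_sub : ∀ i, G.Adj (d i) (d (i - 2)) := by
    intro i
    obtain ⟨z, hdz, hzc, hz⟩ := h i
    rcases (hN (i - 2)).adj_iff.1 hz.symm with rfl | rfl | rfl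
    · rw [(by decide : ∀ i : Fin 5, i - 2 + 1 = i - 1)] at hdz
      exact absurd hdz (not_adj_of_cliqueFree_three h3 (hN i).adj₃ (hN i).adj₂)
    · rw [(by decide : ∀ i : Fin 5, i - 2 - 1 = i + 1 + 1)] at hdz hzc
      exact absurd (h4 hzc (hN (i + 1)).adj₁.symm (hN i).adj₁ hdz.symm (hN i).adj₃) (hN i).ne₁₃
    · exact hdz
  have hdd_add : ∀ i, G.Adj (d i) (d (i + 2)) := fun i => by simpa using (hdd_sub (i + 2)).symm
  have hc : c.Injective := injective_of_adj_add_one h3 fun i => (hN i).adj₁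
  have hd : d.Injective := injective_of_ne_of_ne
    (fun i h => not_adj_of_cliqueFree_three h3 (hN i).adj₁ (hN i).adj₃ (h ▸ (hN (i + 1)).adj₃))
    fun i => (hdd_add i).ne
  refine nonempty_copy_petersenGraph hconn hc hd hcd hN fun i => ?_
  obtain ⟨e, he⟩ := HasNeighbors.exists_of_adj_of_adj (hdeg (d i)) (hN i).adj₃.symm (hdd_add i)
    (hcd _ _)
  obtain rfl : d (i - 2) = e := by
    simpa [(hcd _ _).symm, hd.eq_iff, (by decide : ∀ i : Fin 5, i - 2 ≠ i + 2)] using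
      he.adj_iff.1 (hdd_sub i)
  exact he

omit hN

theorem hasSemistrongEdgeColoring_of_five_cycle [Fintype V] [DecidableRel G.Adj]
    (h4 : FourCycleFree G) (hconn : G.Connected) (hdeg : ∀ v, G.degree v = 3)
    (hc : ∀ i, G.Adj (c i) (c (i + 1))) : HasSemistrongEdgeColoring G 8 := by
  have hc_sub : ∀ i, G.Adj (c i) (c (i - 1)) := fun i => by simpa using (hc (i - 1)).symm
  have hinj := injective_of_adj_add_one h3 hc
  choose d hN using fun i => HasNeighbors.exists_of_adj_of_adj (hdeg (c i)) (hc i) (hc_sub i)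
    (hinj.ne ((by decide : ∀ i : Fin 5, i + 1 ≠ i - 1) i))
  by_cases hbad : ∀ i, ∃ z, G.Adj (d i) z ∧ z ≠ c i ∧ G.Adj z (c (i - 2))
  · obtain ⟨f⟩ := nonempty_copy_petersenGraph_of_forall_exists h3 hN h4 hconn hdeg hbad
    exact (hasSemistrongEdgeColoring_five_of_copy f).mono (by norm_num)
  push Not at hbad
  obtain ⟨i, hi⟩ := hbad
  have h₁ : G.Adj (c (i + 1)) (c (i + 2)) := by simpa [add_assoc] using hc (i + 1)
  have h₂ : G.Adj (c (i + 2)) (c (i - 2)) :=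
    (by decide : ∀ i : Fin 5, i + 2 + 1 = i - 2) i ▸ hc (i + 2)
  have h₃ : G.Adj (c (i - 2)) (c (i - 1)) :=
    (by decide : ∀ i : Fin 5, i - 2 + 1 = i - 1) i ▸ hc (i - 2)
  let p : G.Walk (c (i + 1)) (c (i - 1)) := .cons h₁ (.cons h₂ (.cons h₃ .nil))
  have hp : IsDetour G (c i) p := by
    refine ⟨hc i, hc_sub i, (hN i).ne₁₂, ?_⟩
    simp [p, hinj.eq_iff, (by decide : ∀ i : Fin 5, i ≠ i - 2 ∧ i ≠ i - 1)]
  have hshortest : IsShortestDetour G (c i) p := ⟨hp, fun hq => hq.three_le_length h3 h4⟩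
  exact hshortest.hasSemistrongEdgeColoring h3 h4 (hN i) (fun _ => hi) hconn hdeg

end FiveCycle

theorem hasSemistrongEdgeColoring_of_fourCycleFree [Fintype V] {G : SimpleGraph V}
    [DecidableRel G.Adj] (hconn : G.Connected) (h3 : G.CliqueFree 3) (h4 : FourCycleFree G)
    (hdeg : ∀ v, G.degree v = 3) : HasSemistrongEdgeColoring G 8 := by
  obtain ⟨t, a, b, p, hp⟩ :=
    exists_isShortestDetour (not_isAcyclic_of_degree_eq_three hconn hdeg)
  by_cases hlen : p.length = 3
  · refine hasSemistrongEdgeColoring_of_five_cycle (c := Fin.cons t fun i => p.getVert i)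
      h3 h4 hconn hdeg ?_
    have hadj : ∀ i < 3, G.Adj (p.getVert i) (p.getVert (i + 1)) := fun i hi =>
      p.adj_getVert_succ (hlen.symm ▸ hi)
    have hstart : G.Adj t (p.getVert 0) := by simpa using hp.adj_start
    have hend : G.Adj (p.getVert 3) t := by simpa [← hlen] using hp.adj_end.symm
    simp only [Fin.forall_fin_succ]
    exact ⟨hstart, hadj 0 (by norm_num), hadj 1 (by norm_num), hadj 2 (by norm_num), hend,
      fun i => i.elim0⟩
  · obtain ⟨s, ht⟩ := HasNeighbors.exists_of_adj_of_adj (hdeg t) hp.adj_start hp.adj_end hp.ne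
    exact hp.hasSemistrongEdgeColoring h3 h4 ht (fun h => absurd h hlen) hconn hdeg

end

/-- For every connected finite simple graph `G` with maximum degree at most `3`
that is not isomorphic to `K_{3,3}`, the semistrong chromatic index of `G`
is at most `8`. -/
theorem ssChromIdx_le_eight_of_subcubic {V : Type*} [Fintype V] [DecidableEq V]
    (G : SimpleGraph V) [DecidableRel G.Adj]
    (hconn : G.Connected) (hdeg : G.maxDegree ≤ 3)
    (hK33 : ¬ Nonempty (G ≃g completeBipartiteGraph (Fin 3) (Fin 3))) :
    ssChromIdx G ≤ 8 := by
  refine Nat.sInf_le (show HasSemistrongEdgeColoring G 8 from ?_)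
  have hdeg : ∀ v, G.degree v ≤ 3 := fun v => (G.degree_le_maxDegree v).trans hdeg
  by_cases h2 : ∃ r, G.degree r ≤ 2
  · obtain ⟨r, hr⟩ := h2
    exact hasSemistrongEdgeColoring_of_degree_le_two hconn hdeg hr
  push Not at h2
  have hcubic : ∀ v, G.degree v = 3 := fun v => (hdeg v).antisymm (h2 v)
  by_cases h3 : G.CliqueFree 3
  · by_cases h4 : FourCycleFree G
    · exact hasSemistrongEdgeColoring_of_fourCycleFree hconn h3 h4 hcubic
    · simp only [FourCycleFree, not_forall] at h4
      obtain ⟨a, b, hab, x, y, hax, hbx, hay, hby, hxy⟩ := h4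
      exact hasSemistrongEdgeColoring_of_adj_of_adj hconn h3 hcubic hK33 hax hbx.symm hby hay.symm
        hab hxy
  · exact hasSemistrongEdgeColoring_of_not_cliqueFree_three hconn hcubic h3
end

section
/- For every finite tree T (a finite connected acyclic simple graph), the semistrong chromatic index of T is at most Δ(T) + 1. -/
open SimpleGraph

variable {V : Type*}

/-!
Order the vertices of a forest by their distance to a root of their component, ties being broken
arbitrarily. Every vertex then has at most one smaller neighbor, its parent, so that every edge is
determined by its larger endvertex. The vertices that precede `v` and are at distance at most two
from it all lie in the closed neighborhood of the parent of `v`; hence the square of a forest of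
maximum degree `D` is greedily `(D + 1)`-colorable. Giving every edge the color of its larger
endvertex in such a coloring yields a semistrong edge-coloring. Indeed, the coloring is injective
on closed neighborhoods, and the larger endvertex `v` of an edge has degree one in the subgraph
induced by the color class: any further neighbor `w` of `v` is larger than `v`, and an edge of the
same color at `w` would have its larger endvertex in the closed neighborhood of `w`, hence equal
to `v < w`.
-/

/-- A forest ordering of `G`: an ordering of the vertices for which every vertex has at most one
smaller neighbor. Such an ordering presents `G` as a rooted forest, the smaller neighbor of a vertex
being its parent. -/
def IsForestOrdering [LT V] (G : SimpleGraph V) : Prop :=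
  ∀ ⦃u v w : V⦄, G.Adj v u → G.Adj v w → u < v → w < v → u = w

/-- The closed neighborhood of `v` in `G`: the vertex `v` together with its neighbors. -/
def closedNeighborSet (G : SimpleGraph V) (v : V) : Set V := insert v (G.neighborSet v)

/-- The square of `G`: distinct vertices are adjacent if they lie at distance at most two in `G`,
which is expressed by a common closed neighborhood. -/
def graphSquare (G : SimpleGraph V) : SimpleGraph V where
  Adj u v := u ≠ v ∧ ∃ p, u ∈ closedNeighborSet G p ∧ v ∈ closedNeighborSet G p
  symm := ⟨fun _ _ ⟨hne, p, hu, hv⟩ => ⟨hne.symm, p, hv, hu⟩⟩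
  loopless := ⟨fun _ h => h.1 rfl⟩

section ForestOrdering

variable {G : SimpleGraph V}

lemma eq_penultimate_of_adj_of_dist_lt (hG : G.IsAcyclic) {r u v : V} {p : G.Walk r v}
    (hp : p.IsPath) (hadj : G.Adj v u) (hlt : G.dist r u < G.dist r v) : u = p.penultimate := by
  classical
  obtain ⟨q, hq, hqlen⟩ := (p.reachable.trans hadj.reachable).exists_path_of_dist
  have hv : v ∉ q.support := fun hv =>
    absurd ((dist_le (q.takeUntil v hv)).trans (q.length_takeUntil_le_length hv)) (by lia)
  exact hG.eq_penultimate_of_adj_end hp hadj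
    (hG.mem_support_of_ne_mem_support_of_adj_of_isPath hp hq hadj hv)

lemma exists_rank_of_isAcyclic (hG : G.IsAcyclic) :
    ∃ rank : V → ℕ, (∀ u v, G.Adj u v → rank u ≠ rank v) ∧
      ∀ u v w, G.Adj v u → G.Adj v w → rank u < rank v → rank w < rank v → u = w := by
  let root (v : V) : V := (G.connectedComponentMk v).out
  have reachable_root (v : V) : G.Reachable (root v) v :=
    ConnectedComponent.exact (Quot.out_eq _)
  have root_eq {u v : V} (h : G.Adj u v) : root u = root v :=
    congrArg Quot.out (ConnectedComponent.sound h.reachable)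
  refine ⟨fun v => G.dist (root v) v, fun u v huv => ?_, fun u v w hvu hvw hu hw => ?_⟩
  · simpa only [← root_eq huv] using hG.dist_ne_of_adj huv (reachable_root u)
  · obtain ⟨p, hp⟩ := (reachable_root v).exists_isPath
    beta_reduce at hu hw
    rw [← root_eq hvu] at hu
    rw [← root_eq hvw] at hw
    exact (eq_penultimate_of_adj_of_dist_lt hG hp hvu hu).trans
      (eq_penultimate_of_adj_of_dist_lt hG hp hvw hw).symm

lemma exists_isForestOrdering (hG : G.IsAcyclic) :
    ∃ _ : LinearOrder V, WellFoundedLT V ∧ IsForestOrdering G := by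
  obtain ⟨rank, hne, hunique⟩ := exists_rank_of_isAcyclic hG
  let r : V → V → Prop := InvImage (· < ·) rank
  let _ : LinearOrder V := IsWellFounded.wellOrderExtension r
  have lt_of_rank_lt {u v : V} (h : rank u < rank v) : u < v :=
    Prod.Lex.left _ _ (IsWellFounded.rank_lt_of_rel (r := r) h)
  have rank_lt {u v : V} (hadj : G.Adj v u) (hlt : u < v) : rank u < rank v :=
    (hne v u hadj).lt_or_gt.resolve_left fun h => hlt.asymm (lt_of_rank_lt h)
  exact ⟨_, IsWellFounded.wellOrderExtension.isWellFounded_lt r, fun u v w hvu hvw hu hw =>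
    hunique u v w hvu hvw (rank_lt hvu hu) (rank_lt hvw hw)⟩

end ForestOrdering

section SquareColoring

variable [LinearOrder V] {G : SimpleGraph V} {k : ℕ}

lemma colorable_of_encard_smaller_neighbors_lt [WellFoundedLT V]
    (h : ∀ v, {u | G.Adj v u ∧ u < v}.encard < k) : G.Colorable k := by
  have exists_color (v : V) (c : ∀ u, u < v → Fin k) :
      ∃ a, ∀ u (hu : u < v), G.Adj v u → c u hu ≠ a := by
    by_contra! hused
    choose u hlt hadj heq using hused
    have hinj : Function.Injective u := fun a b hab => by
      rw [← heq a, ← heq b]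
      congr 1
    have hcard : (Set.univ : Set (Fin k)).encard ≤ {u | G.Adj v u ∧ u < v}.encard :=
      Set.encard_le_encard_of_injOn (fun a _ => ⟨hadj a, hlt a⟩) hinj.injOn
    rw [Set.encard_univ, ENat.card_eq_coe_fintype_card, Fintype.card_fin] at hcard
    exact hcard.not_gt (h v)
  choose pick hpick using exists_color
  let color : V → Fin k := wellFounded_lt.fix pick
  have color_ne {u v : V} (hadj : G.Adj v u) (hlt : u < v) : color u ≠ color v := by
    rw [show color v = pick v fun u _ => color u from wellFounded_lt.fix_eq pick v]
    exact hpick v (fun u _ => color u) u hlt hadj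
  exact ⟨Coloring.mk color fun {u v} hadj => hadj.ne.lt_or_gt.elim
    (color_ne hadj.symm) fun hlt => (color_ne hadj hlt).symm⟩

lemma exists_smaller_neighbor_of_graphSquare_adj (hG : IsForestOrdering G) {u v : V}
    (hadj : (graphSquare G).Adj v u) (hlt : u < v) :
    ∃ q, G.Adj v q ∧ q < v ∧ u ∈ closedNeighborSet G q := by
  obtain ⟨-, p, rfl | hpv, hu⟩ := hadj
  · exact ⟨u, hu.resolve_left hlt.ne, hlt, Set.mem_insert u _⟩
  obtain hpv_lt | hvp_lt := hpv.ne.lt_or_gt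
  · exact ⟨p, hpv.symm, hpv_lt, hu⟩
  · have hup : u < p := hlt.trans hvp_lt
    exact absurd (hG (hu.resolve_left hup.ne) hpv hup hvp_lt) hlt.ne

lemma exists_smaller_graphSquare_neighbors_subset (hG : IsForestOrdering G) (v : V) :
    ∃ q, v ∈ closedNeighborSet G q ∧
      {u | (graphSquare G).Adj v u ∧ u < v} ⊆ closedNeighborSet G q := by
  by_cases hparent : ∃ q, G.Adj v q ∧ q < v
  · obtain ⟨q, hvq, hqv⟩ := hparent
    refine ⟨q, Or.inr hvq.symm, fun u ⟨hadj, hlt⟩ => ?_⟩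
    obtain ⟨q', hvq', hq'v, hu⟩ := exists_smaller_neighbor_of_graphSquare_adj hG hadj hlt
    rwa [hG hvq hvq' hqv hq'v]
  · refine ⟨v, Set.mem_insert v _, fun u ⟨hadj, hlt⟩ => absurd ?_ hparent⟩
    obtain ⟨q, hvq, hqv, -⟩ := exists_smaller_neighbor_of_graphSquare_adj hG hadj hlt
    exact ⟨q, hvq, hqv⟩

theorem graphSquare_colorable [WellFoundedLT V] (hG : IsForestOrdering G)
    (hk : ∀ v, (closedNeighborSet G v).encard ≤ k) : (graphSquare G).Colorable k := by
  refine colorable_of_encard_smaller_neighbors_lt fun v => ?_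
  obtain ⟨q, hv, hsub⟩ := exists_smaller_graphSquare_neighbors_subset hG v
  have hfin : (closedNeighborSet G q).Finite := Set.finite_of_encard_le_coe (hk q)
  have hssub : {u | (graphSquare G).Adj v u ∧ u < v} ⊂ closedNeighborSet G q :=
    (Set.ssubset_iff_of_subset hsub).2 ⟨v, hv, fun h => lt_irrefl v h.2⟩
  exact ((hfin.subset hsub).encard_lt_encard hssub).trans_le (hk q)

end SquareColoring

section EdgeColoring

lemma le_sup_of_mem [SemilatticeSup V] {x : V} {e : Sym2 V} (hx : x ∈ e) : x ≤ e.sup := by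
  induction e using Sym2.ind with
  | _ a b =>
    obtain rfl | rfl := Sym2.mem_iff.1 hx
    · exact le_sup_left
    · exact le_sup_right

variable {G : SimpleGraph V}

lemma injOn_closedNeighborSet_of_coloring {α : Type*} (C : (graphSquare G).Coloring α) (v : V) :
    Set.InjOn C (closedNeighborSet G v) := fun x hx y hy hC => by
  by_contra hne
  exact C.valid ⟨hne, v, hx, hy⟩ hC

variable [LinearOrder V] {e e' : Sym2 V}

lemma exists_lt_of_mem_edgeSet (he : e ∈ G.edgeSet) : ∃ u v, G.Adj v u ∧ u < v ∧ e = s(v, u) := by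
  induction e using Sym2.ind with
  | _ a b =>
    obtain hlt | hlt := (G.ne_of_adj he).lt_or_gt
    · exact ⟨a, b, G.adj_symm he, hlt, Sym2.eq_swap⟩
    · exact ⟨b, a, he, hlt, rfl⟩

lemma sup_mem_closedNeighborSet (he : e ∈ G.edgeSet) {x : V} (hx : x ∈ e) :
    e.sup ∈ closedNeighborSet G x := by
  obtain ⟨u, v, hvu, hlt, rfl⟩ := exists_lt_of_mem_edgeSet he
  rw [Sym2.sup_mk, sup_eq_left.2 hlt.le]
  obtain rfl | rfl := Sym2.mem_iff.1 hx
  · exact Set.mem_insert x _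
  · exact Or.inr hvu.symm

lemma edge_eq_of_sup_eq (hG : IsForestOrdering G) (he : e ∈ G.edgeSet) (he' : e' ∈ G.edgeSet)
    (h : e.sup = e'.sup) : e = e' := by
  obtain ⟨u, v, hvu, huv, rfl⟩ := exists_lt_of_mem_edgeSet he
  obtain ⟨u', v', hvu', huv', rfl⟩ := exists_lt_of_mem_edgeSet he'
  obtain rfl : v = v' := by simpa only [Sym2.sup_mk, sup_eq_left.2, huv.le, huv'.le] using h
  rw [hG hvu hvu' huv huv']

lemma isSemistrongMatching_setOf_sup (hG : IsForestOrdering G) {α : Type*} {c : V → α}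
    (hc : ∀ v, Set.InjOn c (closedNeighborSet G v)) (a : α) :
    IsSemistrongMatching G {e | e ∈ G.edgeSet ∧ c e.sup = a} := by
  refine ⟨⟨fun e he => he.1, ?_⟩, ?_⟩
  · rintro e ⟨he, hce⟩ e' ⟨he', hce'⟩ hne x hx hx'
    have hsup : e.sup = e'.sup := hc x (sup_mem_closedNeighborSet he hx)
      (sup_mem_closedNeighborSet he' hx') (hce.trans hce'.symm)
    exact hne (edge_eq_of_sup_eq hG he he' hsup)
  · rintro e ⟨he, hce⟩
    obtain ⟨u, v, hvu, huv, rfl⟩ := exists_lt_of_mem_edgeSet he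
    refine ⟨v, u, rfl, ?_⟩
    rintro w ⟨e', ⟨he', hce'⟩, hw⟩ hvw
    rw [Sym2.sup_mk, sup_eq_left.2 huv.le] at hce
    have hsup : e'.sup = v := hc w (sup_mem_closedNeighborSet he' hw)
      (Or.inr hvw.symm) (hce'.trans hce.symm)
    have hwv : w < v := hvw.ne'.lt_of_le (hsup ▸ le_sup_of_mem hw)
    exact hG hvw hvu hwv huv

theorem hasSemistrongEdgeColoring_of_graphSquare_colorable (hG : IsForestOrdering G) {k : ℕ}
    (hcol : (graphSquare G).Colorable k) : HasSemistrongEdgeColoring G k := by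
  obtain ⟨C⟩ := hcol
  have hC (v : V) : Set.InjOn (fun u => (C u : ℕ)) (closedNeighborSet G v) :=
    Fin.val_injective.comp_injOn (injOn_closedNeighborSet_of_coloring C v)
  exact ⟨fun e => C e.sup, fun e _ => (C e.sup).isLt, isSemistrongMatching_setOf_sup hG hC⟩

end EdgeColoring

theorem ssChromIdx_tree_le_general (G : SimpleGraph V) [G.LocallyFinite] (hG : G.IsAcyclic) {D : ℕ}
    (hD : ∀ v, G.degree v ≤ D) : HasSemistrongEdgeColoring G (D + 1) := by
  obtain ⟨_, _, hord⟩ := exists_isForestOrdering hG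
  refine hasSemistrongEdgeColoring_of_graphSquare_colorable hord
    (graphSquare_colorable hord fun v => ?_)
  calc (closedNeighborSet G v).encard
    _ ≤ (G.neighborSet v).encard + 1 := Set.encard_insert_le _ v
    _ = G.degree v + 1 := by
      rw [Set.encard_eq_coe_toFinset_card, Set.toFinset_card, card_neighborSet_eq_degree]
    _ ≤ ↑(D + 1) := by exact_mod_cast Nat.succ_le_succ (hD v)

/-- For every finite tree `T`, the semistrong chromatic index of `T` is at most
`Δ(T) + 1`. -/
theorem ssChromIdx_tree_le {V : Type*} [Fintype V] [DecidableEq V]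
    (T : SimpleGraph V) [DecidableRel T.Adj] (hT : T.IsTree) :
    ssChromIdx T ≤ T.maxDegree + 1 :=
  Nat.sInf_le (ssChromIdx_tree_le_general T hT.isAcyclic T.degree_le_maxDegree)
end

section
/- Let H be the cubic-like graph obtained from two disjoint copies of the complete bipartite graph K_{2,3} by adding two independent edges, each joining a degree-2 vertex of the first copy to a degree-2 vertex of the second copy (distinct endvertices in each copy). Then every semistrong matching of H containing at least 3 edges consists of the two added edges together with one further edge not adjacent to them, and the semistrong chromatic index of H equals 7. -/
open SimpleGraph

variable {V : Type*}

/-- The graph `H` obtained from two disjoint copies of `K_{2,3}` by adding two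
independent edges joining distinct degree-2 vertices (vertices of the part of
size 3) of the first copy to distinct degree-2 vertices of the second copy. -/
def twoK23Graph : SimpleGraph ((Fin 2 ⊕ Fin 3) ⊕ (Fin 2 ⊕ Fin 3)) :=
  SimpleGraph.fromRel (fun x y =>
    (∃ a b, x = Sum.inl (Sum.inl a) ∧ y = Sum.inl (Sum.inr b)) ∨
    (∃ a b, x = Sum.inr (Sum.inl a) ∧ y = Sum.inr (Sum.inr b)) ∨
    (x = Sum.inl (Sum.inr 0) ∧ y = Sum.inr (Sum.inr 0)) ∨
    (x = Sum.inl (Sum.inr 1) ∧ y = Sum.inr (Sum.inr 1)))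

/-!
If `s(a, b)` lies in a semistrong matching `M`, the other edges of `M` cannot meet both a neighbor
of `a` and a neighbor of `b`. Hence `M` contains at most one edge of each copy of `K_{2,3}`, and if
`M` contains an added edge, whose ends see all hubs of their respective copies, it misses one copy
altogether. A semistrong matching with three edges therefore consists of both added edges and
one edge of a copy.

In a semistrong edge-coloring the six edges of a copy get six colors, and the color of an added
edge is absent from one of the copies, which forces a seventh color. Seven colors suffice: weight
the vertices by elements of `ZMod 7` and color each edge by the sum of the weights of its ends.
-/

section General

variable {G : SimpleGraph V} {M : Set (Sym2 V)}

theorem IsSemistrongMatching.eq_or_eq_of_adj_of_adj (hM : IsSemistrongMatching G M) {a b x y : V}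
    {e f : Sym2 V} (hab : s(a, b) ∈ M) (he : e ∈ M) (hf : f ∈ M) (hx : x ∈ e) (hy : y ∈ f)
    (hax : G.Adj a x) (hby : G.Adj b y) : e = s(a, b) ∨ f = s(a, b) := by
  obtain ⟨⟨-, hdisj⟩, hend⟩ := hM
  have eq_of_mem {g : Sym2 V} (hg : g ∈ M) {v : V} (hvg : v ∈ g) (hv : v ∈ s(a, b)) :
      g = s(a, b) := by
    by_contra hne
    exact hdisj g hg _ hab hne v hvg hv
  obtain ⟨u, v, huv, hu⟩ := hend _ hab
  rcases Sym2.eq_iff.1 huv with ⟨rfl, rfl⟩ | ⟨rfl, rfl⟩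
  · obtain rfl := hu x ⟨e, he, hx⟩ hax
    exact .inl (eq_of_mem he hx (Sym2.mem_mk_right _ _))
  · obtain rfl := hu y ⟨f, hf, hy⟩ hby
    exact .inr (eq_of_mem hf hy (Sym2.mem_mk_left _ _))

variable [DecidableEq V] {A B : Finset V}

/-- The unordered pairs with one element in `A` and one in `B`: when `A` and `B` are completely
joined in a graph, the edges of the corresponding complete bipartite subgraph. -/
def edgesBetween (A B : Finset V) : Finset (Sym2 V) := Finset.image₂ (fun a b => s(a, b)) A B

theorem mem_edgesBetween {e : Sym2 V} :
    e ∈ edgesBetween A B ↔ ∃ a ∈ A, ∃ b ∈ B, s(a, b) = e := Finset.mem_image₂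

theorem IsSemistrongMatching.eq_of_mem_edgesBetween (hM : IsSemistrongMatching G M)
    (hAB : G.IsCompleteBetween A B) {e f : Sym2 V} (he : e ∈ M) (hf : f ∈ M)
    (heAB : e ∈ edgesBetween A B) (hfAB : f ∈ edgesBetween A B) : e = f := by
  obtain ⟨a, ha, b, hb, rfl⟩ := mem_edgesBetween.1 heAB
  obtain ⟨a', ha', b', hb', rfl⟩ := mem_edgesBetween.1 hfAB
  exact ((hM.eq_or_eq_of_adj_of_adj he hf hf (Sym2.mem_mk_right _ _) (Sym2.mem_mk_left _ _)
    (hAB ha hb') (hAB ha' hb).symm).elim id id).symm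

theorem IsSemistrongMatching.card_inter_edgesBetween_le_one {N : Finset (Sym2 V)}
    (hN : IsSemistrongMatching G N) (hAB : G.IsCompleteBetween A B) :
    (N ∩ edgesBetween A B).card ≤ 1 := Finset.card_le_one.2 fun e he f hf => by
  rw [Finset.mem_inter] at he hf
  exact hN.eq_of_mem_edgesBetween hAB he.1 hf.1 he.2 hf.2

theorem card_edgesBetween_lt_of_coloring {c : Sym2 V → ℕ} {k : ℕ}
    (hck : ∀ e ∈ G.edgeSet, c e < k)
    (hc : ∀ i, IsSemistrongMatching G {e | e ∈ G.edgeSet ∧ c e = i})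
    (hAB : G.IsCompleteBetween A B) {x : Sym2 V} (hx : x ∈ G.edgeSet)
    (hcx : ∀ e ∈ edgesBetween A B, c e ≠ c x) : (edgesBetween A B).card < k := by
  have isEdge {e : Sym2 V} (he : e ∈ edgesBetween A B) : e ∈ G.edgeSet := by
    obtain ⟨a, ha, b, hb, rfl⟩ := mem_edgesBetween.1 he
    exact hAB ha hb
  have hinj : Set.InjOn c (edgesBetween A B) := fun e he f hf hef =>
    (hc (c f)).eq_of_mem_edgesBetween hAB ⟨isEdge he, hef⟩ ⟨isEdge hf, rfl⟩ he hf
  have hsub : (edgesBetween A B).image c ⊂ Finset.range k := by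
    refine Finset.ssubset_iff_of_subset ?_ |>.2 ⟨c x, by simpa using hck x hx, ?_⟩
    · exact Finset.image_subset_iff.2 fun e he => Finset.mem_range.2 (hck e (isEdge he))
    · simpa only [Finset.mem_image, not_exists, not_and] using hcx
  simpa only [Finset.card_image_of_injOn hinj, Finset.card_range] using Finset.card_lt_card hsub

end General

/-- When every edge is colored by the sum of the weights `φ` of its ends, this says that the end `u`
of the edge `s(u, v)` has degree one in the subgraph induced by the ends of the edges of its color:
a neighbor `w` of `u` that lies on such an edge `s(w, z)` is `v`. -/
def IsPrivateEnd {A : Type*} [Add A] (G : SimpleGraph V) (φ : V → A) (u v : V) : Prop :=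
  ∀ w z, G.Adj u w → G.Adj w z → φ w + φ z = φ u + φ v → w = v

instance {A : Type*} [Add A] [DecidableEq A] [Fintype V] [DecidableEq V] (G : SimpleGraph V)
    [DecidableRel G.Adj] (φ : V → A) (u v : V) : Decidable (IsPrivateEnd G φ u v) := by
  unfold IsPrivateEnd
  infer_instance

theorem hasSemistrongEdgeColoring_of_weight {G : SimpleGraph V} {n : ℕ} [NeZero n]
    (φ : V → ZMod n) (hinj : ∀ v, Set.InjOn φ (G.neighborSet v))
    (hend : ∀ e ∈ G.edgeSet, ∃ u v, e = s(u, v) ∧ IsPrivateEnd G φ u v) :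
    HasSemistrongEdgeColoring G n := by
  let c : Sym2 V → ZMod n := Sym2.lift ⟨fun x y => φ x + φ y, fun _ _ => add_comm _ _⟩
  refine ⟨fun e => (c e).val, fun e _ => ZMod.val_lt _, fun i => ⟨⟨fun e he => he.1, ?_⟩, ?_⟩⟩
  · rintro e ⟨he, hei⟩ f ⟨hf, hfi⟩ hne v hve hvf
    obtain ⟨x, rfl⟩ := Sym2.mem_iff_exists.1 hve
    obtain ⟨y, rfl⟩ := Sym2.mem_iff_exists.1 hvf
    have hxy : φ v + φ x = φ v + φ y := ZMod.val_injective n (hei.trans hfi.symm)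
    exact hne (congrArg (s(v, ·)) (hinj v he hf (add_left_cancel hxy)))
  · rintro e ⟨he, hei⟩
    obtain ⟨u, v, rfl, huv⟩ := hend e he
    refine ⟨u, v, rfl, ?_⟩
    rintro w ⟨f, ⟨hf, hfi⟩, hwf⟩ huw
    obtain ⟨z, rfl⟩ := Sym2.mem_iff_exists.1 hwf
    exact huv w z huw hf (ZMod.val_injective n (hfi.trans hei.symm))

namespace twoK23Graph

/-- The vertices of `twoK23Graph`: two copies of the parts `Fin 2` and `Fin 3` of `K_{2,3}`. -/
abbrev Vertex := (Fin 2 ⊕ Fin 3) ⊕ (Fin 2 ⊕ Fin 3)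

/-- The part of size 2 of the first copy of `K_{2,3}`. -/
def leftHubs : Finset Vertex := Finset.univ.image fun i => .inl (.inl i)

/-- The part of size 3 of the first copy of `K_{2,3}`. -/
def leftLeaves : Finset Vertex := Finset.univ.image fun j => .inl (.inr j)

/-- The part of size 2 of the second copy of `K_{2,3}`. -/
def rightHubs : Finset Vertex := Finset.univ.image fun i => .inr (.inl i)

/-- The part of size 3 of the second copy of `K_{2,3}`. -/
def rightLeaves : Finset Vertex := Finset.univ.image fun j => .inr (.inr j)

/-- The edges of the first copy of `K_{2,3}`. -/
abbrev leftEdges : Finset (Sym2 Vertex) := edgesBetween leftHubs leftLeaves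

/-- The edges of the second copy of `K_{2,3}`. -/
abbrev rightEdges : Finset (Sym2 Vertex) := edgesBetween rightHubs rightLeaves

/-- The two edges added between the copies of `K_{2,3}`. -/
def linkEdges : Finset (Sym2 Vertex) :=
  {s(.inl (.inr 0), .inr (.inr 0)), s(.inl (.inr 1), .inr (.inr 1))}

theorem isCompleteBetween_left : twoK23Graph.IsCompleteBetween leftHubs leftLeaves := by
  simp [IsCompleteBetween, leftHubs, leftLeaves, twoK23Graph]

theorem isCompleteBetween_right : twoK23Graph.IsCompleteBetween rightHubs rightLeaves := by
  simp [IsCompleteBetween, rightHubs, rightLeaves, twoK23Graph]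

theorem mem_edgeSet_iff {e : Sym2 Vertex} :
    e ∈ twoK23Graph.edgeSet ↔ e ∈ leftEdges ∪ rightEdges ∪ linkEdges := by
  induction e with | _ x y
  simp only [twoK23Graph, mem_edgeSet, fromRel_adj, linkEdges, leftHubs, leftLeaves, rightHubs,
    rightLeaves, mem_edgesBetween, Finset.mem_union, Finset.mem_image, Finset.mem_univ, true_and,
    exists_exists_eq_and, Finset.mem_insert, Finset.mem_singleton, Sym2.eq_iff]
  constructor
  · rintro ⟨-, (⟨a, b, rfl, rfl⟩ | ⟨a, b, rfl, rfl⟩ | ⟨rfl, rfl⟩ | ⟨rfl, rfl⟩) |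
      (⟨a, b, rfl, rfl⟩ | ⟨a, b, rfl, rfl⟩ | ⟨rfl, rfl⟩ | ⟨rfl, rfl⟩)⟩ <;> simp
  · rintro ((⟨a, b, ⟨rfl, rfl⟩ | ⟨rfl, rfl⟩⟩ | ⟨a, b, ⟨rfl, rfl⟩ | ⟨rfl, rfl⟩⟩) |
      (⟨rfl, rfl⟩ | ⟨rfl, rfl⟩) | (⟨rfl, rfl⟩ | ⟨rfl, rfl⟩)) <;> simp

instance : DecidableRel twoK23Graph.Adj := fun x y =>
  decidable_of_iff (s(x, y) ∈ leftEdges ∪ rightEdges ∪ linkEdges) mem_edgeSet_iff.symm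

theorem disjoint_linkEdges_left : Disjoint linkEdges leftEdges := by decide +kernel

theorem disjoint_linkEdges_right : Disjoint linkEdges rightEdges := by decide +kernel

theorem exists_mem_leaves_of_mem_linkEdges {x : Sym2 Vertex} (hx : x ∈ linkEdges) :
    ∃ l ∈ leftLeaves, ∃ r ∈ rightLeaves, x = s(l, r) := by
  simp only [linkEdges, Finset.mem_insert, Finset.mem_singleton] at hx
  rcases hx with rfl | rfl
  · exact ⟨_, by simp [leftLeaves], _, by simp [rightLeaves], rfl⟩
  · exact ⟨_, by simp [leftLeaves], _, by simp [rightLeaves], rfl⟩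

theorem left_or_right_notMem_of_linkEdge {M : Set (Sym2 Vertex)}
    (hM : IsSemistrongMatching twoK23Graph M) {x : Sym2 Vertex} (hx : x ∈ linkEdges)
    (hxM : x ∈ M) :
    (∀ e ∈ leftEdges, e ∉ M) ∨ ∀ f ∈ rightEdges, f ∉ M := by
  by_contra! ⟨⟨e, he, heM⟩, ⟨f, hf, hfM⟩⟩
  obtain ⟨l, hl, r, hr, rfl⟩ := exists_mem_leaves_of_mem_linkEdges hx
  obtain ⟨a, ha, b, -, rfl⟩ := mem_edgesBetween.1 he
  obtain ⟨a', ha', b', -, rfl⟩ := mem_edgesBetween.1 hf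
  rcases hM.eq_or_eq_of_adj_of_adj hxM heM hfM (Sym2.mem_mk_left _ _) (Sym2.mem_mk_left _ _)
    (isCompleteBetween_left ha hl).symm (isCompleteBetween_right ha' hr).symm with h | h
  · exact Finset.disjoint_left.1 disjoint_linkEdges_left hx (h ▸ he)
  · exact Finset.disjoint_left.1 disjoint_linkEdges_right hx (h ▸ hf)

theorem linkEdges_subset_and_exists_sdiff_eq_singleton {M : Finset (Sym2 Vertex)}
    (hM : IsSemistrongMatching twoK23Graph M) (hcard : 3 ≤ M.card) :
    linkEdges ⊆ M ∧ ∃ e, M \ linkEdges = {e} := by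
  set L := M ∩ leftEdges with hL
  set R := M ∩ rightEdges with hR
  set X := M ∩ linkEdges with hX
  have hcover : M ⊆ L ∪ R ∪ X := by
    rw [hL, hR, hX, ← Finset.inter_union_distrib_left, ← Finset.inter_union_distrib_left,
      Finset.inter_eq_left.2 fun e he => mem_edgeSet_iff.1 (hM.1.1 he)]
  have hMcard : M.card ≤ L.card + R.card + X.card :=
    (Finset.card_le_card hcover).trans <|
      (Finset.card_union_le _ _).trans (Nat.add_le_add_right (Finset.card_union_le _ _) _)
  have hLcard : L.card ≤ 1 := hM.card_inter_edgesBetween_le_one isCompleteBetween_left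
  have hRcard : R.card ≤ 1 := hM.card_inter_edgesBetween_le_one isCompleteBetween_right
  have hXcard : X.card ≤ linkEdges.card := Finset.card_le_card Finset.inter_subset_right
  have hlink : linkEdges.card = 2 := by decide +kernel
  have hmiss : X.card = 0 ∨ L.card = 0 ∨ R.card = 0 := by
    rcases X.eq_empty_or_nonempty with h | ⟨x, hx⟩
    · exact .inl (Finset.card_eq_zero.2 h)
    · rw [hX, Finset.mem_inter] at hx
      refine .inr ((left_or_right_notMem_of_linkEdge hM hx.2 hx.1).imp ?_ ?_) <;>
        exact fun h => Finset.card_eq_zero.2 <|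
          Finset.disjoint_iff_inter_eq_empty.1 (Finset.disjoint_right.2 h)
  have hsub : linkEdges ⊆ M := by
    have hXeq : X = linkEdges :=
      Finset.eq_of_subset_of_card_le Finset.inter_subset_right (by omega)
    exact Finset.inter_eq_right.1 hXeq
  refine ⟨hsub, Finset.card_eq_one.1 ?_⟩
  rw [Finset.card_sdiff_of_subset hsub]
  omega

theorem seven_le_of_hasSemistrongEdgeColoring {k : ℕ}
    (h : HasSemistrongEdgeColoring twoK23Graph k) : 7 ≤ k := by
  obtain ⟨c, hck, hc⟩ := h
  obtain ⟨x, hx⟩ : linkEdges.Nonempty := Finset.insert_nonempty _ _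
  have isEdge {e : Sym2 Vertex} (he : e ∈ leftEdges ∪ rightEdges ∪ linkEdges) :
      e ∈ twoK23Graph.edgeSet := mem_edgeSet_iff.2 he
  have hxE : x ∈ twoK23Graph.edgeSet := isEdge (Finset.mem_union_right _ hx)
  rcases left_or_right_notMem_of_linkEdge (hc (c x)) hx ⟨hxE, rfl⟩ with hL | hR
  · have hcard : leftEdges.card = 6 := by decide +kernel
    exact hcard.symm.trans_lt <| card_edgesBetween_lt_of_coloring hck hc isCompleteBetween_left hxE
      fun e he hex => hL e he ⟨isEdge (by simp [he]), hex⟩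
  · have hcard : rightEdges.card = 6 := by decide +kernel
    exact hcard.symm.trans_lt <| card_edgesBetween_lt_of_coloring hck hc isCompleteBetween_right hxE
      fun e he hex => hR e he ⟨isEdge (by simp [he]), hex⟩

/-- Vertex weights whose sums along the edges are the colors of a semistrong edge-coloring. On each
copy of `K_{2,3}` the sums are six distinct elements of `ZMod 7`; both added edges have sum `-1`,
which does not occur on the first copy and occurs on the second only at an edge not adjacent to
them. -/
def weight : Vertex → ZMod 7
  | .inl (.inl i) => 3 * i.val
  | .inl (.inr j) => j.val
  | .inr (.inl i) => 3 * i.val + 2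
  | .inr (.inr j) => -1 - j.val

theorem weight_injOn_neighborSet (v : Vertex) :
    Set.InjOn weight (twoK23Graph.neighborSet v) := by
  have h : ∀ v x y, twoK23Graph.Adj v x → twoK23Graph.Adj v y → weight x = weight y → x = y := by
    decide +kernel
  exact fun x hx y hy => h v x y hx hy

theorem exists_isPrivateEnd_weight {e : Sym2 Vertex} (he : e ∈ twoK23Graph.edgeSet) :
    ∃ u v, e = s(u, v) ∧ IsPrivateEnd twoK23Graph weight u v := by
  have left_hub : ∀ a ∈ leftHubs, ∀ b ∈ leftLeaves, IsPrivateEnd twoK23Graph weight a b := by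
    decide +kernel
  have right_hub : ∀ a ∈ rightHubs, ∀ b ∈ rightLeaves, weight a + weight b ≠ -1 →
      IsPrivateEnd twoK23Graph weight a b := by
    decide +kernel
  have right_leaf : ∀ a ∈ rightHubs, ∀ b ∈ rightLeaves, weight a + weight b = -1 →
      IsPrivateEnd twoK23Graph weight b a := by
    decide +kernel
  have left_leaf : ∀ a ∈ leftLeaves, ∀ b ∈ rightLeaves, twoK23Graph.Adj a b →
      IsPrivateEnd twoK23Graph weight a b := by
    decide +kernel
  rcases Finset.mem_union.1 (mem_edgeSet_iff.1 he) with hcopy | hlink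
  · rcases Finset.mem_union.1 hcopy with hleft | hright
    · obtain ⟨a, ha, b, hb, rfl⟩ := mem_edgesBetween.1 hleft
      exact ⟨a, b, rfl, left_hub a ha b hb⟩
    · obtain ⟨a, ha, b, hb, rfl⟩ := mem_edgesBetween.1 hright
      by_cases hab : weight a + weight b = -1
      · exact ⟨b, a, Sym2.eq_swap, right_leaf a ha b hb hab⟩
      · exact ⟨a, b, rfl, right_hub a ha b hb hab⟩
  · obtain ⟨a, ha, b, hb, rfl⟩ := exists_mem_leaves_of_mem_linkEdges hlink
    exact ⟨a, b, rfl, left_leaf a ha b hb he⟩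

end twoK23Graph

/-- Every semistrong matching of `H` containing at least `3` edges consists of
the two added edges together with one further edge not adjacent to them, and
the semistrong chromatic index of `H` equals `7`. -/
theorem twoK23Graph_semistrong :
    (∀ M : Finset (Sym2 ((Fin 2 ⊕ Fin 3) ⊕ (Fin 2 ⊕ Fin 3))),
      IsSemistrongMatching twoK23Graph ↑M → 3 ≤ M.card →
        ∃ e ∈ M,
          e ≠ s(Sum.inl (Sum.inr 0), Sum.inr (Sum.inr 0)) ∧
          e ≠ s(Sum.inl (Sum.inr 1), Sum.inr (Sum.inr 1)) ∧
          (M : Set (Sym2 ((Fin 2 ⊕ Fin 3) ⊕ (Fin 2 ⊕ Fin 3)))) =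
            {s(Sum.inl (Sum.inr 0), Sum.inr (Sum.inr 0)),
             s(Sum.inl (Sum.inr 1), Sum.inr (Sum.inr 1)), e} ∧
          (∀ v, v ∈ e →
            v ∉ s(Sum.inl (Sum.inr 0), Sum.inr (Sum.inr 0)) ∧
            v ∉ s(Sum.inl (Sum.inr 1), Sum.inr (Sum.inr 1)))) ∧
    ssChromIdx twoK23Graph = 7 := by
  constructor
  · intro M hM hcard
    obtain ⟨hlink, e, he⟩ := twoK23Graph.linkEdges_subset_and_exists_sdiff_eq_singleton
      hM hcard
    obtain ⟨heM, heX⟩ : e ∈ M ∧ e ∉ twoK23Graph.linkEdges := by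
      rw [← Finset.mem_sdiff, he, Finset.mem_singleton]
    have hM_eq : twoK23Graph.linkEdges ∪ {e} = M := by
      rw [← he, Finset.union_sdiff_of_subset hlink]
    have hne : ∀ x ∈ twoK23Graph.linkEdges, e ≠ x := fun x hx h => heX (h ▸ hx)
    have hdisj : ∀ x ∈ twoK23Graph.linkEdges, ∀ v ∈ e, v ∉ x := fun x hx =>
      hM.1.2 e heM x (hlink hx) (hne x hx)
    simp only [twoK23Graph.linkEdges, Finset.forall_mem_insert, Finset.mem_singleton,
      forall_eq] at hne hdisj
    refine ⟨e, heM, hne.1, hne.2, ?_, fun v hv => ⟨hdisj.1 v hv, hdisj.2 v hv⟩⟩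
    simp only [← hM_eq, twoK23Graph.linkEdges, Finset.insert_union, Finset.singleton_union,
      Finset.coe_insert, Finset.coe_singleton]
  · refine IsLeast.csInf_eq ⟨?_, fun k => twoK23Graph.seven_le_of_hasSemistrongEdgeColoring⟩
    exact hasSemistrongEdgeColoring_of_weight _ twoK23Graph.weight_injOn_neighborSet
      fun _ => twoK23Graph.exists_isPrivateEnd_weight
end
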